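/- arXiv:2312.15945 — 5 statements merged into one kernel-verified Lean document; each statement's English description precedes it below -/
import Mathlib

section
/- Let f(z) = Σ_{n≥0} a_n z^n be analytic on the unit disk with |f(z)| ≤ 1 and S_r = π Σ_{n≥1} n|a_n|^2 r^{2n}. Then for r ≤ 1/5 and |z| = r: Σ_{n≥0} |a_n| r^n + (1/(1+|a_0|) + r/(1−r))·Σ_{n≥1}|a_n|^2 r^{2n} + |f(z) − a_0| + (18/5)(S_r/π) ≤ 1. -/
/-!
Write `A = |a₀|` and `c = 1 - A²`. The four quantities in the inequality are bounded by functions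
of `A` and `r`.

The coefficient sum together with the weighted quadratic sum is at most `A + c r / (1 - r)`
(`tsum_refined_le`). This rests on Carlson's inequalities `|a_{2n+1}| ≤ 1 - ∑_{k ≤ n} |aₖ|²` and
`|a_{2n+2}| ≤ 1 - ∑_{k ≤ n} |aₖ|² - |a_{n+1}|² / (1 + A)` (`carlson_odd`, `carlson_even`): after
multiplication by powers of `r` and summation, the squares on the right add up to exactly the
quadratic sum with its weight `1 / (1 + A) + r / (1 - r)`. Carlson's inequalities are obtained by
Landau's method (`landau`): for a polynomial `U`, the `N`-th coefficient of `f U²` is at most the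
mean of `|U|²` over a circle, which Parseval evaluates; suitable `U` give the two families.

The distance `|f z - a₀|` is at most `c r / (1 - A r)` by Schwarz-Pick (`schwarz_pick`), and since
`|aₙ| ≤ c` for `n ≥ 1`, the area term satisfies `S / π ≤ c² ∑ n r^{2n} = c² r² / (1 - r²)²`.

What remains is an inequality in `A` and `r`, increasing in `r`, which at `r = 1/5` is a polynomial
inequality in `A` with a triple zero at `A = 1` (`final_ineq`).
-/

/-! ### Fourier coefficients and Landau's method -/

theorem integral_cexp_int (k : ℤ) :
    ∫ θ in (0 : ℝ)..(2 * Real.pi), Complex.exp (k * Complex.I * θ) =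
      if k = 0 then (2 * Real.pi : ℂ) else 0 := by
  split_ifs with hk
  · simp [hk]
  · have hc : (k : ℂ) * Complex.I ≠ 0 := by simp [hk]
    rw [integral_exp_mul_complex hc]
    have : (k : ℂ) * Complex.I * ((2 * Real.pi : ℝ) : ℂ) = k * (2 * Real.pi * Complex.I) := by
      push_cast; ring
    rw [this, Complex.exp_int_mul_two_pi_mul_I]
    simp

theorem norm_cexp_int (k : ℤ) (θ : ℝ) : ‖Complex.exp (k * Complex.I * θ)‖ = 1 := by
  have : (k : ℂ) * Complex.I * θ = ((k * θ : ℝ) : ℂ) * Complex.I := by push_cast; ring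
  rw [this, Complex.norm_exp_ofReal_mul_I]

theorem continuous_fourierSeries {α : ℕ → ℂ} (hα : Summable fun n => ‖α n‖) :
    Continuous fun θ : ℝ => ∑' n : ℕ, α n * Complex.exp ((n : ℤ) * Complex.I * θ) := by
  refine continuous_tsum (fun n => by fun_prop) hα fun n θ => ?_
  rw [norm_mul, norm_cexp_int, mul_one]

/-- The integral of `F(θ) e^{i(j-N)θ}` over a period picks out the Fourier coefficient of index
`N - j` of `F = ∑ αₙ e^{inθ}`; it vanishes for `j > N` since `F` has no negative frequencies. -/
theorem integral_fourierSeries {α : ℕ → ℂ} (hα : Summable fun n => ‖α n‖) (j N : ℕ) :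
    ∫ θ in (0 : ℝ)..(2 * Real.pi), (∑' n : ℕ, α n * Complex.exp ((n : ℤ) * Complex.I * θ)) *
        Complex.exp (((j : ℤ) - N : ℤ) * Complex.I * θ) =
      2 * Real.pi * if j ≤ N then α (N - j) else 0 := by
  have key : ∀ n : ℕ, ∫ θ in (0 : ℝ)..(2 * Real.pi),
      α n * Complex.exp (((n : ℤ) + j - N : ℤ) * Complex.I * θ) =
      α n * if (n : ℤ) + j - N = 0 then (2 * Real.pi : ℂ) else 0 := fun n => by
    rw [intervalIntegral.integral_const_mul, integral_cexp_int]
  have hsum := intervalIntegral.hasSum_integral_of_dominated_convergence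
    (μ := MeasureTheory.volume) (a := 0) (b := 2 * Real.pi)
    (F := fun n θ => α n * Complex.exp (((n : ℤ) + j - N : ℤ) * Complex.I * (θ : ℝ)))
    (f := fun θ => (∑' n : ℕ, α n * Complex.exp ((n : ℤ) * Complex.I * θ)) *
        Complex.exp (((j : ℤ) - N : ℤ) * Complex.I * θ))
    (fun n _ => ‖α n‖)
    (fun n => (by fun_prop : Continuous _).aestronglyMeasurable)
    (fun n => Filter.Eventually.of_forall fun θ _ => by
      rw [norm_mul, norm_cexp_int, mul_one])
    (Filter.Eventually.of_forall fun θ _ => hα) (by simp)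
    (Filter.Eventually.of_forall fun θ _ => by
      have hs : Summable fun n : ℕ => α n * Complex.exp ((n : ℤ) * Complex.I * θ) := by
        refine Summable.of_norm ?_
        simpa only [norm_mul, norm_cexp_int, mul_one] using hα
      refine (hs.hasSum.mul_right (Complex.exp (((j : ℤ) - N : ℤ) * Complex.I * θ))).congr_fun ?_
      intro n
      have : Complex.exp (((n : ℤ) + j - N : ℤ) * Complex.I * θ) =
          Complex.exp ((n : ℤ) * Complex.I * θ) *
            Complex.exp (((j : ℤ) - N : ℤ) * Complex.I * θ) := by
        rw [← Complex.exp_add]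
        congr 1
        push_cast; ring
      rw [this]; ring)
  simp only [key] at hsum
  refine hsum.unique ?_
  split_ifs with h
  · convert hasSum_single (N - j) ?_ using 1
    · rw [if_pos (by omega)]; ring
    · intro n hn
      rw [if_neg (by omega), mul_zero]
  · convert hasSum_zero using 2 with n
    · rw [if_neg (by omega), mul_zero]
    · simp

/-- Parseval's identity for a trigonometric polynomial. -/
theorem integral_normSq_trigPoly (s : Finset ℕ) (c : ℕ → ℂ) :
    ∫ θ in (0 : ℝ)..(2 * Real.pi), ‖∑ j ∈ s, c j * Complex.exp ((j : ℤ) * Complex.I * θ)‖ ^ 2 =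
      2 * Real.pi * ∑ j ∈ s, ‖c j‖ ^ 2 := by
  have h1 : ∀ θ : ℝ,
      ((‖∑ j ∈ s, c j * Complex.exp ((j : ℤ) * Complex.I * θ)‖ ^ 2 : ℝ) : ℂ) =
      ∑ j ∈ s, ∑ k ∈ s, c j * (starRingEnd ℂ) (c k) *
        Complex.exp (((j : ℤ) - k : ℤ) * Complex.I * θ) := by
    intro θ
    push_cast
    rw [← Complex.mul_conj', map_sum, Finset.sum_mul_sum]
    refine Finset.sum_congr rfl fun j _ => Finset.sum_congr rfl fun k _ => ?_
    rw [map_mul, ← Complex.exp_conj]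
    simp only [map_mul, Complex.conj_I, Complex.conj_ofReal, map_natCast]
    rw [mul_mul_mul_comm, ← Complex.exp_add]
    congr 2
    ring
  have h2 : ((∫ θ in (0 : ℝ)..(2 * Real.pi),
      ‖∑ j ∈ s, c j * Complex.exp ((j : ℤ) * Complex.I * θ)‖ ^ 2 : ℝ) : ℂ) =
      ((2 * Real.pi * ∑ j ∈ s, ‖c j‖ ^ 2 : ℝ) : ℂ) := by
    rw [← intervalIntegral.integral_ofReal]
    simp only [h1]
    rw [intervalIntegral.integral_finsetSum
      fun j _ => (by fun_prop : Continuous _).intervalIntegrable _ _]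
    rw [Complex.ofReal_mul, Complex.ofReal_sum, Finset.mul_sum]
    refine Finset.sum_congr rfl fun j hj => ?_
    rw [intervalIntegral.integral_finsetSum
      fun j _ => (by fun_prop : Continuous _).intervalIntegrable _ _]
    simp only [intervalIntegral.integral_const_mul, integral_cexp_int]
    rw [Finset.sum_eq_single j]
    · rw [sub_self, if_pos rfl, Complex.mul_conj']; push_cast; ring
    · intro k _ hk
      rw [if_neg (by omega), mul_zero]
    · exact fun h => absurd hj h
  exact_mod_cast h2

/-- Landau's method: the `N`-th Fourier coefficient of `F * U ^ 2` is at most the mean of `|U|²`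
whenever `|F| ≤ 1`. Here `U = ∑ j ∈ s, c j e^{ijθ}`, and every choice of `U` gives an inequality
between the coefficients of `F`. -/
theorem landau {α : ℕ → ℂ} (hα : Summable fun n => ‖α n‖)
    (hb : ∀ θ : ℝ, ‖∑' n : ℕ, α n * Complex.exp ((n : ℤ) * Complex.I * θ)‖ ≤ 1)
    (N : ℕ) (s : Finset ℕ) (c : ℕ → ℂ) :
    ‖∑ j ∈ s, ∑ k ∈ s, c j * c k * (if j + k ≤ N then α (N - (j + k)) else 0)‖ ≤
      ∑ j ∈ s, ‖c j‖ ^ 2 := by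
  set F : ℝ → ℂ := fun θ => ∑' n : ℕ, α n * Complex.exp ((n : ℤ) * Complex.I * θ) with hF
  have hFc : Continuous F := continuous_fourierSeries hα
  set U : ℝ → ℂ := fun θ => ∑ j ∈ s, c j * Complex.exp ((j : ℤ) * Complex.I * θ) with hU
  have hUc : Continuous U := by fun_prop
  have hpi : (0 : ℝ) < 2 * Real.pi := by positivity
  have h1 : ∫ θ in (0 : ℝ)..(2 * Real.pi),
      F θ * U θ ^ 2 * Complex.exp ((-(N : ℤ) : ℤ) * Complex.I * θ) =
      2 * Real.pi * ∑ j ∈ s, ∑ k ∈ s, c j * c k *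
        (if j + k ≤ N then α (N - (j + k)) else 0) := by
    have h2 : ∀ θ : ℝ, F θ * U θ ^ 2 * Complex.exp ((-(N : ℤ) : ℤ) * Complex.I * θ) =
        ∑ j ∈ s, ∑ k ∈ s, c j * c k *
          (F θ * Complex.exp ((((j + k : ℕ) : ℤ) - N : ℤ) * Complex.I * θ)) := by
      intro θ
      rw [sq, hU]
      simp only
      rw [Finset.sum_mul_sum, Finset.mul_sum, Finset.sum_mul]
      refine Finset.sum_congr rfl fun j _ => ?_
      rw [Finset.mul_sum, Finset.sum_mul]
      refine Finset.sum_congr rfl fun k _ => ?_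
      have : Complex.exp ((((j + k : ℕ) : ℤ) - N : ℤ) * Complex.I * θ) =
          Complex.exp ((j : ℤ) * Complex.I * θ) * Complex.exp ((k : ℤ) * Complex.I * θ) *
          Complex.exp ((-(N : ℤ) : ℤ) * Complex.I * θ) := by
        rw [← Complex.exp_add, ← Complex.exp_add]
        congr 1
        push_cast; ring
      rw [this]; ring
    simp only [h2]
    rw [intervalIntegral.integral_finsetSum
      fun j _ => (by fun_prop : Continuous _).intervalIntegrable _ _, Finset.mul_sum]
    refine Finset.sum_congr rfl fun j hj => ?_
    rw [intervalIntegral.integral_finsetSum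
      fun j _ => (by fun_prop : Continuous _).intervalIntegrable _ _, Finset.mul_sum]
    refine Finset.sum_congr rfl fun k hk => ?_
    rw [intervalIntegral.integral_const_mul, integral_fourierSeries hα]
    ring
  have h3 : ‖∫ θ in (0 : ℝ)..(2 * Real.pi),
      F θ * U θ ^ 2 * Complex.exp ((-(N : ℤ) : ℤ) * Complex.I * θ)‖ ≤
      ∫ θ in (0 : ℝ)..(2 * Real.pi), ‖U θ‖ ^ 2 := by
    refine intervalIntegral.norm_integral_le_of_norm_le hpi.le
      (Filter.Eventually.of_forall fun θ _ => ?_)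
      ((by fun_prop : Continuous _).intervalIntegrable _ _)
    rw [norm_mul, norm_mul, norm_cexp_int, mul_one, norm_pow]
    exact mul_le_of_le_one_left (by positivity) (hb θ)
  rw [h1, integral_normSq_trigPoly, norm_mul] at h3
  have h4 : ‖(2 * Real.pi : ℂ)‖ = 2 * Real.pi := by
    simp [abs_of_pos Real.pi_pos]
  rw [h4] at h3
  exact le_of_mul_le_mul_left h3 hpi

/-! ### Carlson's coefficient inequalities -/

/-- Splits the quadratic form `∑ cⱼ cₖ β(j + k)` at one index. It isolates the few terms of the
`N`-th coefficient of `F * U ^ 2` that matter in Landau's method. -/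
theorem sum_sum_insert {β : ℕ → ℂ} {s : Finset ℕ} {i : ℕ} (hi : i ∉ s) (c : ℕ → ℂ) :
    ∑ j ∈ insert i s, ∑ k ∈ insert i s, c j * c k * β (j + k) =
      c i ^ 2 * β (i + i) + 2 * c i * ∑ j ∈ s, c j * β (i + j) +
        ∑ j ∈ s, ∑ k ∈ s, c j * c k * β (j + k) := by
  simp only [Finset.sum_insert hi, Finset.sum_add_distrib]
  have h1 : ∑ k ∈ s, c i * c k * β (i + k) = c i * ∑ j ∈ s, c j * β (i + j) := by
    rw [Finset.mul_sum]; exact Finset.sum_congr rfl fun _ _ => by ring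
  have h2 : ∑ j ∈ s, c j * c i * β (j + i) = c i * ∑ j ∈ s, c j * β (i + j) := by
    rw [Finset.mul_sum]; exact Finset.sum_congr rfl fun j _ => by rw [add_comm j i]; ring
  rw [h1, h2]; ring

theorem sum_Icc_reflect {M : Type*} [AddCommMonoid M] {n N : ℕ} (h : n ≤ N) (g : ℕ → M) :
    ∑ j ∈ Finset.Icc (N - n) N, g (N - j) = ∑ k ∈ Finset.range (n + 1), g k := by
  refine Finset.sum_nbij' (fun j => N - j) (fun k => N - k) ?_ ?_ ?_ ?_ ?_ <;>
    simp only [Finset.mem_Icc, Finset.mem_range] <;> intros <;> first | omega | trivial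

theorem exists_phase (w : ℂ) : ∃ e : ℂ, ‖e‖ = 1 ∧ w = ‖w‖ * e :=
  ⟨Complex.exp (w.arg * Complex.I), Complex.norm_exp_ofReal_mul_I _,
    (Complex.norm_mul_exp_arg_mul_I w).symm⟩

/-- Carlson's inequality for odd indices, for a series converging absolutely on the closed disk.
It comes from Landau's method with `U = 1 + e ∑_{k ≤ n} conj(αₖ) z^{N-k}`, where `N = 2n + 1` and `e` is
the phase of `α_N`. -/
theorem carlson_odd_aux {α : ℕ → ℂ} (hα : Summable fun n => ‖α n‖)
    (hb : ∀ θ : ℝ, ‖∑' n : ℕ, α n * Complex.exp ((n : ℤ) * Complex.I * θ)‖ ≤ 1) (n : ℕ) :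
    ‖α (2 * n + 1)‖ + ∑ k ∈ Finset.range (n + 1), ‖α k‖ ^ 2 ≤ 1 := by
  obtain ⟨e, he, hN⟩ := exists_phase (α (2 * n + 1))
  set N := 2 * n + 1 with hNdef
  set P := ∑ k ∈ Finset.range (n + 1), ‖α k‖ ^ 2 with hP
  have hP0 : 0 ≤ P := Finset.sum_nonneg fun _ _ => by positivity
  set T := Finset.Icc (N - n) N with hT
  have h0T : 0 ∉ T := by simp only [hT, Finset.mem_Icc]; omega
  -- `c` is the coefficient sequence of `U`.
  let c : ℕ → ℂ := fun j => if j = 0 then 1 else (starRingEnd ℂ) (α (N - j)) * e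
  have hc0 : c 0 = 1 := by simp [c]
  have hcT : ∀ j ∈ T, c j = (starRingEnd ℂ) (α (N - j)) * e := fun j hj =>
    if_neg (show ¬ j = 0 from fun h => h0T (h ▸ hj))
  have key := landau hα hb N (insert 0 T) c
  rw [sum_sum_insert (β := fun m => if m ≤ N then α (N - m) else 0) h0T,
    Finset.sum_insert h0T] at key
  have h1 : ∑ j ∈ T, c j * (if 0 + j ≤ N then α (N - (0 + j)) else 0) = P * e := by
    rw [hP, Complex.ofReal_sum, ← sum_Icc_reflect (by omega : n ≤ N), Finset.sum_mul]
    refine Finset.sum_congr rfl fun j hj => ?_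
    rw [hcT j hj, zero_add, if_pos (Finset.mem_Icc.1 hj).2, Complex.ofReal_pow,
      ← Complex.conj_mul']
    ring
  have h2 : ∑ j ∈ T, ∑ k ∈ T, c j * c k * (if j + k ≤ N then α (N - (j + k)) else 0) = 0 := by
    refine Finset.sum_eq_zero fun j hj => Finset.sum_eq_zero fun k hk => ?_
    rw [hT, Finset.mem_Icc] at hj hk
    rw [if_neg (by omega), mul_zero]
  have h3 : ∑ j ∈ T, ‖c j‖ ^ 2 = P := by
    rw [hP, ← sum_Icc_reflect (by omega : n ≤ N)]
    refine Finset.sum_congr rfl fun j hj => ?_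
    rw [hcT j hj, norm_mul, he, mul_one, RCLike.norm_conj]
  rw [h1, h2, h3, hc0] at key
  simp only [add_zero, Nat.sub_zero, Nat.zero_le, if_true, norm_one, one_pow, one_mul,
    mul_one] at key
  have h4 : α N + 2 * (P * e) = ((‖α N‖ + 2 * P : ℝ) : ℂ) * e := by
    conv_lhs => rw [hN]
    push_cast; ring
  rw [h4, norm_mul, he, mul_one, Complex.norm_real, Real.norm_of_nonneg (by positivity)] at key
  linarith

/-- Carlson's inequality for even indices, for a series converging absolutely on the closed disk.
It comes from Landau's method with `U = 1 + u z^{n+1} + e ∑_{k ≤ n} conj(αₖ) z^{N-k}`, where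
`N = 2n + 2`, `e` is the phase of `α_N`, and `u` is chosen so that `α_{n+1} u` has phase `e`. -/
theorem carlson_even_aux {α : ℕ → ℂ} (hα : Summable fun n => ‖α n‖)
    (hb : ∀ θ : ℝ, ‖∑' n : ℕ, α n * Complex.exp ((n : ℤ) * Complex.I * θ)‖ ≤ 1) (n : ℕ) :
    ‖α (2 * n + 2)‖ + ∑ k ∈ Finset.range (n + 1), ‖α k‖ ^ 2 +
      ‖α (n + 1)‖ ^ 2 / (1 + ‖α 0‖) ≤ 1 := by
  obtain ⟨e, he, hN⟩ := exists_phase (α (2 * n + 2))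
  obtain ⟨e', he', hm⟩ := exists_phase (α (n + 1))
  set N := 2 * n + 2 with hNdef
  set P := ∑ k ∈ Finset.range (n + 1), ‖α k‖ ^ 2 with hP
  have hP0 : 0 ≤ P := Finset.sum_nonneg fun _ _ => by positivity
  set T := Finset.Icc (N - n) N with hT
  -- `x` is the modulus of `u`: the maximizer of `2 * ‖α (n + 1)‖ * x - (1 + ‖α 0‖) * x ^ 2`.
  set x : ℝ := ‖α (n + 1)‖ / (1 + ‖α 0‖) with hx
  have hx0 : 0 ≤ x := by positivity
  have hmT : n + 1 ∉ T := by simp only [hT, Finset.mem_Icc]; omega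
  have h0T : 0 ∉ insert (n + 1) T := by
    simp only [hT, Finset.mem_insert, Finset.mem_Icc]; omega
  let c : ℕ → ℂ := fun j => if j = 0 then 1 else if j = n + 1 then x * (e * (starRingEnd ℂ) e')
    else (starRingEnd ℂ) (α (N - j)) * e
  have hc0 : c 0 = 1 := by simp [c]
  have hcm : c (n + 1) = x * (e * (starRingEnd ℂ) e') := by simp [c]
  have hcT : ∀ j ∈ T, c j = (starRingEnd ℂ) (α (N - j)) * e := fun j hj => by
    simp only [c]
    rw [if_neg (show ¬ j = 0 from fun h => h0T (h ▸ Finset.mem_insert_of_mem hj)),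
      if_neg (show ¬ j = n + 1 from fun h => hmT (h ▸ hj))]
  have key := landau hα hb N (insert 0 (insert (n + 1) T)) c
  rw [sum_sum_insert (β := fun m => if m ≤ N then α (N - m) else 0) h0T,
    sum_sum_insert (β := fun m => if m ≤ N then α (N - m) else 0) hmT,
    Finset.sum_insert h0T, Finset.sum_insert hmT, Finset.sum_insert hmT] at key
  have h1 : ∑ j ∈ T, c j * (if 0 + j ≤ N then α (N - (0 + j)) else 0) = P * e := by
    rw [hP, Complex.ofReal_sum, ← sum_Icc_reflect (by omega : n ≤ N), Finset.sum_mul]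
    refine Finset.sum_congr rfl fun j hj => ?_
    rw [hcT j hj, zero_add, if_pos (Finset.mem_Icc.1 hj).2, Complex.ofReal_pow,
      ← Complex.conj_mul']
    ring
  have h2 : ∑ j ∈ T, ∑ k ∈ T, c j * c k * (if j + k ≤ N then α (N - (j + k)) else 0) = 0 := by
    refine Finset.sum_eq_zero fun j hj => Finset.sum_eq_zero fun k hk => ?_
    rw [hT, Finset.mem_Icc] at hj hk
    rw [if_neg (by omega), mul_zero]
  have h2' : ∑ j ∈ T, c j * (if n + 1 + j ≤ N then α (N - (n + 1 + j)) else 0) = 0 := by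
    refine Finset.sum_eq_zero fun j hj => ?_
    rw [hT, Finset.mem_Icc] at hj
    rw [if_neg (by omega), mul_zero]
  have h3 : ∑ j ∈ T, ‖c j‖ ^ 2 = P := by
    rw [hP, ← sum_Icc_reflect (by omega : n ≤ N)]
    refine Finset.sum_congr rfl fun j hj => ?_
    rw [hcT j hj, norm_mul, he, mul_one, RCLike.norm_conj]
  rw [h1, h2, h2', h3, hc0, hcm, if_pos (by omega), if_pos (by omega), if_pos (by omega),
    show N - (0 + (n + 1)) = n + 1 by omega, show N - (n + 1 + (n + 1)) = 0 by omega] at key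
  simp only [add_zero, Nat.sub_zero, norm_one, one_pow, mul_zero, one_mul,
    mul_one, norm_mul, RCLike.norm_conj, he, he', Complex.norm_real,
    Real.norm_of_nonneg hx0] at key
  have hee : (starRingEnd ℂ) e' * e' = 1 := by rw [Complex.conj_mul', he']; simp
  have h4 : α N + 2 * (x * (e * (starRingEnd ℂ) e') * α (n + 1) + P * e) +
      (x * (e * (starRingEnd ℂ) e')) ^ 2 * α 0 =
      ((‖α N‖ + 2 * x * ‖α (n + 1)‖ + 2 * P : ℝ) : ℂ) * e -
        -((x * (e * (starRingEnd ℂ) e')) ^ 2 * α 0) := by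
    conv_lhs => rw [hN, hm]
    push_cast
    linear_combination (2 * x * e * ‖α (n + 1)‖) * hee
  have h5 := norm_sub_norm_le (((‖α N‖ + 2 * x * ‖α (n + 1)‖ + 2 * P : ℝ) : ℂ) * e)
    (-((x * (e * (starRingEnd ℂ) e')) ^ 2 * α 0))
  rw [← h4, norm_neg] at h5
  simp only [norm_mul, norm_pow, RCLike.norm_conj, he, he', Complex.norm_real, mul_one,
    Real.norm_of_nonneg hx0] at h5
  rw [Real.norm_of_nonneg (by positivity)] at h5
  have h6 : ‖α (n + 1)‖ = x * (1 + ‖α 0‖) := by rw [hx]; field_simp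
  have h7 : ‖α (n + 1)‖ ^ 2 / (1 + ‖α 0‖) = x ^ 2 * (1 + ‖α 0‖) := by rw [hx]; field_simp
  rw [h7]
  rw [h6] at h5
  have h8 := h5.trans key
  nlinarith

theorem le_of_forall_radius {g : ℝ → ℝ} (hg : Continuous g)
    (h : ∀ ρ : ℝ, 0 < ρ → ρ < 1 → g ρ ≤ 1) : g 1 ≤ 1 := by
  refine le_of_tendsto (hg.continuousAt.tendsto.mono_left nhdsWithin_le_nhds :
    Filter.Tendsto g (nhdsWithin 1 (Set.Iio 1)) (nhds (g 1))) ?_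
  filter_upwards [Ioo_mem_nhdsLT (zero_lt_one' ℝ)] with ρ hρ
  exact h ρ hρ.1 hρ.2

theorem summable_radius {f : ℂ → ℂ} {a : ℕ → ℂ}
    (hf : ∀ z : ℂ, ‖z‖ < 1 → HasSum (fun n => a n * z ^ n) (f z)) {ρ : ℝ} (h0 : 0 ≤ ρ)
    (h1 : ρ < 1) : Summable fun n => ‖a n * (ρ : ℂ) ^ n‖ :=
  summable_norm_iff.2 (hf ρ (by rwa [Complex.norm_real, Real.norm_of_nonneg h0])).summable

theorem norm_series_le {f : ℂ → ℂ} {a : ℕ → ℂ}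
    (hf : ∀ z : ℂ, ‖z‖ < 1 → HasSum (fun n => a n * z ^ n) (f z))
    (hbd : ∀ z : ℂ, ‖z‖ < 1 → ‖f z‖ ≤ 1) {ρ : ℝ} (h0 : 0 ≤ ρ) (h1 : ρ < 1) (θ : ℝ) :
    ‖∑' n : ℕ, a n * (ρ : ℂ) ^ n * Complex.exp ((n : ℤ) * Complex.I * θ)‖ ≤ 1 := by
  have hz : ‖(ρ : ℂ) * Complex.exp ((1 : ℤ) * Complex.I * θ)‖ < 1 := by
    rwa [norm_mul, norm_cexp_int, mul_one, Complex.norm_real, Real.norm_of_nonneg h0]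
  have : ∀ n : ℕ, a n * (ρ : ℂ) ^ n * Complex.exp ((n : ℤ) * Complex.I * θ) =
      a n * ((ρ : ℂ) * Complex.exp ((1 : ℤ) * Complex.I * θ)) ^ n := fun n => by
    rw [mul_pow, ← Complex.exp_nat_mul, mul_assoc]
    congr 3
    push_cast; ring
  simp only [this]
  rw [(hf _ hz).tsum_eq]
  exact hbd _ hz

/-- Carlson's inequality for odd indices: `|a_{2n+1}| ≤ 1 - ∑_{k ≤ n} |aₖ|²`. -/
theorem carlson_odd {f : ℂ → ℂ} {a : ℕ → ℂ}
    (hf : ∀ z : ℂ, ‖z‖ < 1 → HasSum (fun n => a n * z ^ n) (f z))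
    (hbd : ∀ z : ℂ, ‖z‖ < 1 → ‖f z‖ ≤ 1) (n : ℕ) :
    ‖a (2 * n + 1)‖ + ∑ k ∈ Finset.range (n + 1), ‖a k‖ ^ 2 ≤ 1 := by
  have := le_of_forall_radius (g := fun ρ : ℝ => ‖a (2 * n + 1) * (ρ : ℂ) ^ (2 * n + 1)‖ +
    ∑ k ∈ Finset.range (n + 1), ‖a k * (ρ : ℂ) ^ k‖ ^ 2) (by fun_prop)
    fun ρ h0 h1 => carlson_odd_aux (summable_radius hf h0.le h1)
      (norm_series_le hf hbd h0.le h1) n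
  simpa using this

/-- Carlson's inequality for even indices:
`|a_{2n+2}| ≤ 1 - ∑_{k ≤ n} |aₖ|² - |a_{n+1}|² / (1 + |a₀|)`. -/
theorem carlson_even {f : ℂ → ℂ} {a : ℕ → ℂ}
    (hf : ∀ z : ℂ, ‖z‖ < 1 → HasSum (fun n => a n * z ^ n) (f z))
    (hbd : ∀ z : ℂ, ‖z‖ < 1 → ‖f z‖ ≤ 1) (n : ℕ) :
    ‖a (2 * n + 2)‖ + ∑ k ∈ Finset.range (n + 1), ‖a k‖ ^ 2 +
      ‖a (n + 1)‖ ^ 2 / (1 + ‖a 0‖) ≤ 1 := by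
  have := le_of_forall_radius (g := fun ρ : ℝ => ‖a (2 * n + 2) * (ρ : ℂ) ^ (2 * n + 2)‖ +
    ∑ k ∈ Finset.range (n + 1), ‖a k * (ρ : ℂ) ^ k‖ ^ 2 +
      ‖a (n + 1) * (ρ : ℂ) ^ (n + 1)‖ ^ 2 / (1 + ‖a 0 * (ρ : ℂ) ^ 0‖)) (by
        have : ∀ ρ : ℝ, 1 + ‖a 0 * (ρ : ℂ) ^ 0‖ ≠ 0 := fun ρ => by positivity
        fun_prop (disch := assumption))
    fun ρ h0 h1 => carlson_even_aux (summable_radius hf h0.le h1)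
      (norm_series_le hf hbd h0.le h1) n
  simpa using this

/-! ### The refined Bohr sum -/

/-- Summed against powers of `r`, Carlson's inequalities give the refined Bohr sum: the quadratic
terms they save add up to exactly the weight `1 / (1 + x 0) + r / (1 - r)`. The right-hand side
carries the remainder `r ^ (2 * M) * (1 - ∑ x k ^ 2)` that makes the induction on `M` close. -/
theorem partial_sum_le {x : ℕ → ℝ} (hx : ∀ n, 0 ≤ x n)
    (hodd : ∀ n, x (2 * n + 1) + ∑ k ∈ Finset.range (n + 1), x k ^ 2 ≤ 1)
    (heven : ∀ n, x (2 * n + 2) + ∑ k ∈ Finset.range (n + 1), x k ^ 2 +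
      x (n + 1) ^ 2 / (1 + x 0) ≤ 1) {r : ℝ} (hr0 : 0 ≤ r) (hr1 : r < 1) (M : ℕ) :
    ∑ n ∈ Finset.range (2 * M), x (n + 1) * r ^ (n + 1) +
      (1 / (1 + x 0) + r / (1 - r)) * ∑ n ∈ Finset.range M, x (n + 1) ^ 2 * r ^ (2 * (n + 1)) ≤
    r / (1 - r) * (1 - x 0 ^ 2 -
      r ^ (2 * M) * (1 - ∑ k ∈ Finset.range (M + 1), x k ^ 2)) := by
  have h1r : 1 - r ≠ 0 := by linarith
  have hA : 1 + x 0 ≠ 0 := by linarith [hx 0]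
  induction M with
  | zero => simp
  | succ M ih =>
    rw [show 2 * (M + 1) = 2 * M + 1 + 1 by ring, Finset.sum_range_succ, Finset.sum_range_succ,
      Finset.sum_range_succ _ M, Finset.sum_range_succ _ (M + 1)]
    have ho := mul_le_mul_of_nonneg_right (hodd M) (pow_nonneg hr0 (2 * M + 1))
    have he := mul_le_mul_of_nonneg_right (heven M) (pow_nonneg hr0 (2 * M + 2))
    set P := ∑ k ∈ Finset.range (M + 1), x k ^ 2
    set S1 := ∑ n ∈ Finset.range (2 * M), x (n + 1) * r ^ (n + 1)
    set S2 := ∑ n ∈ Finset.range M, x (n + 1) ^ 2 * r ^ (2 * (n + 1))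
    set B := x (M + 1) ^ 2
    have e1 : r / (1 - r) * (1 - x 0 ^ 2 - r ^ (2 * M + 1 + 1) * (1 - (P + B))) =
        r / (1 - r) * (1 - x 0 ^ 2 - r ^ (2 * M) * (1 - P)) + (1 - P) * r ^ (2 * M + 1)
        + (1 - P) * r ^ (2 * M + 2) + r / (1 - r) * (B * r ^ (2 * M + 2)) := by
      field_simp; ring
    have e2 : (1 / (1 + x 0) + r / (1 - r)) * (S2 + B * r ^ (2 * M + 1 + 1)) =
        (1 / (1 + x 0) + r / (1 - r)) * S2 + B / (1 + x 0) * r ^ (2 * M + 2) +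
        r / (1 - r) * (B * r ^ (2 * M + 2)) := by ring
    rw [e1, show 2 * (M + 1) = 2 * M + 1 + 1 by ring, e2]
    linarith

theorem tsum_refined_le {x : ℕ → ℝ} (hx : ∀ n, 0 ≤ x n) (hx1 : ∀ n, x n ≤ 1)
    (hodd : ∀ n, x (2 * n + 1) + ∑ k ∈ Finset.range (n + 1), x k ^ 2 ≤ 1)
    (heven : ∀ n, x (2 * n + 2) + ∑ k ∈ Finset.range (n + 1), x k ^ 2 +
      x (n + 1) ^ 2 / (1 + x 0) ≤ 1) {r : ℝ} (hr0 : 0 ≤ r) (hr1 : r < 1) :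
    ∑' n : ℕ, x n * r ^ n + (1 / (1 + x 0) + r / (1 - r)) *
      ∑' n : ℕ, x (n + 1) ^ 2 * r ^ (2 * (n + 1)) ≤ x 0 + r / (1 - r) * (1 - x 0 ^ 2) := by
  have hs : Summable fun n => x n * r ^ n :=
    (summable_geometric_of_lt_one hr0 hr1).of_nonneg_of_le
      (fun n => mul_nonneg (hx n) (pow_nonneg hr0 n))
      fun n => mul_le_of_le_one_left (pow_nonneg hr0 n) (hx1 n)
  have hs1 : Summable fun n => x (n + 1) * r ^ (n + 1) := (summable_nat_add_iff 1).2 hs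
  have hs2 : Summable fun n => x (n + 1) ^ 2 * r ^ (2 * (n + 1)) := by
    refine hs1.of_nonneg_of_le (fun n => by positivity) fun n => ?_
    have := hx (n + 1)
    exact mul_le_mul (pow_le_of_le_one (hx _) (hx1 _) two_ne_zero)
      (pow_le_pow_of_le_one hr0 hr1.le (by omega)) (by positivity) (hx _)
  rw [hs.tsum_eq_zero_add, pow_zero, mul_one, add_assoc]
  refine add_le_add_right ?_ _
  have ht : Filter.Tendsto (fun M : ℕ => 2 * M) Filter.atTop Filter.atTop :=
    Filter.tendsto_id.const_mul_atTop' two_pos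
  refine le_of_tendsto' ((hs1.hasSum.tendsto_sum_nat.comp ht).add
    (hs2.hasSum.tendsto_sum_nat.const_mul _)) fun M => ?_
  refine (partial_sum_le hx hodd heven hr0 hr1 M).trans ?_
  have h1 : 0 ≤ r ^ (2 * M) * (1 - ∑ k ∈ Finset.range (M + 1), x k ^ 2) :=
    mul_nonneg (by positivity) (by linarith [hodd M, hx (2 * M + 1)])
  exact mul_le_mul_of_nonneg_left (by linarith) (div_nonneg hr0 (by linarith))

/-! ### The distance term -/

/-- The Schwarz-Pick bound on `|f z - f 0|`, with denominators cleared. -/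
theorem schwarz_pick {f : ℂ → ℂ} (hd : DifferentiableOn ℂ f (Metric.ball 0 1))
    (hbd : ∀ z : ℂ, ‖z‖ < 1 → ‖f z‖ ≤ 1) (h0 : ‖f 0‖ < 1) {z : ℂ} (hz : ‖z‖ < 1) :
    ‖f z - f 0‖ * (1 - ‖f 0‖ * ‖z‖) ≤ ‖z‖ * (1 - ‖f 0‖ ^ 2) := by
  set A := f 0
  have hden : ∀ w : ℂ, ‖w‖ < 1 → 1 - (starRingEnd ℂ) A * f w ≠ 0 := fun w hw h => by
    have : ‖(starRingEnd ℂ) A * f w‖ = 1 := by rw [← sub_eq_zero.1 h, norm_one]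
    rw [norm_mul, RCLike.norm_conj] at this
    nlinarith [hbd w hw, norm_nonneg (f w), norm_nonneg A]
  have hnum : ∀ w : ℂ, ‖w‖ ≤ 1 → ‖w - A‖ ≤ ‖1 - (starRingEnd ℂ) A * w‖ := fun w hw => by
    have hA2 : 0 ≤ 1 - ‖A‖ ^ 2 := by nlinarith [norm_nonneg A]
    have hw2 : 0 ≤ 1 - ‖w‖ ^ 2 := by nlinarith [norm_nonneg w]
    have hprod := mul_nonneg hA2 hw2
    refine (pow_le_pow_iff_left₀ (norm_nonneg _) (norm_nonneg _) two_ne_zero).1 ?_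
    simp only [Complex.sq_norm, Complex.normSq_apply, Complex.sub_re, Complex.sub_im,
      Complex.mul_re, Complex.mul_im, Complex.conj_re, Complex.conj_im, Complex.one_re,
      Complex.one_im] at hprod ⊢
    linarith
  -- The Schwarz lemma applies to `f` followed by the disk automorphism sending `f 0` to `0`.
  have hsch := Complex.norm_le_norm_of_mapsTo_ball (R := 1) (z := z)
    (f := fun w => (f w - A) / (1 - (starRingEnd ℂ) A * f w))
    (DifferentiableOn.div (hd.sub_const _) ((hd.const_mul _).const_sub _)
      fun w hw => hden w (mem_ball_zero_iff.1 hw))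
    (fun w hw => by
      have hw' := mem_ball_zero_iff.1 hw
      rw [mem_closedBall_zero_iff, norm_div]
      exact div_le_one_of_le₀ (hnum _ (hbd w hw')) (norm_nonneg _))
    (by simp [A]) hz
  rw [norm_div, div_le_iff₀ (norm_pos_iff.2 (hden z hz))] at hsch
  have h1 : 1 - (starRingEnd ℂ) A * f z =
      ((1 - ‖A‖ ^ 2 : ℝ) : ℂ) - (starRingEnd ℂ) A * (f z - A) := by
    have := Complex.conj_mul' A
    push_cast
    linear_combination -this
  have h2 : ‖1 - (starRingEnd ℂ) A * f z‖ ≤ (1 - ‖A‖ ^ 2) + ‖A‖ * ‖f z - A‖ := by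
    rw [h1]
    refine (norm_sub_le _ _).trans ?_
    rw [norm_mul, RCLike.norm_conj, Complex.norm_real,
      Real.norm_of_nonneg (by nlinarith [norm_nonneg A])]
  have h3 := hsch.trans (mul_le_mul_of_nonneg_left h2 (norm_nonneg z))
  linarith

theorem differentiableOn_ball {f : ℂ → ℂ} {a : ℕ → ℂ}
    (hf : ∀ z : ℂ, ‖z‖ < 1 → HasSum (fun n => a n * z ^ n) (f z)) :
    DifferentiableOn ℂ f (Metric.ball 0 1) := by
  intro w hw
  obtain ⟨ρ, hwρ, hρ⟩ := exists_between (mem_ball_zero_iff.1 hw)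
  have h0 : 0 ≤ ρ := (norm_nonneg w).trans hwρ.le
  have h := Complex.differentiableOn_tsum_of_summable_norm (F := fun n z => a n * z ^ n)
    (U := Metric.ball 0 ρ) (summable_radius hf h0 hρ) (fun n => by fun_prop)
    Metric.isOpen_ball fun n z hz => by
      rw [norm_mul, norm_mul, norm_pow, norm_pow, Complex.norm_real, Real.norm_of_nonneg h0]
      have := (mem_ball_zero_iff.1 hz).le
      gcongr
  have hU : Metric.ball (0 : ℂ) ρ ∈ nhds w :=
    Metric.isOpen_ball.mem_nhds (mem_ball_zero_iff.2 hwρ)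
  refine ((h.differentiableAt hU).congr_of_eventuallyEq ?_).differentiableWithinAt
  filter_upwards [hU] with z hz
  exact (hf z ((mem_ball_zero_iff.1 hz).trans hρ)).tsum_eq.symm

/-! ### The sharp numerical inequality and the conclusion -/

/-- The numerical inequality that remains. All quantities are worst at `r = 1/5`, where the deficit
is `(1 - A) ^ 3 * (68 - 5 * (1 - A) ^ 2) / (32 * (5 - A))`; its triple zero at `A = 1` is why the
constant `18/5` leaves no room. -/
theorem final_ineq {A r D : ℝ} (hA0 : 0 ≤ A) (hA1 : A ≤ 1) (hr0 : 0 ≤ r) (hr : r ≤ 1 / 5)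
    (hD : D * (1 - A * r) ≤ r * (1 - A ^ 2)) :
    A + r / (1 - r) * (1 - A ^ 2) + D +
      18 / 5 * ((1 - A ^ 2) ^ 2 * (r ^ 2 / (1 - r ^ 2) ^ 2)) ≤ 1 := by
  have hc : 0 ≤ 1 - A ^ 2 := by nlinarith
  have hAr : A * r ≤ 1 / 5 := by nlinarith
  have h1 : r / (1 - r) ≤ 1 / 4 := by
    rw [div_le_div_iff₀ (by linarith) (by norm_num)]; linarith
  have h2 : r ^ 2 / (1 - r ^ 2) ^ 2 ≤ 25 / 576 := by
    have : r / (1 - r ^ 2) ≤ 5 / 24 := by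
      rw [div_le_div_iff₀ (by nlinarith) (by norm_num)]; nlinarith
    rw [← div_pow]
    have h0 : 0 ≤ r / (1 - r ^ 2) := div_nonneg hr0 (by nlinarith)
    nlinarith
  have h3 : D ≤ (1 - A ^ 2) / (5 - A) := by
    have : D ≤ r * (1 - A ^ 2) / (1 - A * r) := (le_div_iff₀ (by linarith)).2 hD
    refine this.trans ?_
    rw [div_le_div_iff₀ (by linarith) (by linarith)]
    nlinarith
  have h4 : A + 1 / 4 * (1 - A ^ 2) + (1 - A ^ 2) / (5 - A) +
      18 / 5 * ((1 - A ^ 2) ^ 2 * (25 / 576)) ≤ 1 := by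
    have h5 : (5 - A) ≠ 0 := by linarith
    have : 1 - (A + 1 / 4 * (1 - A ^ 2) + (1 - A ^ 2) / (5 - A) +
      18 / 5 * ((1 - A ^ 2) ^ 2 * (25 / 576))) =
      (1 - A) ^ 3 * (68 - 5 * (1 - A) ^ 2) / (32 * (5 - A)) := by
      field_simp; ring
    have : 0 ≤ (1 - A) ^ 3 * (68 - 5 * (1 - A) ^ 2) / (32 * (5 - A)) :=
      div_nonneg (mul_nonneg (pow_nonneg (by linarith) 3) (by nlinarith)) (by linarith)
    linarith
  have h6 := mul_le_mul_of_nonneg_right h1 hc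
  have h7 := mul_le_mul_of_nonneg_left h2 (sq_nonneg (1 - A ^ 2))
  linarith

/-- Refined Bohr inequality with |f(z) - a₀| and area term (λ = 0 case). -/
theorem refined_bohr_with_distance (f : ℂ → ℂ) (a : ℕ → ℂ)
    (hf : ∀ z : ℂ, ‖z‖ < 1 → HasSum (fun n => a n * z ^ n) (f z))
    (hbd : ∀ z : ℂ, ‖z‖ < 1 → ‖f z‖ ≤ 1)
    (r : ℝ) (hr0 : 0 ≤ r) (hr : r ≤ 1 / 5)
    (S : ℝ) (hS : S = Real.pi * ∑' n : ℕ, (n : ℝ) * ‖a n‖ ^ 2 * r ^ (2 * n))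
    (z : ℂ) (hz : ‖z‖ = r) :
    ∑' n : ℕ, ‖a n‖ * r ^ n +
      (1 / (1 + ‖a 0‖) + r / (1 - r)) * ∑' n : ℕ, ‖a (n + 1)‖ ^ 2 * r ^ (2 * (n + 1)) +
      ‖f z - a 0‖ + (18 / 5) * (S / Real.pi) ≤ 1 := by
  have hr1 : r < 1 := by linarith
  have hodd := carlson_odd hf hbd
  have heven := carlson_even hf hbd
  have hf0 : f 0 = a 0 := by
    refine (hf 0 (by simp)).unique ?_
    convert hasSum_single (f := fun n => a n * (0 : ℂ) ^ n) 0 fun n hn => ?_ using 1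
    · simp
    · simp [hn]
  have hA1 : ‖a 0‖ ≤ 1 := hf0 ▸ hbd 0 (by simp)
  have hcoef : ∀ n, ‖a (n + 1)‖ ≤ 1 - ‖a 0‖ ^ 2 := fun n => by
    have hP : ∀ m, ‖a 0‖ ^ 2 ≤ ∑ k ∈ Finset.range (m + 1), ‖a k‖ ^ 2 := fun m =>
      Finset.single_le_sum (f := fun k => ‖a k‖ ^ 2) (fun _ _ => by positivity)
        (Finset.mem_range.2 m.succ_pos)
    obtain ⟨m, hm | hm⟩ := Nat.even_or_odd' n
    · subst hm; linarith [hodd m, hP m]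
    · subst hm
      have : 0 ≤ ‖a (m + 1)‖ ^ 2 / (1 + ‖a 0‖) := by positivity
      linarith [heven m, hP m]
  have hx1 : ∀ n, ‖a n‖ ≤ 1 := fun n => by
    cases n with
    | zero => exact hA1
    | succ n => linarith [hcoef n, sq_nonneg ‖a 0‖]
  have hmain := tsum_refined_le (x := fun n => ‖a n‖) (fun n => norm_nonneg _) hx1 hodd heven
    hr0 hr1
  have hD : ‖f z - a 0‖ * (1 - ‖a 0‖ * r) ≤ r * (1 - ‖a 0‖ ^ 2) := by
    rcases hA1.lt_or_eq with h | h
    · have := schwarz_pick (differentiableOn_ball hf) hbd (hf0 ▸ h) (hz ▸ hr1 : ‖z‖ < 1)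
      rwa [hf0, hz] at this
    -- If `‖a 0‖ = 1`, all other coefficients vanish and `f` is constant.
    · have hfz : f z = a 0 := by
        refine (hf z (hz ▸ hr1)).unique ?_
        convert hasSum_single (f := fun n => a n * z ^ n) 0 fun n hn => ?_ using 1
        · simp
        · obtain ⟨m, rfl⟩ := Nat.exists_eq_succ_of_ne_zero hn
          have := hcoef m
          rw [h] at this
          have h0 : a (m + 1) = 0 := norm_le_zero_iff.1 (by linarith)
          simp [h0]
      rw [hfz, h]; simp
  have hSle : S / Real.pi ≤ (1 - ‖a 0‖ ^ 2) ^ 2 * (r ^ 2 / (1 - r ^ 2) ^ 2) := by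
    rw [hS, mul_div_cancel_left₀ _ Real.pi_ne_zero]
    have hg := (hasSum_coe_mul_geometric_of_norm_lt_one (r := r ^ 2) (by
      rw [Real.norm_of_nonneg (by positivity)]; nlinarith)).mul_left ((1 - ‖a 0‖ ^ 2) ^ 2)
    have hle : ∀ n : ℕ, (n : ℝ) * ‖a n‖ ^ 2 * r ^ (2 * n) ≤
        (1 - ‖a 0‖ ^ 2) ^ 2 * (n * (r ^ 2) ^ n) := fun n => by
      cases n with
      | zero => simp
      | succ n =>
        have := pow_le_pow_left₀ (norm_nonneg _) (hcoef n) 2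
        rw [pow_mul, mul_assoc, mul_left_comm]
        gcongr
    exact hasSum_le hle
      (hg.summable.of_nonneg_of_le (fun n => by positivity) hle).hasSum hg
  have := final_ineq (norm_nonneg _) hA1 hr0 hr hD
  linarith
end

section
/- Let f(z) = Σ_{n≥0} a_n z^n be analytic on the unit disk with |f(z)| ≤ 1 and S_r = π Σ_{n≥1} n|a_n|^2 r^{2n}. Then for r ≤ 1/(3 − |a_0|): |a_0|^2 + Σ_{n≥1} |a_n| r^n + (1/(1+|a_0|) + r/(1−r))·Σ_{n≥1}|a_n|^2 r^{2n} + (9/8)·S_r/(π − S_r) ≤ 1. -/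
/-!
Since `|f| ≤ 1`, Parseval shows that multiplication by `f` is a contraction on coefficient sequences,
so all finite lower-triangular Toeplitz matrices built from the `a n` are contractions
(`toeplitz_contraction`). Testing these matrices on explicit sparse vectors gives everything needed
about the coefficients. Write `A = ‖a 0‖`.

* Carlson's inequalities (`Contractive.odd_coeff`, `Contractive.even_coeff`):
  `‖a (2n+1)‖ ≤ 1 - ∑_{k ≤ n} ‖a k‖²` and
  `‖a (2n)‖ ≤ 1 - ∑_{k < n} ‖a k‖² - ‖a n‖² / (1 + A)` for `n ≥ 1`. Weighted by powers of `r` and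
  summed, the square terms collect exactly the factor `1 / (1 + A) + r / (1 - r)`, so the two series
  together are at most `(1 - A²) r / (1 - r)` (`Contractive.bohr_partial`).
* Rogosinski's inequality (`Contractive.sum_sq_le_geom`):
  `∑_{1 ≤ k ≤ n} ‖a k‖² ≤ (1 - A²)² ∑_{k < n} A^(2k)`. Because `k r^(2k)` decreases in `k ≥ 1` for
  `r ≤ 1 / 2`, summation by parts yields `S / π ≤ ((1 - A²) r / (1 - A² r²))²`
  (`Contractive.area_le`).

Both bounds increase with `r`, so it suffices to compare them at `r = 1 / (3 - A)`, where the claim is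
the polynomial inequality `bohr_poly_bound`.
-/

/-! ### Multiplication by a bounded function is a contraction -/

open Finset in
/-- Parseval for the polynomial with coefficients `c 0, …, c (M - 1)` on the unit circle. -/
theorem parseval_range (c : ℕ → ℂ) (M : ℕ) :
    ∑ k ∈ range M, ‖c k‖ ^ 2 =
      Real.circleAverage (fun z ↦ ‖∑ k ∈ range M, c k * z ^ k‖ ^ 2) 0 1 := by
  have h := Polynomial.sum_sq_norm_coeff_eq_circleAverage
    (∑ k ∈ range M, Polynomial.monomial k (c k))
  simp only [Polynomial.eval_finsetSum, Polynomial.eval_monomial] at h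
  rw [← h]
  have hco : ∀ i, (∑ k ∈ range M, Polynomial.monomial k (c k)).coeff i =
      if i < M then c i else 0 := by
    intro i
    simp [Polynomial.coeff_monomial]
  symm
  have hsub : (∑ k ∈ range M, Polynomial.monomial k (c k)).support ⊆ range M := by
    intro i hi
    rw [Polynomial.mem_support_iff, hco] at hi
    by_contra hn
    simp_all
  rw [sum_subset hsub]
  · refine sum_congr rfl fun i hi ↦ ?_
    rw [hco, if_pos (mem_range.1 hi)]
  · intro i _ hi
    rw [Polynomial.notMem_support_iff.1 hi]
    simp

open Finset in
/-- A power series dominated by a polynomial on the unit circle has no larger sum of squared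
coefficients. -/
theorem sum_sq_le_of_norm_le (c y : ℕ → ℂ) (N : ℕ) (hc : Summable fun k ↦ ‖c k‖)
    (h : ∀ z : ℂ, ‖z‖ = 1 → ‖∑' k, c k * z ^ k‖ ≤ ‖∑ j ∈ range N, y j * z ^ j‖) (n : ℕ) :
    ∑ k ∈ range n, ‖c k‖ ^ 2 ≤ ∑ j ∈ range N, ‖y j‖ ^ 2 := by
  set K := ∑' k, ‖c k‖ with hK
  -- The partial sum of order `M` differs from the full series by at most `K - ∑_{k<M} ‖c k‖`, and
  -- both are bounded by `K`, so their squared norms differ by at most `2 K` times that tail.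
  have key : ∀ M, ∑ k ∈ range M, ‖c k‖ ^ 2 ≤
      ∑ j ∈ range N, ‖y j‖ ^ 2 + 2 * K * (K - ∑ k ∈ range M, ‖c k‖) := by
    intro M
    have hci : ∀ (d : ℕ → ℂ) (M : ℕ), CircleIntegrable
        (fun z : ℂ ↦ ‖∑ k ∈ range M, d k * z ^ k‖ ^ 2) 0 1 := fun d M ↦
      Continuous.continuousOn (by fun_prop) |>.circleIntegrable zero_le_one
    rw [parseval_range c M, parseval_range y N,
      ← Real.circleAverage_const (2 * K * (K - ∑ k ∈ range M, ‖c k‖)) (0 : ℂ) 1,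
      ← Real.circleAverage_add (hci y N) (circleIntegrable_const _ _ _)]
    refine Real.circleAverage_mono (hci c M) ((hci y N).add (circleIntegrable_const _ _ _)) ?_
    intro z hz
    have hz1 : ‖z‖ = 1 := by simpa using hz
    have hn : ∀ k, ‖c k * z ^ k‖ = ‖c k‖ := fun k ↦ by simp [hz1]
    have hs : Summable fun k ↦ ‖c k * z ^ k‖ := by simpa only [hn] using hc
    have h1 : ‖∑ k ∈ range M, c k * z ^ k‖ ≤ K := by
      refine (norm_sum_le _ _).trans ?_
      simp only [hn]
      exact hc.sum_le_tsum _ fun _ _ ↦ norm_nonneg _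
    have h2 : ‖∑' k, c k * z ^ k‖ ≤ K := by
      refine (norm_tsum_le_tsum_norm hs).trans ?_
      simp only [hn]; exact le_rfl
    have h3 : ‖∑ k ∈ range M, c k * z ^ k‖ ≤
        ‖∑' k, c k * z ^ k‖ + (K - ∑ k ∈ range M, ‖c k‖) := by
      have e1 := hs.of_norm.sum_add_tsum_nat_add M
      have e2 := hc.sum_add_tsum_nat_add M
      have e3 : ‖∑' k, c (k + M) * z ^ (k + M)‖ ≤ ∑' k, ‖c (k + M)‖ := by
        refine (norm_tsum_le_tsum_norm ((summable_nat_add_iff (f := fun k ↦ ‖c k * z ^ k‖) M).2 hs)).trans ?_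
        simp only [hn]; exact le_rfl
      have e4 : ∑ k ∈ range M, c k * z ^ k =
          ∑' k, c k * z ^ k - ∑' k, c (k + M) * z ^ (k + M) := by
        rw [← e1]; ring
      have e5 := norm_sub_le (∑' k, c k * z ^ k) (∑' k, c (k + M) * z ^ (k + M))
      rw [← e4] at e5
      linarith
    have h4 := h z hz1
    have h5 : 0 ≤ K - ∑ k ∈ range M, ‖c k‖ :=
      sub_nonneg.2 (hc.sum_le_tsum _ fun _ _ ↦ norm_nonneg _)
    have h6 := norm_nonneg (∑' k, c k * z ^ k)
    have h7 := norm_nonneg (∑ k ∈ range M, c k * z ^ k)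
    have h8 : ‖∑' k, c k * z ^ k‖ ^ 2 ≤ ‖∑ j ∈ range N, y j * z ^ j‖ ^ 2 := by gcongr
    simp only [Pi.add_apply]
    nlinarith [mul_nonneg h5 (sub_nonneg.2 h1), mul_nonneg h5 (sub_nonneg.2 h2),
      mul_le_mul_of_nonneg_right h3 h7, mul_le_mul_of_nonneg_right h3 h6]
  have ht : Filter.Tendsto (fun M ↦ ∑ j ∈ range N, ‖y j‖ ^ 2 +
      2 * K * (K - ∑ k ∈ range M, ‖c k‖)) Filter.atTop
      (nhds (∑ j ∈ range N, ‖y j‖ ^ 2 + 2 * K * (K - K))) :=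
    ((hc.hasSum.tendsto_sum_nat.const_sub K).const_mul _).const_add _
  rw [sub_self, mul_zero, add_zero] at ht
  refine ge_of_tendsto ht ?_
  filter_upwards [Filter.eventually_ge_atTop n] with M hM
  exact (sum_le_sum_of_subset_of_nonneg (range_mono hM) fun _ _ _ ↦ by positivity).trans (key M)

/-- The lower-triangular Toeplitz matrices with first column `a 0, …, a (n - 1)` are contractions
of `ℂⁿ` with the Euclidean norm, for every `n`. The vector is encoded as an infinite sequence of
which only the first `n` entries matter. -/
def Contractive (a : ℕ → ℂ) : Prop :=
  ∀ (x : ℕ → ℂ) (n : ℕ),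
    ∑ k ∈ Finset.range n, ‖∑ j ∈ Finset.range (k + 1), x j * a (k - j)‖ ^ 2 ≤
      ∑ j ∈ Finset.range n, ‖x j‖ ^ 2

open Finset in
/-- Multiplication by a function bounded by `1` on the disk does not increase the `H²` norm, and
the first `n` coefficients of `f * x` only depend on the first `n` coefficients of `x`. -/
theorem toeplitz_contraction (f : ℂ → ℂ) (a : ℕ → ℂ)
    (hf : ∀ z : ℂ, ‖z‖ < 1 → HasSum (fun n => a n * z ^ n) (f z))
    (hbd : ∀ z : ℂ, ‖z‖ < 1 → ‖f z‖ ≤ 1) : Contractive a := by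
  intro x n
  -- On the circle of radius `ρ < 1` the Cauchy product converges absolutely, so the comparison of
  -- square sums applies to the truncation of `x` times the series of `f`; then `ρ → 1`.
  have key : ∀ ρ : ℝ, 0 < ρ → ρ < 1 →
      ∑ k ∈ range n, (‖∑ j ∈ range (k + 1), x j * a (k - j)‖ * ρ ^ k) ^ 2 ≤
        ∑ j ∈ range n, (‖x j‖ * ρ ^ j) ^ 2 := by
    intro ρ h0 h1
    set u : ℕ → ℂ := fun j ↦ if j < n then x j * (ρ : ℂ) ^ j else 0 with hu
    set v : ℕ → ℂ := fun j ↦ a j * (ρ : ℂ) ^ j with hv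
    have hρ : ‖(ρ : ℂ)‖ = ρ := by simp [abs_of_pos h0]
    have hvs : Summable fun j ↦ ‖v j‖ := (hf ρ (by rw [hρ]; exact h1)).summable.norm
    have hus : Summable fun j ↦ ‖u j‖ := by
      refine summable_of_ne_finset_zero (s := range n) fun j hj ↦ ?_
      simp_all
    have hb := sum_sq_le_of_norm_le (fun k ↦ ∑ j ∈ range (k + 1), u j * v (k - j))
      u n (summable_norm_sum_mul_range_of_summable_norm hus hvs) ?_ n
    · convert hb using 2 with k hk k hk
      · rw [← hρ, ← norm_pow, ← norm_mul, sum_mul]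
        congr 2
        refine sum_congr rfl fun j hj ↦ ?_
        have hj' := mem_range.1 hj
        have hk' := mem_range.1 hk
        simp only [hu, hv, if_pos (show j < n by omega)]
        rw [← pow_mul_pow_sub (ρ : ℂ) (show j ≤ k by omega)]; ring
      · simp only [hu, if_pos (mem_range.1 hk)]
        rw [norm_mul, norm_pow, hρ]
    · intro z hz
      have hw : ‖(ρ : ℂ) * z‖ < 1 := by rw [norm_mul, hρ, hz, mul_one]; exact h1
      have hnz : ∀ (d : ℕ → ℂ), (Summable fun j ↦ ‖d j‖) → Summable fun j ↦ ‖d j * z ^ j‖ :=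
        fun d hd ↦ by simpa [hz] using hd
      have hp := tsum_mul_tsum_eq_tsum_sum_range_of_summable_norm (hnz u hus) (hnz v hvs)
      have e1 : ∑' j, v j * z ^ j = f (ρ * z) := by
        rw [← (hf _ hw).tsum_eq]
        exact tsum_congr fun j ↦ by simp only [hv]; rw [mul_pow]; ring
      have e2 : ∑' j, u j * z ^ j = ∑ j ∈ range n, u j * z ^ j :=
        tsum_eq_sum fun j hj ↦ by simp_all
      have e3 : ∑' k, (∑ j ∈ range (k + 1), u j * v (k - j)) * z ^ k =
          (∑ j ∈ range n, u j * z ^ j) * f (ρ * z) := by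
        rw [← e1, ← e2, hp]
        refine tsum_congr fun k ↦ ?_
        rw [sum_mul]
        refine sum_congr rfl fun j hj ↦ ?_
        have hj' := mem_range.1 hj
        rw [← pow_mul_pow_sub z (show j ≤ k by omega)]; ring
      rw [e3, norm_mul]
      exact mul_le_of_le_one_right (norm_nonneg _) (hbd _ hw)
  have hL : Filter.Tendsto (fun ρ : ℝ ↦
      ∑ k ∈ range n, (‖∑ j ∈ range (k + 1), x j * a (k - j)‖ * ρ ^ k) ^ 2) (nhdsWithin 1 (Set.Iio 1))
      (nhds (∑ k ∈ range n, (‖∑ j ∈ range (k + 1), x j * a (k - j)‖ * 1 ^ k) ^ 2)) :=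
    (Continuous.tendsto (by fun_prop) 1).mono_left nhdsWithin_le_nhds
  have hR : Filter.Tendsto (fun ρ : ℝ ↦ ∑ j ∈ range n, (‖x j‖ * ρ ^ j) ^ 2)
      (nhdsWithin 1 (Set.Iio 1)) (nhds (∑ j ∈ range n, (‖x j‖ * 1 ^ j) ^ 2)) :=
    (Continuous.tendsto (by fun_prop) 1).mono_left nhdsWithin_le_nhds
  have := le_of_tendsto_of_tendsto hL hR (by
    filter_upwards [Ioo_mem_nhdsLT (show (0 : ℝ) < 1 by norm_num)] with ρ hρ
    exact key ρ hρ.1 hρ.2)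
  simpa using this

/-! ### Coefficient inequalities from test vectors -/

open Finset in
/-- A row of the Toeplitz matrix only sees `x 0` when `x 1, …, x k` vanish. -/
theorem row_of_gap (x a : ℕ → ℂ) (k : ℕ) (hx : ∀ j, 1 ≤ j → j ≤ k → x j = 0) :
    ∑ j ∈ range (k + 1), x j * a (k - j) = x 0 * a k := by
  rw [sum_range_succ', sum_eq_zero, zero_add, Nat.sub_zero]
  intro j hj
  rw [hx (j + 1) (by omega) (by have := mem_range.1 hj; omega), zero_mul]

open Finset in
theorem conj_mul_sum_reflect (a : ℕ → ℂ) (n : ℕ) :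
    ∑ j ∈ range (n + 1), (starRingEnd ℂ) (a (n - j)) * a (n - j) =
      ((∑ k ∈ range (n + 1), ‖a k‖ ^ 2 : ℝ) : ℂ) := by
  rw [← sum_range_reflect]
  push_cast
  refine sum_congr rfl fun j hj ↦ ?_
  have hj' := mem_range.1 hj
  rw [Nat.sub_sub_self (by omega), Complex.conj_mul']

open Finset in
theorem sum_norm_sq_reflect (a : ℕ → ℂ) (n : ℕ) :
    ∑ j ∈ range (n + 1), ‖a (n - j)‖ ^ 2 = ∑ k ∈ range (n + 1), ‖a k‖ ^ 2 := by
  rw [← sum_range_reflect]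
  refine sum_congr rfl fun j hj ↦ ?_
  have hj' := mem_range.1 hj
  rw [Nat.add_sub_cancel, Nat.sub_sub_self (by omega)]

theorem exists_unit_mul (w : ℂ) : ∃ e : ℂ, ‖e‖ = 1 ∧ e * w = ‖w‖ := by
  rcases eq_or_ne w 0 with rfl | hw
  · exact ⟨1, by simp⟩
  · have : (‖w‖ : ℂ) ≠ 0 := by simpa using hw
    refine ⟨‖w‖ / w, ?_, by field_simp⟩
    simp [hw]

open Finset in
theorem Contractive.rotate {a : ℕ → ℂ} (h : Contractive a) {e : ℂ} (he : ‖e‖ = 1) :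
    Contractive fun k ↦ e * a k := by
  intro x n
  convert h x n using 3 with k hk
  rw [← one_mul ‖∑ j ∈ range (k + 1), x j * a (k - j)‖, ← he, ← norm_mul, mul_sum]
  exact congrArg _ (sum_congr rfl fun j _ ↦ by ring)

open Finset in
theorem Contractive.sum_sq_le_one {a : ℕ → ℂ} (h : Contractive a) (n : ℕ) :
    ∑ k ∈ range (n + 1), ‖a k‖ ^ 2 ≤ 1 := by
  have := h (fun j ↦ if j = 0 then 1 else 0) (n + 1)
  have e : ∀ k, ∑ j ∈ range (k + 1), (fun j ↦ if j = 0 then (1 : ℂ) else 0) j * a (k - j) = a k := by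
    intro k
    rw [row_of_gap _ _ _ fun j hj _ ↦ if_neg (by omega)]
    simp
  simp only [e] at this
  refine this.trans ?_
  rw [sum_range_succ']
  simp

open Finset in
/-- Carlson's inequality for odd coefficients. With `a (2n+1) ≥ 0` after a rotation, the test vector
has `x 0 = 1`, a gap, and the conjugates of `a n, …, a 0` in places `n+1, …, 2n+1`. If `s` is the sum
of squares, rows `0, …, n` and `2n+1` give `s + (a (2n+1) + s)² ≤ 1 + s`. -/
theorem Contractive.odd_coeff {a : ℕ → ℂ} (h : Contractive a) (n : ℕ) :
    ‖a (2 * n + 1)‖ + ∑ k ∈ range (n + 1), ‖a k‖ ^ 2 ≤ 1 := by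
  obtain ⟨e, he, hea⟩ := exists_unit_mul (a (2 * n + 1))
  set b : ℕ → ℂ := fun k ↦ e * a k with hb
  have hnb : ∀ k, ‖b k‖ = ‖a k‖ := fun k ↦ by simp [hb, he]
  have hbN : b (2 * n + 1) = ‖b (2 * n + 1)‖ := by rw [hnb]; exact hea
  simp only [← hnb]
  set s := ∑ k ∈ range (n + 1), ‖b k‖ ^ 2 with hs
  have hs0 : 0 ≤ s := sum_nonneg fun _ _ ↦ by positivity
  set x : ℕ → ℂ := fun j ↦ if j = 0 then 1 else
    if n + 1 ≤ j then (starRingEnd ℂ) (b (2 * n + 1 - j)) else 0 with hx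
  have hx0 : x 0 = 1 := rfl
  have hxz : ∀ j, 1 ≤ j → j ≤ n → x j = 0 := fun j h1 h2 ↦ by
    simp only [hx]; rw [if_neg (by omega), if_neg (by omega)]
  have hxt : ∀ j, x (n + 1 + j) = (starRingEnd ℂ) (b (n - j)) := fun j ↦ by
    simp only [hx]; rw [if_neg (by omega), if_pos (by omega)]; congr 2; omega
  have hsum0 : ∀ (F : ℕ → ℂ), ∑ j ∈ range (n + 1), x j * F j = F 0 := fun F ↦ by
    rw [sum_range_succ', sum_eq_zero, hx0, one_mul, zero_add]
    intro j hj
    rw [hxz (j + 1) (by omega) (by have := mem_range.1 hj; omega), zero_mul]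
  have hrow : ∀ k ∈ range (n + 1), ∑ j ∈ range (k + 1), x j * b (k - j) = b k := by
    intro k hk
    have hk' := mem_range.1 hk
    rw [row_of_gap x b k fun j h1 h2 ↦ hxz j h1 (by omega), hx0, one_mul]
  have hlast : ∑ j ∈ range (2 * n + 1 + 1), x j * b (2 * n + 1 - j) =
      ((‖b (2 * n + 1)‖ + s : ℝ) : ℂ) := by
    rw [show 2 * n + 1 + 1 = (n + 1) + (n + 1) by ring, sum_range_add, hsum0, Nat.sub_zero]
    push_cast
    rw [← hbN, hs, ← conj_mul_sum_reflect]
    congr 1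
    refine sum_congr rfl fun j _ ↦ ?_
    rw [hxt]; congr 2; omega
  have hnorm : ∑ j ∈ range (2 * n + 1 + 1), ‖x j‖ ^ 2 = 1 + s := by
    rw [show 2 * n + 1 + 1 = (n + 1) + (n + 1) by ring, sum_range_add]
    congr 1
    · rw [sum_range_succ', sum_eq_zero, hx0]
      · simp
      · intro j hj
        rw [hxz (j + 1) (by omega) (by have := mem_range.1 hj; omega)]; simp
    · rw [hs, ← sum_norm_sq_reflect b]
      exact sum_congr rfl fun j _ ↦ by rw [hxt, RCLike.norm_conj]
  have hc := h.rotate he x (2 * n + 1 + 1)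
  rw [hnorm, sum_range_succ] at hc
  change _ + ‖∑ j ∈ range (2 * n + 1 + 1), x j * b (2 * n + 1 - j)‖ ^ 2 ≤ _ at hc
  rw [hlast, Complex.norm_real, Real.norm_eq_abs, sq_abs] at hc
  have hsub : s ≤ ∑ k ∈ range (2 * n + 1), ‖∑ j ∈ range (k + 1), x j * b (k - j)‖ ^ 2 := by
    rw [hs, sum_congr rfl fun k hk ↦ by rw [← hrow k hk]]
    exact sum_le_sum_of_subset_of_nonneg (range_mono (by omega)) fun _ _ _ ↦ by positivity
  have h1 : (‖b (2 * n + 1)‖ + s) ^ 2 ≤ 1 ^ 2 := by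
    linarith
  exact (sq_le_sq₀ (by positivity) zero_le_one).1 h1

open Finset in
/-- Carlson's inequality for even coefficients. The test vector is as in the odd case, with an extra
entry `t = conj (a (n+1)) / (1 + ‖a 0‖)` in the middle place `n+1`, so that the conjugates start in
place `n+2`. Row `n+1` then contributes at least `‖t‖²`, which cancels the contribution of `t` to the
norm of the test vector. -/
theorem Contractive.even_coeff {a : ℕ → ℂ} (h : Contractive a) (n : ℕ) :
    ‖a (2 * n + 2)‖ + ∑ k ∈ range (n + 1), ‖a k‖ ^ 2 + ‖a (n + 1)‖ ^ 2 / (1 + ‖a 0‖) ≤ 1 := by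
  obtain ⟨e, he, hea⟩ := exists_unit_mul (a (2 * n + 2))
  set b : ℕ → ℂ := fun k ↦ e * a k with hb
  have hnb : ∀ k, ‖b k‖ = ‖a k‖ := fun k ↦ by simp [hb, he]
  have hbN : b (2 * n + 2) = ‖b (2 * n + 2)‖ := by rw [hnb]; exact hea
  simp only [← hnb]
  have hA : 0 < 1 + ‖b 0‖ := by positivity
  set s := ∑ k ∈ range (n + 1), ‖b k‖ ^ 2 with hs
  have hs0 : 0 ≤ s := sum_nonneg fun _ _ ↦ by positivity
  set t : ℂ := (starRingEnd ℂ) (b (n + 1)) / ((1 + ‖b 0‖ : ℝ) : ℂ) with ht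
  have hnt : ‖t‖ = ‖b (n + 1)‖ / (1 + ‖b 0‖) := by
    rw [ht, norm_div, RCLike.norm_conj, Complex.norm_real, Real.norm_of_nonneg hA.le]
  have htb : t * b (n + 1) = ((‖b (n + 1)‖ ^ 2 / (1 + ‖b 0‖) : ℝ) : ℂ) := by
    rw [ht, div_mul_eq_mul_div, Complex.conj_mul']
    push_cast; rfl
  set x : ℕ → ℂ := fun j ↦ if j = 0 then 1 else if j = n + 1 then t else
    if n + 2 ≤ j then (starRingEnd ℂ) (b (2 * n + 2 - j)) else 0 with hx
  have hx0 : x 0 = 1 := rfl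
  have hxm : x (n + 1) = t := by simp [hx]
  have hxz : ∀ j, 1 ≤ j → j ≤ n → x j = 0 := fun j h1 h2 ↦ by
    simp only [hx]; rw [if_neg (by omega), if_neg (by omega), if_neg (by omega)]
  have hxt : ∀ j, x (n + 1 + 1 + j) = (starRingEnd ℂ) (b (n - j)) := fun j ↦ by
    simp only [hx]; rw [if_neg (by omega), if_neg (by omega), if_pos (by omega)]; congr 2; omega
  have hsum0 : ∀ (F : ℕ → ℂ), ∑ j ∈ range (n + 1), x j * F j = F 0 := fun F ↦ by
    rw [sum_range_succ', sum_eq_zero, hx0, one_mul, zero_add]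
    intro j hj
    rw [hxz (j + 1) (by omega) (by have := mem_range.1 hj; omega), zero_mul]
  have hrow : ∀ k ∈ range (n + 1), ∑ j ∈ range (k + 1), x j * b (k - j) = b k := by
    intro k hk
    have hk' := mem_range.1 hk
    rw [row_of_gap x b k fun j h1 h2 ↦ hxz j h1 (by omega), hx0, one_mul]
  have hmid : ∑ j ∈ range (n + 1 + 1), x j * b (n + 1 - j) = b (n + 1) + t * b 0 := by
    rw [sum_range_succ, hsum0, hxm, Nat.sub_zero, Nat.sub_self]
  have hlast : ∑ j ∈ range (2 * n + 2 + 1), x j * b (2 * n + 2 - j) =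
      ((‖b (2 * n + 2)‖ + s + ‖b (n + 1)‖ ^ 2 / (1 + ‖b 0‖) : ℝ) : ℂ) := by
    have e1 : ∑ j ∈ range (n + 1), x (n + 1 + 1 + j) * b (2 * n + 2 - (n + 1 + 1 + j)) = (s : ℂ) := by
      rw [hs, ← conj_mul_sum_reflect]
      refine sum_congr rfl fun j _ ↦ ?_
      rw [hxt]; congr 2; omega
    rw [show 2 * n + 2 + 1 = (n + 1 + 1) + (n + 1) by ring, sum_range_add, e1, sum_range_succ,
      hsum0, hxm, Nat.sub_zero, show 2 * n + 2 - (n + 1) = n + 1 by omega, htb, hbN]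
    rw [Complex.norm_real, norm_norm]
    push_cast
    ring
  have hnorm : ∑ j ∈ range (2 * n + 2 + 1), ‖x j‖ ^ 2 = 1 + ‖t‖ ^ 2 + s := by
    rw [show 2 * n + 2 + 1 = (n + 1 + 1) + (n + 1) by ring, sum_range_add, sum_range_succ, hxm]
    congr 1
    · rw [sum_range_succ', sum_eq_zero, hx0]
      · simp
      · intro j hj
        rw [hxz (j + 1) (by omega) (by have := mem_range.1 hj; omega)]; simp
    · rw [hs, ← sum_norm_sq_reflect b]
      exact sum_congr rfl fun j _ ↦ by rw [hxt, RCLike.norm_conj]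
  have hc := h.rotate he x (2 * n + 2 + 1)
  rw [hnorm, sum_range_succ] at hc
  change ∑ k ∈ range (2 * n + 2), ‖∑ j ∈ range (k + 1), x j * b (k - j)‖ ^ 2 +
    ‖∑ j ∈ range (2 * n + 2 + 1), x j * b (2 * n + 2 - j)‖ ^ 2 ≤ _ at hc
  rw [hlast, Complex.norm_real, Real.norm_eq_abs, sq_abs] at hc
  have hmid_ge : ‖t‖ ≤ ‖b (n + 1) + t * b 0‖ := by
    have e1 := norm_sub_le (b (n + 1) + t * b 0) (t * b 0)
    rw [add_sub_cancel_right, norm_mul t (b 0)] at e1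
    have e2 : ‖b (n + 1)‖ = ‖t‖ * (1 + ‖b 0‖) := by rw [hnt]; field_simp
    linarith
  have hsub : s + ‖t‖ ^ 2 ≤
      ∑ k ∈ range (2 * n + 2), ‖∑ j ∈ range (k + 1), x j * b (k - j)‖ ^ 2 := by
    have e1 : s + ‖b (n + 1) + t * b 0‖ ^ 2 =
        ∑ k ∈ range (n + 1 + 1), ‖∑ j ∈ range (k + 1), x j * b (k - j)‖ ^ 2 := by
      rw [sum_range_succ, hmid, hs, sum_congr rfl fun k hk ↦ by rw [← hrow k hk]]
    have e2 : ∑ k ∈ range (n + 1 + 1), ‖∑ j ∈ range (k + 1), x j * b (k - j)‖ ^ 2 ≤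
        ∑ k ∈ range (2 * n + 2), ‖∑ j ∈ range (k + 1), x j * b (k - j)‖ ^ 2 :=
      sum_le_sum_of_subset_of_nonneg (range_mono (by omega)) fun _ _ _ ↦ by positivity
    have e3 : ‖t‖ ^ 2 ≤ ‖b (n + 1) + t * b 0‖ ^ 2 := by gcongr
    linarith
  have h1 : (‖b (2 * n + 2)‖ + s + ‖b (n + 1)‖ ^ 2 / (1 + ‖b 0‖)) ^ 2 ≤ 1 ^ 2 := by
    linarith
  exact (sq_le_sq₀ (by positivity) zero_le_one).1 h1

open Finset in
/-- One step of Rogosinski's inequality, comparing `f` with the Möbius map having the same modulus at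
`0`. The test vector is supported on the places `0` and `n + 1`. -/
theorem Contractive.sum_sq_step {a : ℕ → ℂ} (h : Contractive a) (n : ℕ) :
    ∑ k ∈ range (n + 1), ‖a (k + 1)‖ ^ 2 ≤
      (1 - ‖a 0‖ ^ 2) ^ 2 + ‖a 0‖ ^ 2 * ∑ k ∈ range n, ‖a (k + 1)‖ ^ 2 := by
  have h1 := h.sum_sq_le_one (n + 1)
  rw [sum_range_succ', sum_range_succ] at h1
  rw [sum_range_succ]
  set q := ∑ k ∈ range n, ‖a (k + 1)‖ ^ 2 with hq
  have hq0 : 0 ≤ q := sum_nonneg fun _ _ ↦ by positivity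
  -- If `‖a 0‖ = 1` all other coefficients vanish, and `t` below would be a division by zero.
  rcases eq_or_lt_of_le (show 0 ≤ 1 - ‖a 0‖ ^ 2 by nlinarith [sq_nonneg ‖a (n + 1)‖]) with h0 | h0
  · rw [← h0]
    have : ‖a 0‖ ^ 2 = 1 := by linarith
    rw [this] at h1 ⊢
    nlinarith [sq_nonneg ‖a (n + 1)‖]
  set A := ‖a 0‖ with hA
  have hD : ((1 - A ^ 2 : ℝ) : ℂ) ≠ 0 := by exact_mod_cast ne_of_gt h0
  -- This value of `t` maximises `‖a (n + 1) + t * a 0‖² - ‖t‖²`.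
  set t : ℂ := (starRingEnd ℂ) (a 0) * a (n + 1) / ((1 - A ^ 2 : ℝ) : ℂ) with ht
  have hnt : ‖t‖ = A * ‖a (n + 1)‖ / (1 - A ^ 2) := by
    rw [ht, norm_div, norm_mul, RCLike.norm_conj, Complex.norm_real, Real.norm_of_nonneg h0.le]
  set x : ℕ → ℂ := fun j ↦ if j = 0 then 1 else if j = n + 1 then t else 0 with hx
  have hx0 : x 0 = 1 := rfl
  have hxm : x (n + 1) = t := by simp [hx]
  have hxz : ∀ j, 1 ≤ j → j ≤ n → x j = 0 := fun j h1 h2 ↦ by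
    simp only [hx]; rw [if_neg (by omega), if_neg (by omega)]
  have hrow : ∀ k ∈ range (n + 1), ∑ j ∈ range (k + 1), x j * a (k - j) = a k := by
    intro k hk
    have hk' := mem_range.1 hk
    rw [row_of_gap x a k fun j h1 h2 ↦ hxz j h1 (by omega), hx0, one_mul]
  have hlast : ∑ j ∈ range (n + 1 + 1), x j * a (n + 1 - j) =
      a (n + 1) / ((1 - A ^ 2 : ℝ) : ℂ) := by
    rw [sum_range_succ, sum_range_succ', sum_eq_zero, hx0, hxm, one_mul, zero_add, Nat.sub_zero,
      Nat.sub_self, eq_div_iff hD, ht, add_mul, mul_right_comm, div_mul_cancel₀ _ hD]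
    · have : (starRingEnd ℂ) (a 0) * a 0 = (A : ℂ) ^ 2 := Complex.conj_mul' _
      push_cast
      linear_combination a (n + 1) * this
    · intro j hj
      rw [hxz (j + 1) (by omega) (by have := mem_range.1 hj; omega), zero_mul]
  have hnorm : ∑ j ∈ range (n + 1 + 1), ‖x j‖ ^ 2 = 1 + ‖t‖ ^ 2 := by
    rw [sum_range_succ, hxm, sum_range_succ', sum_eq_zero, hx0]
    · simp
    · intro j hj
      rw [hxz (j + 1) (by omega) (by have := mem_range.1 hj; omega)]; simp
  have hc := h x (n + 1 + 1)
  rw [hnorm, sum_range_succ, hlast, sum_congr rfl fun k hk ↦ by rw [hrow k hk], sum_range_succ',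
    ← hq, norm_div, Complex.norm_real, Real.norm_of_nonneg h0.le, hnt] at hc
  have e : (‖a (n + 1)‖ / (1 - A ^ 2)) ^ 2 - (A * ‖a (n + 1)‖ / (1 - A ^ 2)) ^ 2 =
      ‖a (n + 1)‖ ^ 2 / (1 - A ^ 2) := by
    field_simp
  have h2 : ‖a (n + 1)‖ ^ 2 / (1 - A ^ 2) ≤ 1 - A ^ 2 - q := by linarith
  rw [div_le_iff₀ h0] at h2
  nlinarith

/-! ### The Bohr sum -/

open Finset in
/-- Finite form of the refined Bohr inequality without the area term: Carlson's inequalities,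
weighted by powers of `r` and added. -/
theorem Contractive.bohr_partial {a : ℕ → ℂ} (h : Contractive a) {r : ℝ} (hr0 : 0 ≤ r)
    (hr1 : r < 1) (N : ℕ) :
    ∑ k ∈ range (2 * N), ‖a (k + 1)‖ * r ^ (k + 1) +
      (1 / (1 + ‖a 0‖) + r / (1 - r)) * ∑ k ∈ range N, ‖a (k + 1)‖ ^ 2 * r ^ (2 * (k + 1)) ≤
      (1 - ‖a 0‖ ^ 2) * (r / (1 - r)) := by
  have h1r : 0 < 1 - r := by linarith
  set w := r / (1 - r) with hw
  have hw0 : 0 ≤ w := by positivity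
  have hwr : w * (1 - r) = r := by rw [hw]; field_simp
  set β := 1 / (1 + ‖a 0‖) with hβ
  -- The last term on the right is the amount by which the first `N` squares lower the bounds for
  -- the coefficients of index beyond `2 * N`, which have not been added yet.
  have key : ∑ k ∈ range (2 * N), ‖a (k + 1)‖ * r ^ (k + 1) +
      (β + w) * ∑ k ∈ range N, ‖a (k + 1)‖ ^ 2 * r ^ (2 * (k + 1)) ≤
      (1 - ‖a 0‖ ^ 2) * w * (1 - r ^ (2 * N)) +
        (∑ k ∈ range N, ‖a (k + 1)‖ ^ 2) * r ^ (2 * N) * w := by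
    induction N with
    | zero => simp
    | succ N ih =>
      have ho := h.odd_coeff N
      have he := h.even_coeff N
      rw [sum_range_succ'] at ho he
      rw [div_eq_mul_one_div, ← hβ] at he
      rw [show 2 * (N + 1) = 2 * N + 1 + 1 by ring, sum_range_succ _ (2 * N + 1),
        sum_range_succ _ (2 * N), sum_range_succ _ N, sum_range_succ _ N]
      set q := ∑ k ∈ range N, ‖a (k + 1)‖ ^ 2
      have ho' := mul_le_mul_of_nonneg_right ho (pow_nonneg hr0 (2 * N + 1))
      have he' := mul_le_mul_of_nonneg_right he (pow_nonneg hr0 (2 * N + 1 + 1))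
      rw [show 2 * (N + 1) = 2 * N + 1 + 1 by ring]
      have e : r ^ (2 * N + 1) + r ^ (2 * N + 1 + 1) = w * (r ^ (2 * N) - r ^ (2 * N + 1 + 1)) := by
        linear_combination -(r ^ (2 * N) * (1 + r)) * hwr
      have e2 : (1 - ‖a 0‖ ^ 2 - q) * (r ^ (2 * N + 1) + r ^ (2 * N + 1 + 1)) =
        (1 - ‖a 0‖ ^ 2 - q) * (w * (r ^ (2 * N) - r ^ (2 * N + 1 + 1))) := by rw [e]
      linarith
  have hq := h.sum_sq_le_one N
  rw [sum_range_succ'] at hq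
  have hp : 0 ≤ r ^ (2 * N) * w := by positivity
  nlinarith

/-! ### The area term -/

open Finset in
/-- Rogosinski's inequality: the partial square sums are bounded by those of the Möbius map
`(z + α) / (1 + α z)` with `α = ‖a 0‖`. -/
theorem Contractive.sum_sq_le_geom {a : ℕ → ℂ} (h : Contractive a) (n : ℕ) :
    ∑ k ∈ range n, ‖a (k + 1)‖ ^ 2 ≤
      ∑ k ∈ range n, (1 - ‖a 0‖ ^ 2) ^ 2 * (‖a 0‖ ^ 2) ^ k := by
  induction n with
  | zero => simp
  | succ n ih =>
    refine (h.sum_sq_step n).trans ?_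
    rw [sum_range_succ' _ n, pow_zero, mul_one, add_comm]
    refine add_le_add_left ?_ _
    refine (mul_le_mul_of_nonneg_left ih (by positivity)).trans (le_of_eq ?_)
    rw [mul_sum]
    exact sum_congr rfl fun k _ ↦ by ring

open Finset in
/-- Summation by parts: comparison of partial sums survives nonnegative decreasing weights. -/
theorem sum_mul_le_sum_mul_of_partial_le {w p b : ℕ → ℝ} (hw : Antitone w) (hw0 : ∀ n, 0 ≤ w n)
    (hpb : ∀ n, ∑ k ∈ range n, p k ≤ ∑ k ∈ range n, b k) (n : ℕ) :
    ∑ k ∈ range n, w k * p k ≤ ∑ k ∈ range n, w k * b k := by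
  -- Stronger statement for the induction: the difference dominates its last weight times the
  -- difference of the partial sums.
  have key : w n * (∑ k ∈ range n, b k - ∑ k ∈ range n, p k) ≤
      ∑ k ∈ range n, w k * b k - ∑ k ∈ range n, w k * p k := by
    induction n with
    | zero => simp
    | succ n ih =>
      have h1 := mul_le_mul_of_nonneg_right (hw (Nat.le_succ n)) (sub_nonneg.2 (hpb (n + 1)))
      simp only [sum_range_succ, Nat.succ_eq_add_one] at h1 ⊢
      nlinarith
  have := mul_nonneg (hw0 n) (sub_nonneg.2 (hpb n))
  linarith

open Finset in
/-- The area of the image of the disk of radius `r`, divided by `π` and counted with multiplicity,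
is largest for the Möbius map. The bound on `r` makes the weights `k * r ^ (2 * k)` decreasing. -/
theorem Contractive.area_le {a : ℕ → ℂ} (h : Contractive a) {r : ℝ} (hr0 : 0 ≤ r)
    (hr : r ≤ 1 / 2) :
    ∑' n : ℕ, (n : ℝ) * ‖a n‖ ^ 2 * r ^ (2 * n) ≤
      ((1 - ‖a 0‖ ^ 2) * r / (1 - ‖a 0‖ ^ 2 * r ^ 2)) ^ 2 := by
  have hA1 : ‖a 0‖ ^ 2 ≤ 1 := by simpa using h.sum_sq_le_one 0
  have hx1 : ‖‖a 0‖ ^ 2 * r ^ 2‖ < 1 := by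
    rw [Real.norm_of_nonneg (by positivity)]; nlinarith [sq_nonneg r, sq_nonneg ‖a 0‖]
  have hw : Antitone fun n : ℕ ↦ ((n : ℝ) + 1) * r ^ (2 * (n + 1)) := by
    refine antitone_nat_of_succ_le fun n ↦ ?_
    push_cast
    have e : r ^ (2 * (n + 1 + 1)) = r ^ 2 * r ^ (2 * (n + 1)) := by ring
    rw [e, ← mul_assoc]
    gcongr
    have hn : (0 : ℝ) ≤ n := Nat.cast_nonneg n
    have hr2 : r ^ 2 ≤ 1 / 2 := by nlinarith
    nlinarith [mul_le_mul_of_nonneg_left hr2 (show (0 : ℝ) ≤ n + 1 + 1 by positivity)]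
  have hgeo := hasSum_choose_mul_geometric_of_norm_lt_one 1 hx1
  simp only [Nat.choose_one_right, Nat.cast_add, Nat.cast_one] at hgeo
  refine Real.tsum_le_of_sum_range_le (fun n ↦ by positivity) fun n ↦ ?_
  refine (sum_le_sum_of_subset_of_nonneg (range_mono n.le_succ) fun _ _ _ ↦ by positivity).trans ?_
  rw [sum_range_succ']
  have h1 := sum_mul_le_sum_mul_of_partial_le hw (fun n ↦ by positivity) h.sum_sq_le_geom n
  have h2 := hgeo.summable.sum_le_tsum (range n) fun _ _ ↦ by positivity
  rw [hgeo.tsum_eq] at h2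
  have h3 := mul_le_mul_of_nonneg_left h2 (show 0 ≤ (1 - ‖a 0‖ ^ 2) ^ 2 * r ^ 2 by positivity)
  have e1 : ∑ k ∈ range n, ((k : ℝ) + 1) * r ^ (2 * (k + 1)) *
        ((1 - ‖a 0‖ ^ 2) ^ 2 * (‖a 0‖ ^ 2) ^ k) =
      (1 - ‖a 0‖ ^ 2) ^ 2 * r ^ 2 *
        ∑ k ∈ range n, ((k : ℝ) + 1) * (‖a 0‖ ^ 2 * r ^ 2) ^ k := by
    rw [mul_sum]
    exact sum_congr rfl fun k _ ↦ by ring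
  have e2 : ∑ k ∈ range n, ((k : ℝ) + 1) * r ^ (2 * (k + 1)) * ‖a (k + 1)‖ ^ 2 =
      ∑ k ∈ range n, ((k + 1 : ℕ) : ℝ) * ‖a (k + 1)‖ ^ 2 * r ^ (2 * (k + 1)) :=
    sum_congr rfl fun k _ ↦ by push_cast; ring
  rw [e1, e2] at h1
  have e3 : (1 - ‖a 0‖ ^ 2) ^ 2 * r ^ 2 * (1 / (1 - ‖a 0‖ ^ 2 * r ^ 2) ^ (1 + 1)) =
      ((1 - ‖a 0‖ ^ 2) * r / (1 - ‖a 0‖ ^ 2 * r ^ 2)) ^ 2 := by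
    rw [div_pow, mul_pow, mul_one_div]
  rw [e3] at h3
  simpa using h1.trans h3

/-! ### Combining the two bounds -/

/-- The constant `9 / 8` enters here; there is equality at `A = 1`. -/
theorem bohr_poly_bound {A : ℝ} (h0 : 0 ≤ A) (h1 : A ≤ 1) :
    9 * ((1 + A) * (3 - A) ^ 2) ≤ 8 * ((4 - A) * ((3 - A) ^ 2 - A ^ 4)) := by
  have e : 8 * ((4 - A) * ((3 - A) ^ 2 - A ^ 4)) - 9 * ((1 + A) * (3 - A) ^ 2) =
      (1 - A) * (207 - 84 * A + 41 * A ^ 2 + 24 * A ^ 3 - 8 * A ^ 4) := by ring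
  have h4 : A ^ 4 ≤ 1 := pow_le_one₀ h0 h1
  have : 0 ≤ (1 - A) * (207 - 84 * A + 41 * A ^ 2 + 24 * A ^ 3 - 8 * A ^ 4) := by
    refine mul_nonneg (by linarith) ?_
    have := pow_nonneg h0 2
    have := pow_nonneg h0 3
    linarith
  linarith

/-- The area term is at most what the Bohr sum leaves at the extreme radius `r = 1 / (3 - A)`. -/
theorem area_ratio_le {A r T : ℝ} (h0 : 0 ≤ A) (h1 : A ≤ 1) (hr0 : 0 ≤ r) (hr : r ≤ 1 / (3 - A))
    (hT : T ≤ ((1 - A ^ 2) * r / (1 - A ^ 2 * r ^ 2)) ^ 2) :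
    9 / 8 * (T / (1 - T)) ≤ (1 - A ^ 2) * ((1 - A) / (2 - A)) := by
  -- `u` is the bound for the square root of `T` evaluated at `r = 1 / (3 - A)`.
  set u := (1 - A ^ 2) * (3 - A) / ((3 - A) ^ 2 - A ^ 2) with hu
  have hden : 0 < (3 - A) ^ 2 - A ^ 2 := by nlinarith
  have h3 : 0 < 3 - A := by linarith
  have h2 : 0 < 2 - A := by linarith
  have h4 : 0 < 4 - A := by linarith
  have hA2 : 0 ≤ 1 - A ^ 2 := by nlinarith
  have hbase : (1 - A ^ 2) * r / (1 - A ^ 2 * r ^ 2) ≤ u := by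
    have e : u = (1 - A ^ 2) * (1 / (3 - A)) / (1 - A ^ 2 * (1 / (3 - A)) ^ 2) := by
      rw [hu]; field_simp
    have hd : 0 < 1 - A ^ 2 * (1 / (3 - A)) ^ 2 := by
      have : 1 - A ^ 2 * (1 / (3 - A)) ^ 2 = ((3 - A) ^ 2 - A ^ 2) / (3 - A) ^ 2 := by field_simp
      rw [this]; positivity
    rw [e]
    gcongr
  have hr12 : r ≤ 1 / 2 := hr.trans (by gcongr; linarith)
  have hb0 : 0 ≤ (1 - A ^ 2) * r / (1 - A ^ 2 * r ^ 2) :=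
    div_nonneg (by positivity) (by nlinarith [mul_nonneg hr0 hr0, mul_nonneg hr0 h0])
  have hTu : T ≤ u ^ 2 := hT.trans (by gcongr)
  have hpoly := bohr_poly_bound h0 h1
  set E := 8 / 9 * ((1 - A ^ 2) * ((1 - A) / (2 - A))) with hE
  have hE0 : 0 ≤ E := by
    have : 0 ≤ (1 - A) / (2 - A) := div_nonneg (by linarith) h2.le
    positivity
  have hP : 0 < (3 - A) ^ 2 - A ^ 4 := by nlinarith [pow_le_one₀ (n := 4) h0 h1]
  have hQ : ((3 - A) ^ 2 - A ^ 2) ^ 2 - (1 - A ^ 2) ^ 2 * (3 - A) ^ 2 =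
      (2 - A) * (4 - A) * ((3 - A) ^ 2 - A ^ 4) := by ring
  have hu1 : 1 - u ^ 2 = (2 - A) * (4 - A) * ((3 - A) ^ 2 - A ^ 4) / ((3 - A) ^ 2 - A ^ 2) ^ 2 := by
    rw [← hQ, hu]; field_simp
  have hu1' : 0 < 1 - u ^ 2 := by rw [hu1]; positivity
  have huE : u ^ 2 ≤ E * (1 - u ^ 2) := by
    have e1 : u ^ 2 = (1 - A ^ 2) * (1 - A) / ((3 - A) ^ 2 - A ^ 2) ^ 2 *
        ((1 + A) * (3 - A) ^ 2) := by
      rw [hu]; field_simp; ring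
    have e2 : E * (1 - u ^ 2) = (1 - A ^ 2) * (1 - A) / ((3 - A) ^ 2 - A ^ 2) ^ 2 *
        (8 / 9 * ((4 - A) * ((3 - A) ^ 2 - A ^ 4))) := by
      rw [hu1, hE]; field_simp
    rw [e2, e1]
    have : 0 ≤ 1 - A := by linarith
    exact mul_le_mul_of_nonneg_left (by linarith) (by positivity)
  have hTE : T / (1 - T) ≤ E := by
    rw [div_le_iff₀ (by linarith)]
    nlinarith
  linarith

/-- Refined Bohr inequality with |a₀|² and S_r/(π - S_r) term (λ = 0 case). -/
theorem refined_bohr_area_ratio_sq (f : ℂ → ℂ) (a : ℕ → ℂ)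
    (hf : ∀ z : ℂ, ‖z‖ < 1 → HasSum (fun n => a n * z ^ n) (f z))
    (hbd : ∀ z : ℂ, ‖z‖ < 1 → ‖f z‖ ≤ 1)
    (r : ℝ) (hr0 : 0 ≤ r) (hr : r ≤ 1 / (3 - ‖a 0‖))
    (S : ℝ) (hS : S = Real.pi * ∑' n : ℕ, (n : ℝ) * ‖a n‖ ^ 2 * r ^ (2 * n)) :
    ‖a 0‖ ^ 2 + ∑' n : ℕ, ‖a (n + 1)‖ * r ^ (n + 1) +
      (1 / (1 + ‖a 0‖) + r / (1 - r)) * ∑' n : ℕ, ‖a (n + 1)‖ ^ 2 * r ^ (2 * (n + 1)) +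
      (9 / 8) * (S / (Real.pi - S)) ≤ 1 := by
  have h : Contractive a := toeplitz_contraction f a hf hbd
  have hA1 : ‖a 0‖ ≤ 1 := by
    have : ‖a 0‖ ^ 2 ≤ 1 := by simpa using h.sum_sq_le_one 0
    nlinarith [norm_nonneg (a 0)]
  have hr12 : r ≤ 1 / 2 := hr.trans (by gcongr; linarith)
  have hr1 : r < 1 := by linarith
  have hs1 : Summable fun n : ℕ ↦ ‖a (n + 1)‖ * r ^ (n + 1) := by
    have h1 := (hf r (by simpa [abs_of_nonneg hr0] using hr1)).summable.norm
    have h2 : Summable fun n : ℕ ↦ ‖a n‖ * r ^ n := by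
      simpa [abs_of_nonneg hr0] using h1
    exact (summable_nat_add_iff (f := fun n : ℕ ↦ ‖a n‖ * r ^ n) 1).2 h2
  have hs2 : Summable fun n : ℕ ↦ ‖a (n + 1)‖ ^ 2 * r ^ (2 * (n + 1)) := by
    refine summable_of_sum_range_le (c := 1) (fun n ↦ by positivity) fun n ↦ ?_
    have h1 := h.sum_sq_le_one n
    rw [Finset.sum_range_succ'] at h1
    have h2 : ∑ k ∈ Finset.range n, ‖a (k + 1)‖ ^ 2 * r ^ (2 * (k + 1)) ≤
        ∑ k ∈ Finset.range n, ‖a (k + 1)‖ ^ 2 :=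
      Finset.sum_le_sum fun k _ ↦
        mul_le_of_le_one_right (by positivity) (pow_le_one₀ hr0 hr1.le)
    nlinarith [sq_nonneg ‖a 0‖]
  have hB : ∑' n : ℕ, ‖a (n + 1)‖ * r ^ (n + 1) +
      (1 / (1 + ‖a 0‖) + r / (1 - r)) * ∑' n : ℕ, ‖a (n + 1)‖ ^ 2 * r ^ (2 * (n + 1)) ≤
      (1 - ‖a 0‖ ^ 2) * (r / (1 - r)) :=
    le_of_tendsto' ((hs1.hasSum.tendsto_sum_nat.comp
        (Filter.tendsto_id.const_mul_atTop' (show 0 < 2 by norm_num))).add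
      (hs2.hasSum.tendsto_sum_nat.const_mul _)) fun N ↦ h.bohr_partial hr0 hr1 N
  set T := ∑' n : ℕ, (n : ℝ) * ‖a n‖ ^ 2 * r ^ (2 * n) with hT
  have hST : S / (Real.pi - S) = T / (1 - T) := by
    rw [hS, show Real.pi - Real.pi * T = Real.pi * (1 - T) by ring,
      mul_div_mul_left _ _ Real.pi_ne_zero]
  have hR := area_ratio_le (norm_nonneg _) hA1 hr0 hr (h.area_le hr0 hr12)
  rw [hST]
  have hA : ‖a 0‖ ^ 2 ≤ 1 := pow_le_one₀ (norm_nonneg _) hA1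
  have hrr : r / (1 - r) ≤ 1 / (2 - ‖a 0‖) := by
    rw [le_div_iff₀ (by linarith)] at hr
    rw [div_le_div_iff₀ (by linarith) (by linarith)]
    linarith
  have h5 := mul_le_mul_of_nonneg_left hrr (sub_nonneg.2 hA)
  have h6 : (1 - ‖a 0‖ ^ 2) * (1 / (2 - ‖a 0‖)) +
      (1 - ‖a 0‖ ^ 2) * ((1 - ‖a 0‖) / (2 - ‖a 0‖)) = 1 - ‖a 0‖ ^ 2 := by
    have : 2 - ‖a 0‖ ≠ 0 := by linarith
    field_simp
    ring
  linarith
end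

section
/- Let h(z) = Σ_{n≥0} a_n z^n and g(z) = Σ_{n≥0} b_n z^n be analytic on the unit disk with |g'(z)| ≤ k|h'(z)| for all z ∈ D, where 0 ≤ k ≤ 1. Then for all 0 ≤ r < 1: Σ_{n≥1} |b_n|^2 r^n ≤ k^2 Σ_{n≥1} |a_n|^2 r^n. -/
/-!
Writing `A n = (n + 1) * a (n + 1)` and `B n = (n + 1) * b (n + 1)` for the Taylor coefficients of
`h'` and `g'`, integrating `‖g'‖ ^ 2 ≤ k ^ 2 * ‖h'‖ ^ 2` over the circle of radius `√s` and
applying Parseval's identity gives, with `c n = k ^ 2 * ‖a (n + 1)‖ ^ 2 - ‖b (n + 1)‖ ^ 2`,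
`0 ≤ ∑ (n + 1) ^ 2 * c n * s ^ n` for every `0 ≤ s < 1` (`sq_sum_le_of_norm_le`).

The factor `(n + 1) ^ 2` is removed by averaging in `s` twice: because
`∫ t in 0..1, (n + 1) * t ^ n = 1`, nonnegativity of `∑ (n + 1) * d n * s ^ n` on `[0, 1)` implies
that of `∑ d n * s ^ n` (`tsum_nonneg_of_tsum_succ_mul`). This yields `0 ≤ ∑ c n * r ^ n`, and
multiplication by `r` gives the claim.
-/

open Filter Topology in
/-- Multiplying the coefficients of a power series by `n + 1` does not shrink its disk of
absolute convergence below the unit disk. -/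
lemma summable_succ_mul {u : ℕ → ℝ} (hu0 : ∀ n, 0 ≤ u n)
    (hu : ∀ s : ℝ, 0 ≤ s → s < 1 → Summable fun n => u n * s ^ n)
    {s : ℝ} (hs0 : 0 ≤ s) (hs1 : s < 1) :
    Summable fun n : ℕ => ((n : ℝ) + 1) * u n * s ^ n := by
  obtain ⟨t, hst, ht1⟩ := exists_between hs1
  have ht0 : 0 < t := hs0.trans_lt hst
  have hbd : ∀ n, u n * t ^ n ≤ ∑' m, u m * t ^ m := fun n =>
    (hu t ht0.le ht1).le_tsum n fun m _ => mul_nonneg (hu0 m) (pow_nonneg ht0.le m)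
  have hq : ‖s / t‖ < 1 := by
    rw [Real.norm_of_nonneg (by positivity)]
    exact (div_lt_one ht0).2 hst
  have hgeo : Summable fun n : ℕ => ((n : ℝ) + 1) * (s / t) ^ n := by
    have h1 := summable_pow_mul_geometric_of_norm_lt_one 1 hq
    have h0 := summable_geometric_of_norm_lt_one hq
    refine (h1.add h0).congr fun n => ?_
    ring
  refine Summable.of_nonneg_of_le (fun n => ?_) (fun n => ?_)
    (hgeo.mul_right (∑' m, u m * t ^ m))
  · have := hu0 n
    positivity
  · have : ((n : ℝ) + 1) * u n * s ^ n = ((n : ℝ) + 1) * (s / t) ^ n * (u n * t ^ n) := by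
      rw [div_pow]
      field_simp
    rw [this]
    exact mul_le_mul_of_nonneg_left (hbd n) (by positivity)

/-- The coefficients of a power series converging on the unit disk are absolutely summable
against `s ^ n` for `0 ≤ s < 1`. -/
lemma summable_norm_of_hasSum {f : ℂ → ℂ} {a : ℕ → ℂ}
    (hf : ∀ z : ℂ, ‖z‖ < 1 → HasSum (fun n => a n * z ^ n) (f z))
    (s : ℝ) (hs0 : 0 ≤ s) (hs1 : s < 1) : Summable fun n => ‖a n‖ * s ^ n := by
  have h := (hf (s : ℂ) (by simpa [abs_of_nonneg hs0] using hs1)).summable.norm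
  refine h.congr fun n => ?_
  simp [abs_of_nonneg hs0]

/-- The sum of a power series converging on the unit disk is differentiated termwise. -/
lemma hasSum_deriv_of_hasSum {f : ℂ → ℂ} {a : ℕ → ℂ}
    (hf : ∀ z : ℂ, ‖z‖ < 1 → HasSum (fun n => a n * z ^ n) (f z)) {z : ℂ} (hz : ‖z‖ < 1) :
    HasSum (fun n : ℕ => ((n : ℂ) + 1) * a (n + 1) * z ^ n) (deriv f z) := by
  obtain ⟨t, hzt, ht1⟩ := exists_between hz
  have ht0 : 0 < t := (norm_nonneg z).trans_lt hzt
  have hu : Summable fun n : ℕ => (n : ℝ) * ‖a n‖ * t ^ (n - 1) := by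
    refine Summable.of_nonneg_of_le (fun n => by positivity) (fun n => ?_)
      ((summable_succ_mul (fun n => norm_nonneg (a n)) (summable_norm_of_hasSum hf)
        ht0.le ht1).mul_left t⁻¹)
    cases n with
    | zero =>
      simp
      positivity
    | succ m =>
      rw [Nat.add_sub_cancel, pow_succ]
      have : t⁻¹ * (((m + 1 : ℕ) + 1 : ℝ) * ‖a (m + 1)‖ * (t ^ m * t)) =
          ((m + 1 : ℕ) + 1 : ℝ) * ‖a (m + 1)‖ * t ^ m := by
        field_simp
      rw [this]
      gcongr
      linarith
  have hbound : ∀ (n : ℕ) (y : ℂ), y ∈ Metric.ball (0 : ℂ) t →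
      ‖a n * ((n : ℂ) * y ^ (n - 1))‖ ≤ (n : ℝ) * ‖a n‖ * t ^ (n - 1) := by
    intro n y hy
    have hyt : ‖y‖ ≤ t := by simpa using (Metric.mem_ball.1 hy).le
    rw [norm_mul, norm_mul, norm_pow, Complex.norm_natCast, mul_left_comm, ← mul_assoc]
    gcongr
  have hzb : z ∈ Metric.ball (0 : ℂ) t := by simpa using hzt
  have hder := hasDerivAt_tsum_of_isPreconnected (g := fun n y => a n * y ^ n)
    (g' := fun n y => a n * ((n : ℂ) * y ^ (n - 1))) hu Metric.isOpen_ball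
    (convex_ball (0 : ℂ) t).isPreconnected
    (fun n y _ => (hasDerivAt_pow n y).const_mul (a n)) hbound hzb (hf z hz).summable hzb
  have heq : f =ᶠ[nhds z] fun y => ∑' n, a n * y ^ n := by
    filter_upwards [Metric.isOpen_ball.mem_nhds hzb] with y hy
    have hy1 : ‖y‖ < 1 := lt_trans (by simpa using hy) ht1
    exact (hf y hy1).tsum_eq.symm
  rw [heq.deriv_eq, hder.deriv]
  have hs := (Summable.of_norm_bounded hu fun n => hbound n z hzb).hasSum
  rw [← hasSum_nat_add_iff' 1] at hs
  simp only [Finset.range_one, Finset.sum_singleton, Nat.cast_zero, zero_mul, mul_zero,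
    sub_zero, Nat.add_sub_cancel] at hs
  refine hs.congr_fun fun n => ?_
  push_cast
  ring

open Filter Topology in
/-- Parseval's identity for an absolutely convergent power series on the unit circle, obtained
from the one for polynomials by dominated convergence. -/
lemma hasSum_sq_circleAverage {c : ℕ → ℂ} (hc : Summable fun n => ‖c n‖) :
    HasSum (fun n => ‖c n‖ ^ 2) (Real.circleAverage (fun z => ‖∑' n, c n * z ^ n‖ ^ 2) 0 1) := by
  have hP : ∀ N : ℕ, ∑ n ∈ Finset.range N, ‖c n‖ ^ 2 =
      Real.circleAverage (fun z => ‖∑ n ∈ Finset.range N, c n * z ^ n‖ ^ 2) 0 1 := by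
    intro N
    set p : Polynomial ℂ := ∑ n ∈ Finset.range N, Polynomial.C (c n) * Polynomial.X ^ n with hp
    have hcoeff : ∀ m, p.coeff m = if m < N then c m else 0 := by
      intro m
      simp [hp, Polynomial.finsetSum_coeff, Polynomial.coeff_X_pow]
    have heval : ∀ z, p.eval z = ∑ n ∈ Finset.range N, c n * z ^ n := by
      intro z
      simp [hp, Polynomial.eval_finsetSum]
    have := p.sum_sq_norm_coeff_eq_circleAverage
    simp_rw [heval] at this
    rw [← this]
    symm
    rw [Finset.sum_subset (s₂ := Finset.range N)]
    · refine Finset.sum_congr rfl fun m hm => ?_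
      simp [hcoeff, Finset.mem_range.1 hm]
    · intro m hm
      rw [Finset.mem_range]
      by_contra hlt
      simp [hcoeff, hlt] at hm
    · intro m _ hm
      simpa using hm
  rw [hasSum_iff_tendsto_nat_of_nonneg (fun n => by positivity)]
  simp_rw [hP, Real.circleAverage_def]
  refine Tendsto.const_smul ?_ _
  have hnorm : ∀ (θ : ℝ) (n : ℕ), ‖c n * circleMap 0 1 θ ^ n‖ = ‖c n‖ := by
    intro θ n
    simp
  refine intervalIntegral.tendsto_integral_filter_of_dominated_convergence
    (fun _ => (∑' n, ‖c n‖) ^ 2) ?_ ?_ intervalIntegrable_const ?_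
  · refine Eventually.of_forall fun N => Continuous.aestronglyMeasurable ?_
    have := continuous_circleMap 0 1
    fun_prop
  · refine Eventually.of_forall fun N => Eventually.of_forall fun θ _ => ?_
    rw [Real.norm_of_nonneg (by positivity)]
    gcongr
    calc ‖∑ n ∈ Finset.range N, c n * circleMap 0 1 θ ^ n‖
        ≤ ∑ n ∈ Finset.range N, ‖c n * circleMap 0 1 θ ^ n‖ := norm_sum_le _ _
      _ = ∑ n ∈ Finset.range N, ‖c n‖ := Finset.sum_congr rfl fun n _ => hnorm θ n
      _ ≤ ∑' n, ‖c n‖ := hc.sum_le_tsum _ fun n _ => norm_nonneg _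
  · refine Eventually.of_forall fun θ _ => ?_
    have hs : Summable fun n => c n * circleMap 0 1 θ ^ n :=
      Summable.of_norm (hc.congr fun n => (hnorm θ n).symm)
    exact (hs.hasSum.tendsto_sum_nat.norm).pow 2

lemma circleIntegrable_sq_norm_tsum {c : ℕ → ℂ} (hc : Summable fun n => ‖c n‖) :
    CircleIntegrable (fun z => ‖∑' n, c n * z ^ n‖ ^ 2) 0 1 := by
  refine ContinuousOn.circleIntegrable zero_le_one (ContinuousOn.pow (ContinuousOn.norm ?_) 2)
  refine continuousOn_tsum (u := fun n => ‖c n‖) (fun n => by fun_prop) hc fun n z hz => ?_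
  have : ‖z‖ = 1 := by simpa using hz
  simp [this]

/-- Parseval comparison on circles: a pointwise bound `‖G‖ ≤ k * ‖F‖` on the unit disk passes to
the weighted square sums of the Taylor coefficients. -/
lemma sq_sum_le_of_norm_le {F G : ℂ → ℂ} {A B : ℕ → ℂ} {k : ℝ}
    (hF : ∀ z : ℂ, ‖z‖ < 1 → HasSum (fun n => A n * z ^ n) (F z))
    (hG : ∀ z : ℂ, ‖z‖ < 1 → HasSum (fun n => B n * z ^ n) (G z))
    (hFG : ∀ z : ℂ, ‖z‖ < 1 → ‖G z‖ ≤ k * ‖F z‖) {s : ℝ} (hs0 : 0 ≤ s) (hs1 : s < 1) :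
    (Summable fun n => ‖A n‖ ^ 2 * s ^ n) ∧ (Summable fun n => ‖B n‖ ^ 2 * s ^ n) ∧
      0 ≤ ∑' n, (k ^ 2 * ‖A n‖ ^ 2 - ‖B n‖ ^ 2) * s ^ n := by
  -- The circle of radius `√s` produces the weights `s ^ n`.
  set t := Real.sqrt s with ht
  have ht0 : 0 ≤ t := Real.sqrt_nonneg s
  have ht1 : t < 1 := by
    rw [ht, Real.sqrt_lt' one_pos]
    simpa using hs1
  have htt : t ^ 2 = s := Real.sq_sqrt hs0
  have key : ∀ {f : ℂ → ℂ} {a : ℕ → ℂ},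
      (∀ z : ℂ, ‖z‖ < 1 → HasSum (fun n => a n * z ^ n) (f z)) →
      (Summable fun n => ‖a n * (t : ℂ) ^ n‖) ∧
      (∀ n, ‖a n * (t : ℂ) ^ n‖ ^ 2 = ‖a n‖ ^ 2 * s ^ n) ∧
      ∀ z : ℂ, ‖z‖ = 1 → ∑' n, a n * (t : ℂ) ^ n * z ^ n = f (t * z) := by
    intro f a hf
    refine ⟨?_, fun n => ?_, fun z hz => ?_⟩
    · exact (hf t (by simpa [abs_of_nonneg ht0] using ht1)).summable.norm
    · rw [norm_mul, norm_pow, Complex.norm_real, Real.norm_of_nonneg ht0, mul_pow, ← htt,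
        ← pow_mul, ← pow_mul, mul_comm n 2]
    · rw [← (hf (t * z) (by simpa [abs_of_nonneg ht0, hz] using ht1)).tsum_eq]
      simp_rw [mul_pow, mul_assoc]
  obtain ⟨hA, hA2, hAF⟩ := key hF
  obtain ⟨hB, hB2, hBG⟩ := key hG
  have pA := hasSum_sq_circleAverage hA
  have pB := hasSum_sq_circleAverage hB
  simp_rw [hA2] at pA
  simp_rw [hB2] at pB
  refine ⟨pA.summable, pB.summable, ?_⟩
  have hle : Real.circleAverage (fun z => ‖∑' n, B n * (t : ℂ) ^ n * z ^ n‖ ^ 2) 0 1 ≤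
      Real.circleAverage (fun z => k ^ 2 • ‖∑' n, A n * (t : ℂ) ^ n * z ^ n‖ ^ 2) 0 1 := by
    refine Real.circleAverage_mono (circleIntegrable_sq_norm_tsum hB)
      ((circleIntegrable_sq_norm_tsum hA).const_fun_smul) fun z hz => ?_
    have hz1 : ‖z‖ = 1 := by simpa using hz
    rw [hAF z hz1, hBG z hz1, smul_eq_mul, ← mul_pow]
    gcongr
    exact hFG _ (by simpa [abs_of_nonneg ht0, hz1] using ht1)
  rw [Real.circleAverage_fun_smul, smul_eq_mul] at hle
  have := (pA.mul_left (k ^ 2)).sub pB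
  have h2 : HasSum (fun n => (k ^ 2 * ‖A n‖ ^ 2 - ‖B n‖ ^ 2) * s ^ n) _ :=
    this.congr_fun fun n => by ring
  rw [h2.tsum_eq]
  linarith

open Filter Topology in
/-- Since `∫₀¹ (n + 1) tⁿ dt = 1`, the series `∑ d n * s ^ n` is the mean over `t ∈ [0, 1]` of
`∑ (n + 1) * d n * (s * t) ^ n`, so nonnegativity of the latter on `[0, 1)` is inherited. -/
lemma tsum_nonneg_of_tsum_succ_mul {d : ℕ → ℝ}
    (hd : ∀ s : ℝ, 0 ≤ s → s < 1 → Summable fun n => |d n| * s ^ n)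
    (hpos : ∀ s : ℝ, 0 ≤ s → s < 1 → 0 ≤ ∑' n : ℕ, ((n : ℝ) + 1) * d n * s ^ n)
    (s : ℝ) (hs0 : 0 ≤ s) (hs1 : s < 1) : 0 ≤ ∑' n, d n * s ^ n := by
  have hsum := summable_succ_mul (fun n => abs_nonneg (d n)) hd hs0 hs1
  have hb : ∀ (n : ℕ) (t : ℝ), t ∈ Set.uIoc (0 : ℝ) 1 →
      ‖((n : ℝ) + 1) * d n * (s * t) ^ n‖ ≤ ((n : ℝ) + 1) * |d n| * s ^ n := by
    intro n t ht
    rw [Set.uIoc_of_le zero_le_one] at ht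
    have h1 : (s * t) ^ n ≤ s ^ n :=
      pow_le_pow_left₀ (mul_nonneg hs0 ht.1.le) (mul_le_of_le_one_right hs0 ht.2) n
    have h2 : (0 : ℝ) ≤ (s * t) ^ n := pow_nonneg (mul_nonneg hs0 ht.1.le) n
    rw [norm_mul, norm_mul, Real.norm_eq_abs (d n), Real.norm_of_nonneg h2,
      Real.norm_of_nonneg (by positivity : (0 : ℝ) ≤ (n : ℝ) + 1)]
    gcongr
  have hI := intervalIntegral.hasSum_integral_of_dominated_convergence
    (μ := MeasureTheory.volume) (a := (0 : ℝ)) (b := 1)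
    (F := fun (n : ℕ) (t : ℝ) => ((n : ℝ) + 1) * d n * (s * t) ^ n)
    (f := fun t => ∑' n : ℕ, ((n : ℝ) + 1) * d n * (s * t) ^ n)
    (fun n _ => ((n : ℝ) + 1) * |d n| * s ^ n)
    (fun n => (by fun_prop : Continuous _).aestronglyMeasurable)
    (fun n => Eventually.of_forall (hb n))
    (Eventually.of_forall fun _ _ => hsum)
    intervalIntegrable_const
    (Eventually.of_forall fun t ht => (Summable.of_norm_bounded hsum fun n => hb n t ht).hasSum)
  have hterm : ∀ n : ℕ, ∫ t in (0 : ℝ)..1, ((n : ℝ) + 1) * d n * (s * t) ^ n = d n * s ^ n := by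
    intro n
    simp_rw [mul_pow, ← mul_assoc]
    rw [intervalIntegral.integral_const_mul, integral_pow]
    have : (n : ℝ) + 1 ≠ 0 := by positivity
    simp
    field_simp
  simp_rw [hterm] at hI
  rw [hI.tsum_eq]
  refine intervalIntegral.integral_nonneg zero_le_one fun t ht => hpos _ (mul_nonneg hs0 ht.1) ?_
  exact (mul_le_of_le_one_right hs0 ht.2).trans_lt hs1

/-- Coefficient quadratic mean comparison under the dilation bound. -/
theorem dilation_coefficient_bound (h g : ℂ → ℂ) (a b : ℕ → ℂ) (k : ℝ)
    (hk0 : 0 ≤ k) (hk1 : k ≤ 1)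
    (hh : ∀ z : ℂ, ‖z‖ < 1 → HasSum (fun n => a n * z ^ n) (h z))
    (hg : ∀ z : ℂ, ‖z‖ < 1 → HasSum (fun n => b n * z ^ n) (g z))
    (hdil : ∀ z : ℂ, ‖z‖ < 1 → ‖deriv g z‖ ≤ k * ‖deriv h z‖)
    (r : ℝ) (hr0 : 0 ≤ r) (hr : r < 1) :
    ∑' n : ℕ, ‖b (n + 1)‖ ^ 2 * r ^ (n + 1) ≤
      k ^ 2 * ∑' n : ℕ, ‖a (n + 1)‖ ^ 2 * r ^ (n + 1) := by
  have hpars := fun (s : ℝ) (hs0 : 0 ≤ s) (hs1 : s < 1) =>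
    sq_sum_le_of_norm_le (fun z hz => hasSum_deriv_of_hasSum hh hz)
      (fun z hz => hasSum_deriv_of_hasSum hg hz) hdil hs0 hs1
  have hsq : ∀ (w : ℂ) (n : ℕ), ‖((n : ℂ) + 1) * w‖ ^ 2 = ((n : ℝ) + 1) ^ 2 * ‖w‖ ^ 2 := by
    intro w n
    rw [norm_mul, mul_pow]
    congr 2
    exact_mod_cast Complex.norm_natCast (n + 1)
  simp_rw [hsq] at hpars
  have hone : ∀ n : ℕ, (1 : ℝ) ≤ (n : ℝ) + 1 := fun n => by
    have := n.cast_nonneg (α := ℝ)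
    linarith
  have hA : ∀ s : ℝ, 0 ≤ s → s < 1 → Summable fun n : ℕ => ‖a (n + 1)‖ ^ 2 * s ^ n :=
    fun s hs0 hs1 => Summable.of_nonneg_of_le (fun n => by positivity) (fun n =>
      mul_le_mul_of_nonneg_right (le_mul_of_one_le_left (by positivity)
        (one_le_pow₀ (hone n))) (by positivity)) (hpars s hs0 hs1).1
  have hB : ∀ s : ℝ, 0 ≤ s → s < 1 → Summable fun n : ℕ => ‖b (n + 1)‖ ^ 2 * s ^ n :=
    fun s hs0 hs1 => Summable.of_nonneg_of_le (fun n => by positivity) (fun n =>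
      mul_le_mul_of_nonneg_right (le_mul_of_one_le_left (by positivity)
        (one_le_pow₀ (hone n))) (by positivity)) (hpars s hs0 hs1).2.1
  set c : ℕ → ℝ := fun n => k ^ 2 * ‖a (n + 1)‖ ^ 2 - ‖b (n + 1)‖ ^ 2 with hc
  have hcs : ∀ s : ℝ, 0 ≤ s → s < 1 → Summable fun n => |c n| * s ^ n := by
    intro s hs0 hs1
    refine ((((hA s hs0 hs1).mul_left (k ^ 2)).sub (hB s hs0 hs1)).abs).congr fun n => ?_
    rw [← abs_of_nonneg (pow_nonneg hs0 n), ← abs_mul, abs_of_nonneg (pow_nonneg hs0 n), hc]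
    congr 1
    ring
  have hcs1 : ∀ s : ℝ, 0 ≤ s → s < 1 → Summable fun n : ℕ => |((n : ℝ) + 1) * c n| * s ^ n := by
    intro s hs0 hs1
    refine (summable_succ_mul (fun n => abs_nonneg (c n)) hcs hs0 hs1).congr fun n => ?_
    rw [abs_mul, abs_of_nonneg (zero_le_one.trans (hone n))]
  -- Parseval gives the weights `(n + 1) ^ 2`; each averaging removes one factor `n + 1`.
  have hmain : 0 ≤ ∑' n, c n * r ^ n := by
    refine tsum_nonneg_of_tsum_succ_mul hcs (tsum_nonneg_of_tsum_succ_mul hcs1 ?_) r hr0 hr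
    intro s hs0 hs1
    refine (hpars s hs0 hs1).2.2.trans_eq (tsum_congr fun n => ?_)
    rw [hc]
    ring
  have hsplit : ∑' n, c n * r ^ n =
      k ^ 2 * ∑' n, ‖a (n + 1)‖ ^ 2 * r ^ n - ∑' n, ‖b (n + 1)‖ ^ 2 * r ^ n := by
    rw [← tsum_mul_left, ← ((hA r hr0 hr).mul_left _).tsum_sub (hB r hr0 hr)]
    refine tsum_congr fun n => ?_
    rw [hc]
    ring
  rw [hsplit] at hmain
  simp_rw [pow_succ r, ← mul_assoc, tsum_mul_right]
  rw [← mul_assoc]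
  exact mul_le_mul_of_nonneg_right (by linarith) hr0
end

section
/- Let h(z) = Σ_{n≥0} a_n z^n and g(z) = Σ_{n≥1} b_n z^n be analytic on the unit disk with |h(z)| ≤ 1 on D and |g'(z)| ≤ k|h'(z)| on D for some 0 ≤ k < 1. Then for |z| = r ≤ r_1(k): |h(z)| + Σ_{n≥1}(|a_n| + |b_n|) r^n ≤ 1, where r_1(k) is the unique root in (0,1) of 2(k+1)r(1+r) − (1−r)^2 = 0. -/
/-!
Write `A = ‖h 0‖ = ‖a 0‖` and `S = ∑ ‖a (n+1)‖ r ^ (n+1)`. Three estimates are combined.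

* Harnack: `‖h z‖ ≤ 1 - (1 - r) / (1 + r) * (1 - A)` (`norm_le_of_bounded`).
* Coefficients: `‖a n‖ ≤ 2 (1 - A)` for `n ≥ 1` (`norm_taylorCoeff_le`), so
  `S ≤ 2 (1 - A) r / (1 - r)`. The factor `2` in place of the sharp `1 + A` of the Schwarz–Pick
  bound costs nothing here, since the extremal case is `A → 1`.
* Dilatation: `∑ ‖b (n+1)‖ r ^ (n+1) ≤ k S` for `r ≤ 1/3` (`tsum_coeff_le_of_deriv_bound`).
  By `exists_bounded_quotient`, `g' = ω h'` with `ω` holomorphic and `‖ω‖ ≤ k`. Comparing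
  coefficients gives `n b n = ∑ ω i * (n - i) * a (n - i)`; since `n - i ≤ n`, the sequence `‖b n‖`
  is dominated by the Cauchy product of `‖ω i‖` and `‖a j‖`, and `∑ ‖ω i‖ r ^ i ≤ k` is Bohr's
  inequality.

Adding up, the left side is at most
`1 - (1 - A) * ((1 - r) / (1 + r) - 2 (1 + k) r / (1 - r))`, and the bracket is nonnegative exactly
when `2 (k + 1) r (1 + r) ≤ (1 - r) ^ 2`, that is, when `r ≤ r1`. The same equation forces
`r1 ≤ 1/3`.

Both the Harnack and the coefficient bound come from averaging the function over a circle of radius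
`ρ < 1` against a nonnegative kernel (`norm_circleAverage_mul_le`) and letting `ρ → 1`.
-/

open Complex Metric Set Filter Topology

/-! ### Taylor coefficients -/

/-- The `n`-th Taylor coefficient of `f` at the origin. -/
noncomputable def taylorCoeff (f : ℂ → ℂ) (n : ℕ) : ℂ := iteratedDeriv n f 0 / n.factorial

lemma hasFPowerSeriesOnBall_of_hasSum {f : ℂ → ℂ} {a : ℕ → ℂ}
    (hf : ∀ z : ℂ, ‖z‖ < 1 → HasSum (fun n => a n * z ^ n) (f z)) :
    HasFPowerSeriesOnBall f (FormalMultilinearSeries.ofScalars ℂ a) 0 1 where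
  r_le := by
    refine ENNReal.le_of_forall_nnreal_lt fun ρ hρ => ?_
    have hρ1 : ((ρ : ℝ) : ℝ) < 1 := by exact_mod_cast hρ
    have h := (hf (ρ : ℝ) (by simpa using hρ1)).summable.norm
    apply FormalMultilinearSeries.le_radius_of_summable_norm
    simpa [norm_mul] using h
  r_pos := one_pos
  hasSum := by
    intro y hy
    have hy1 : ‖y‖ < 1 := by
      have := hy
      rw [← ENNReal.ofReal_one, Metric.eball_ofReal] at this
      simpa using this
    simpa [FormalMultilinearSeries.ofScalars_apply_eq, mul_comm] using hf y hy1

lemma differentiableOn_of_hasSum {f : ℂ → ℂ} {a : ℕ → ℂ}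
    (hf : ∀ z : ℂ, ‖z‖ < 1 → HasSum (fun n => a n * z ^ n) (f z)) :
    DifferentiableOn ℂ f (ball 0 1) := by
  have h := (hasFPowerSeriesOnBall_of_hasSum hf).differentiableOn
  rwa [← ENNReal.ofReal_one, Metric.eball_ofReal] at h

lemma taylorCoeff_of_hasSum {f : ℂ → ℂ} {a : ℕ → ℂ}
    (hf : ∀ z : ℂ, ‖z‖ < 1 → HasSum (fun n => a n * z ^ n) (f z)) (n : ℕ) :
    taylorCoeff f n = a n := by
  have h := (hasFPowerSeriesOnBall_of_hasSum hf).factorial_smul 1 n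
  rw [iteratedFDeriv_apply_eq_iteratedDeriv_mul_prod, Finset.prod_const_one, one_smul] at h
  simp at h
  have hn : (n.factorial : ℂ) ≠ 0 := by exact_mod_cast n.factorial_ne_zero
  rw [taylorCoeff, ← h, mul_div_cancel_left₀ _ hn]

/-! ### Functions bounded on the unit disk -/

/-- Averaging a function bounded by `M` against a nonnegative kernel. -/
lemma norm_circleAverage_mul_le {f : ℂ → ℂ} {K : ℂ → ℝ} {ρ M : ℝ} (hρ : 0 < ρ)
    (hKc : ContinuousOn K (sphere 0 ρ)) (hK : ∀ ζ ∈ sphere (0 : ℂ) ρ, 0 ≤ K ζ)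
    (hM : ∀ ζ ∈ sphere (0 : ℂ) ρ, ‖f ζ‖ ≤ M) :
    ‖Real.circleAverage (fun ζ => (K ζ : ℂ) * f ζ) 0 ρ‖ ≤ M * Real.circleAverage K 0 ρ := by
  have hmem : ∀ θ : ℝ, circleMap 0 ρ θ ∈ sphere (0 : ℂ) ρ := fun θ =>
    circleMap_mem_sphere 0 hρ.le θ
  have hKi : IntervalIntegrable (fun θ => K (circleMap 0 ρ θ)) MeasureTheory.volume 0
      (2 * Real.pi) := hKc.circleIntegrable hρ.le
  rw [Real.circleAverage_def, Real.circleAverage_def, norm_smul, smul_eq_mul, mul_left_comm,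
    Real.norm_of_nonneg (by positivity)]
  refine mul_le_mul_of_nonneg_left ?_ (by positivity)
  rw [← intervalIntegral.integral_const_mul]
  refine intervalIntegral.norm_integral_le_of_norm_le (by positivity) ?_ (hKi.const_mul M)
  refine Eventually.of_forall fun θ _ => ?_
  rw [norm_mul, norm_real, Real.norm_of_nonneg (hK _ (hmem θ)), mul_comm]
  exact mul_le_mul_of_nonneg_right (hM _ (hmem θ)) (hK _ (hmem θ))

/-- **Harnack's inequality** for the modulus of a function bounded by `1`. With `P` the Poisson kernel
on the circle of radius `ρ` and `m = (ρ - ‖z‖) / (ρ + ‖z‖)` its lower bound, the kernel `P - m` is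
nonnegative with mean `1 - m`, and averaging `f` against it gives `f z - m f(0)`. -/
lemma norm_le_of_bounded {f : ℂ → ℂ} (hf : DifferentiableOn ℂ f (ball 0 1))
    (hb : ∀ z : ℂ, ‖z‖ < 1 → ‖f z‖ ≤ 1) {z : ℂ} (hz : ‖z‖ < 1) :
    ‖f z‖ ≤ 1 - (1 - ‖z‖) / (1 + ‖z‖) * (1 - ‖f 0‖) := by
  have key : ∀ ρ ∈ Ioo ‖z‖ 1, ‖f z‖ ≤ 1 - (ρ - ‖z‖) / (ρ + ‖z‖) * (1 - ‖f 0‖) := by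
    rintro ρ ⟨hzρ, hρ1⟩
    have hρ : 0 < ρ := (norm_nonneg z).trans_lt hzρ
    have hzb : z ∈ ball (0 : ℂ) ρ := by simpa using hzρ
    have hsub : closedBall (0 : ℂ) ρ ⊆ ball 0 1 := closedBall_subset_ball hρ1
    have hd : DiffContOnCl ℂ f (ball 0 ρ) := by
      apply DifferentiableOn.diffContOnCl
      rw [closure_ball _ hρ.ne']
      exact hf.mono hsub
    have hfc : ContinuousOn f (sphere 0 ρ) :=
      hf.continuousOn.mono (sphere_subset_closedBall.trans hsub)
    set m := (ρ - ‖z‖) / (ρ + ‖z‖) with hm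
    have hPc : ContinuousOn (poissonKernel 0 z) (sphere 0 ρ) := by
      unfold poissonKernel
      refine ContinuousOn.div (by fun_prop) (by fun_prop) fun ζ hζ => ?_
      have : ζ - z ≠ 0 := by
        rintro h
        rw [sub_eq_zero] at h
        rw [← h] at hzρ
        simp at hζ
        linarith
      simpa using this
    have hP : ∀ ζ ∈ sphere (0 : ℂ) ρ, 0 ≤ poissonKernel 0 z ζ - m := by
      intro ζ hζ
      have := le_re_herglotzRieszKernel hζ hzb
      rw [poissonKernel_eq_re_herglotzRieszKernel]
      simp only [Function.comp_apply, herglotzRieszKernel, sub_nonneg]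
      simpa [hm] using this
    have avg : ∀ F : ℂ → ℂ, DiffContOnCl ℂ F (ball 0 ρ) → ContinuousOn F (sphere 0 ρ) →
        Real.circleAverage (fun ζ => ((poissonKernel 0 z ζ - m : ℝ) : ℂ) * F ζ) 0 ρ
          = F z - m * F 0 := by
      intro F hF hFc
      have h1 := hF.circleAverage_poissonKernel_smul hzb
      have h2 : Real.circleAverage F 0 ρ = F 0 :=
        DiffContOnCl.circleAverage (by rwa [abs_of_pos hρ])
      have : (fun ζ => ((poissonKernel 0 z ζ - m : ℝ) : ℂ) * F ζ) =
          (poissonKernel 0 z • F) - (m • F) := by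
        ext ζ; simp; ring
      rw [this, Real.circleAverage_sub, h1, Real.circleAverage_smul, h2]
      · simp
      · exact (hPc.smul hFc).circleIntegrable hρ.le
      · exact (hFc.const_smul m).circleIntegrable hρ.le
    have hKavg : Real.circleAverage (fun ζ => poissonKernel 0 z ζ - m) 0 ρ = 1 - m := by
      have h := avg (fun _ => 1) diffContOnCl_const continuousOn_const
      simp only [mul_one] at h
      have h2 := ofRealCLM.circleAverage_comp_comm (c := (0 : ℂ)) (R := ρ)
        ((hPc.sub (continuousOn_const (c := m))).circleIntegrable hρ.le)
      have h3 := h2.symm.trans h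
      simp only [ofRealCLM_apply] at h3
      exact_mod_cast h3
    have h := norm_circleAverage_mul_le (f := f) (M := 1)
      (K := fun ζ => poissonKernel 0 z ζ - m) hρ (hPc.sub (continuousOn_const (c := m)))
      hP (fun ζ hζ => hb ζ (by simp at hζ; linarith))
    rw [avg f hd hfc, hKavg] at h
    have hm0 : 0 ≤ m := div_nonneg (by linarith) (by positivity)
    have h4 : ‖f z‖ ≤ ‖f z - m * f 0‖ + ‖(m : ℂ) * f 0‖ := by
      simpa using norm_add_le (f z - m * f 0) (m * f 0)
    rw [norm_mul, norm_real, Real.norm_of_nonneg hm0] at h4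
    linarith
  have hlim : Tendsto (fun ρ : ℝ => 1 - (ρ - ‖z‖) / (ρ + ‖z‖) * (1 - ‖f 0‖)) (𝓝[<] 1)
      (𝓝 (1 - (1 - ‖z‖) / (1 + ‖z‖) * (1 - ‖f 0‖))) := by
    have h1 : (1 : ℝ) + ‖z‖ ≠ 0 := by positivity
    have : ContinuousAt (fun ρ : ℝ => 1 - (ρ - ‖z‖) / (ρ + ‖z‖) * (1 - ‖f 0‖)) 1 := by
      fun_prop (disch := exact h1)
    exact this.tendsto.mono_left nhdsWithin_le_nhds
  exact ge_of_tendsto hlim (Filter.mem_of_superset (Ioo_mem_nhdsLT hz) key)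

/-- **Carathéodory-type coefficient bound**. For a unimodular `u`, the kernel
`2 + 2 Re (u (ζ / ρ) ^ n)` is nonnegative with mean `2`, and averaging `f` against it gives
`2 f(0) + conj u * ρ ^ n * c n`, where `c n` is the `n`-th Taylor coefficient of `f`. -/
lemma norm_taylorCoeff_le {f : ℂ → ℂ} {M : ℝ} (hf : DifferentiableOn ℂ f (ball 0 1))
    (hb : ∀ z : ℂ, ‖z‖ < 1 → ‖f z‖ ≤ M) {n : ℕ} (hn : n ≠ 0) :
    ‖taylorCoeff f n‖ ≤ 2 * (M - ‖f 0‖) := by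
  have key : ∀ ρ ∈ Ioo (0 : ℝ) 1, ‖taylorCoeff f n‖ * ρ ^ n ≤ 2 * (M - ‖f 0‖) := by
    rintro ρ ⟨hρ, hρ1⟩
    have hsub : closedBall (0 : ℂ) ρ ⊆ ball 0 1 := closedBall_subset_ball hρ1
    have hρC : (ρ : ℂ) ≠ 0 := by exact_mod_cast hρ.ne'
    -- the phase `u` makes `2 f(0)` and `conj u * c n` point in the same direction
    obtain ⟨u, hu, hal⟩ : ∃ u : ℂ, ‖u‖ = 1 ∧
        ‖2 * f 0 + starRingEnd ℂ u * (ρ ^ n * taylorCoeff f n)‖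
          = 2 * ‖f 0‖ + ρ ^ n * ‖taylorCoeff f n‖ := by
      have hph : ∀ w : ℂ, ∃ v : ℂ, ‖v‖ = 1 ∧ w = ‖w‖ * v := fun w =>
        ⟨exp (w.arg * I), norm_exp_ofReal_mul_I _, (norm_mul_exp_arg_mul_I w).symm⟩
      obtain ⟨v, hv, hv'⟩ := hph (f 0)
      obtain ⟨w, hw, hw'⟩ := hph (taylorCoeff f n)
      refine ⟨starRingEnd ℂ v * w, by simp [hv, hw], ?_⟩
      have hww : starRingEnd ℂ w * w = 1 := by
        rw [mul_comm, mul_conj, normSq_eq_norm_sq, hw]; simp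
      have : 2 * f 0 + starRingEnd ℂ (starRingEnd ℂ v * w) * (ρ ^ n * taylorCoeff f n)
          = ((2 * ‖f 0‖ + ρ ^ n * ‖taylorCoeff f n‖ : ℝ) : ℂ) * v := by
        conv_lhs => rw [hv', hw']
        simp only [map_mul, conj_conj]
        push_cast
        linear_combination (v * ρ ^ n * ‖taylorCoeff f n‖) * hww
      rw [this, norm_mul, hv, norm_real, Real.norm_of_nonneg (by positivity), mul_one]
    set K : ℂ → ℝ := fun ζ => 2 + 2 * (u * (ζ / ρ) ^ n).re with hKdef
    have hKc : ContinuousOn K (sphere 0 ρ) := by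
      have : Continuous K := by fun_prop
      exact this.continuousOn
    have hK : ∀ ζ ∈ sphere (0 : ℂ) ρ, 0 ≤ K ζ := by
      intro ζ hζ
      have h1 : ‖u * (ζ / ρ) ^ n‖ = 1 := by
        simp only [mem_sphere, dist_zero_right] at hζ
        simp [hu, hζ, abs_of_pos hρ, hρ.ne']
      have := abs_le.1 (abs_re_le_norm (u * (ζ / ρ) ^ n))
      simp only [hKdef]
      linarith
    have avg : ∀ F : ℂ → ℂ, DifferentiableOn ℂ F (ball 0 1) →
        Real.circleAverage (fun ζ => (K ζ : ℂ) * F ζ) 0 ρ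
          = 2 * F 0 + starRingEnd ℂ u * (ρ ^ n * taylorCoeff F n) := by
      intro F hF
      have hFc : ContinuousOn F (sphere 0 ρ) :=
        hF.continuousOn.mono (sphere_subset_closedBall.trans hsub)
      have hF1 : DifferentiableOn ℂ F (closedBall 0 ρ) := hF.mono hsub
      have h1 : Real.circleAverage (fun ζ => (2 + u * (ζ / ρ) ^ n) * F ζ) 0 ρ = 2 * F 0 := by
        have : DiffContOnCl ℂ (fun ζ => (2 + u * (ζ / ρ) ^ n) * F ζ) (ball 0 |ρ|) := by
          rw [abs_of_pos hρ]
          apply DifferentiableOn.diffContOnCl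
          rw [closure_ball _ hρ.ne']
          fun_prop
        rw [this.circleAverage]
        simp [hn]
      have h2 : Real.circleAverage (fun ζ => (starRingEnd ℂ u * ρ ^ n) * (F ζ / ζ ^ n)) 0 ρ
          = starRingEnd ℂ u * (ρ ^ n * taylorCoeff F n) := by
        have h3 := hF1.circleIntegral_one_div_sub_center_pow_smul hρ n
        have h4 : Real.circleAverage (fun ζ => F ζ / ζ ^ n) 0 ρ = taylorCoeff F n := by
          rw [Real.circleAverage_eq_circleIntegral hρ.ne']
          have : ∀ ζ : ℂ, (ζ - 0)⁻¹ • (F ζ / ζ ^ n) = (1 / (ζ - 0) ^ (n + 1)) • F ζ := by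
            intro ζ
            simp only [sub_zero, smul_eq_mul, pow_succ, mul_inv, div_eq_mul_inv]
            ring
          simp_rw [this]
          rw [h3, taylorCoeff]
          have := two_pi_I_ne_zero
          simp only [smul_eq_mul]
          field_simp
        have h5 := Real.circleAverage_fun_smul (a := (starRingEnd ℂ u * (ρ : ℂ) ^ n))
          (f := fun ζ => F ζ / ζ ^ n) (c := 0) (R := ρ)
        simp only [smul_eq_mul] at h5
        rw [h5, h4, mul_assoc]
      rw [← h1, ← h2, ← Real.circleAverage_fun_add]
      · apply Real.circleAverage_congr_sphere
        intro ζ hζ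
        simp only [mem_sphere, dist_zero_right, abs_of_pos hρ] at hζ
        have hζ0 : ζ ≠ 0 := by rintro rfl; simp at hζ; exact hρ.ne hζ
        have hcon : starRingEnd ℂ ζ = ρ ^ 2 / ζ := by
          rw [eq_div_iff hζ0, mul_comm, mul_conj, normSq_eq_norm_sq, hζ]; simp
        have hre : (2 * (u * (ζ / ρ) ^ n).re : ℂ)
            = u * (ζ / ρ) ^ n + starRingEnd ℂ u * (ρ / ζ) ^ n := by
          have := add_conj (u * (ζ / ρ) ^ n)
          push_cast at this
          rw [← this]
          simp only [map_mul, map_pow, map_div₀, conj_ofReal, hcon]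
          congr 3
          field_simp
        simp only [hKdef]
        push_cast
        rw [hre]
        simp only [div_pow]
        ring
      · apply ContinuousOn.circleIntegrable hρ.le
        fun_prop
      · apply ContinuousOn.circleIntegrable hρ.le
        refine continuousOn_const.mul (hFc.div (by fun_prop) fun ζ hζ => pow_ne_zero _ ?_)
        rintro rfl
        simp at hζ
        exact hρ.ne hζ
    have hKavg : Real.circleAverage K 0 ρ = 2 := by
      have h := avg (fun _ => 1) (differentiableOn_const 1)
      have h0 : taylorCoeff (fun _ => 1) n = 0 := by
        simp [taylorCoeff, iteratedDeriv_const, hn]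
      simp only [mul_one, h0, mul_zero, add_zero] at h
      have h2 := ofRealCLM.circleAverage_comp_comm (c := (0 : ℂ)) (R := ρ)
        (hKc.circleIntegrable hρ.le)
      have h3 := h2.symm.trans h
      simp only [ofRealCLM_apply] at h3
      exact_mod_cast h3
    have h := norm_circleAverage_mul_le (f := f) (M := M) hρ hKc hK
      (fun ζ hζ => hb ζ (by simp at hζ; linarith))
    rw [avg f hf, hKavg, hal] at h
    linarith
  have hlim : Tendsto (fun ρ : ℝ => ‖taylorCoeff f n‖ * ρ ^ n) (𝓝[<] 1)
      (𝓝 ‖taylorCoeff f n‖) := by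
    have : Continuous (fun ρ : ℝ => ‖taylorCoeff f n‖ * ρ ^ n) := by fun_prop
    simpa using (this.tendsto 1).mono_left (nhdsWithin_le_nhds (s := Iio 1))
  exact le_of_tendsto hlim (Filter.mem_of_superset (Ioo_mem_nhdsLT one_pos) key)

/-! ### Comparison of `g` with `h` -/

/-- **Removable singularities for quotients**: if `‖G‖ ≤ k ‖H‖` on the unit disk, then `G = ω H`
with `ω` holomorphic and bounded by `k`, even where `H`
has zeros. If `H` is not identically zero, its zeros are isolated and `ω c` is the limit of `G / H`
at `c`. -/
lemma exists_bounded_quotient {G H : ℂ → ℂ} {k : ℝ} (hk : 0 ≤ k)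
    (hG : DifferentiableOn ℂ G (ball 0 1)) (hH : DifferentiableOn ℂ H (ball 0 1))
    (hGH : ∀ z : ℂ, ‖z‖ < 1 → ‖G z‖ ≤ k * ‖H z‖) :
    ∃ ω : ℂ → ℂ, DifferentiableOn ℂ ω (ball 0 1) ∧ (∀ z : ℂ, ‖z‖ < 1 → ‖ω z‖ ≤ k) ∧
      ∀ z : ℂ, ‖z‖ < 1 → G z = ω z * H z := by
  have hnhds : ∀ c : ℂ, ‖c‖ < 1 → ball (0 : ℂ) 1 ∈ 𝓝 c := fun c hc =>
    isOpen_ball.mem_nhds (by simpa using hc)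
  by_cases hz : EqOn H 0 (ball 0 1)
  · refine ⟨0, differentiableOn_const 0, fun z _ => by simpa using hk, fun z hz1 => ?_⟩
    have h1 := hGH z hz1
    rw [hz (by simpa using hz1 : z ∈ ball (0 : ℂ) 1)] at h1
    simpa using h1
  have hne : ∀ c : ℂ, ‖c‖ < 1 → ∀ᶠ z in 𝓝[≠] c, H z ≠ 0 := by
    intro c hc
    refine (hH.analyticAt (hnhds c hc)).eventually_eq_zero_or_eventually_ne_zero.resolve_left ?_
    intro h
    exact hz ((hH.analyticOnNhd isOpen_ball).eqOn_zero_of_preconnected_of_eventuallyEq_zero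
      (convex_ball 0 1).isPreconnected (by simpa using hc) h)
  set q : ℂ → ℂ := fun z => G z / H z with hq
  have hqd : ∀ z : ℂ, ‖z‖ < 1 → H z ≠ 0 → DifferentiableAt ℂ q z := fun z hz1 hz0 =>
    (hG.differentiableAt (hnhds z hz1)).div (hH.differentiableAt (hnhds z hz1)) hz0
  have hqb : ∀ z : ℂ, ‖z‖ < 1 → ‖q z‖ ≤ k := fun z hz1 => by
    simp only [hq, norm_div]
    exact div_le_of_le_mul₀ (norm_nonneg _) hk (hGH z hz1)
  set ω : ℂ → ℂ := fun c => limUnder (𝓝[≠] c) q with hω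
  have hωq : ∀ z : ℂ, ‖z‖ < 1 → H z ≠ 0 → ω z = q z := fun z hz1 hz0 =>
    ((hqd z hz1 hz0).continuousAt.tendsto.mono_left nhdsWithin_le_nhds).limUnder_eq
  have hωd : ∀ c : ℂ, ‖c‖ < 1 → DifferentiableAt ℂ ω c := by
    intro c hc
    set s : Set ℂ := {z | ‖z‖ < 1 ∧ (z ≠ c → H z ≠ 0)} with hs
    have hsc : s ∈ 𝓝 c := by
      have h1 := eventually_nhdsWithin_iff.1 (hne c hc)
      filter_upwards [h1, hnhds c hc] with z hz1 hz2
      exact ⟨by simpa using hz2, hz1⟩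
    have hU := differentiableOn_update_limUnder_of_bddAbove (f := q) hsc
      (fun z hz1 => (hqd z hz1.1.1 (hz1.1.2 hz1.2)).differentiableWithinAt)
      ⟨k, by rintro _ ⟨z, hz1, rfl⟩; exact hqb z hz1.1.1⟩
    refine (hU.differentiableAt hsc).congr_of_eventuallyEq ?_
    filter_upwards [hsc] with z hz1
    by_cases hzc : z = c
    · subst hzc; simp [hω]
    · rw [Function.update_of_ne hzc, hωq z hz1.1 (hz1.2 hzc)]
  refine ⟨ω, fun z hz1 => (hωd z (by simpa using hz1)).differentiableWithinAt, ?_, ?_⟩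
  · intro c hc
    have ht : Tendsto (fun z => ‖ω z‖) (𝓝[≠] c) (𝓝 ‖ω c‖) :=
      (hωd c hc).continuousAt.norm.tendsto.mono_left nhdsWithin_le_nhds
    refine le_of_tendsto ht ?_
    filter_upwards [hne c hc, nhdsWithin_le_nhds (hnhds c hc)] with z hz0 hz1
    have hz1' : ‖z‖ < 1 := by simpa using hz1
    rw [hωq z hz1' hz0]
    exact hqb z hz1'
  · intro z hz1
    by_cases hz0 : H z = 0
    · have h1 := hGH z hz1
      rw [hz0] at h1 ⊢
      simpa using h1
    · rw [hωq z hz1 hz0, hq, div_mul_cancel₀ _ hz0]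

/-- **Bohr's inequality** for functions bounded by `k`: the radius `1/3` is where
`2 r / (1 - r) = 1`. -/
lemma bohr_inequality {f : ℂ → ℂ} {k r : ℝ} (hf : DifferentiableOn ℂ f (ball 0 1))
    (hb : ∀ z : ℂ, ‖z‖ < 1 → ‖f z‖ ≤ k) (hr0 : 0 ≤ r) (hr : r ≤ 1 / 3) :
    Summable (fun n => ‖taylorCoeff f n‖ * r ^ n) ∧
      ∑' n, ‖taylorCoeff f n‖ * r ^ n ≤ k := by
  have hgeo : HasSum (fun n : ℕ => 2 * (k - ‖f 0‖) * r * r ^ n)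
      (2 * (k - ‖f 0‖) * r * (1 - r)⁻¹) :=
    (hasSum_geometric_of_lt_one hr0 (by linarith)).mul_left _
  have hle : ∀ n : ℕ, ‖taylorCoeff f (n + 1)‖ * r ^ (n + 1) ≤ 2 * (k - ‖f 0‖) * r * r ^ n := by
    intro n
    have := mul_le_mul_of_nonneg_right (norm_taylorCoeff_le hf hb n.succ_ne_zero)
      (pow_nonneg hr0 (n + 1))
    calc _ ≤ _ := this
      _ = _ := by ring
  have hs1 : Summable (fun n : ℕ => ‖taylorCoeff f (n + 1)‖ * r ^ (n + 1)) :=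
    Summable.of_nonneg_of_le (fun n => by positivity) hle hgeo.summable
  have hs : Summable (fun n => ‖taylorCoeff f n‖ * r ^ n) := (summable_nat_add_iff 1).1 hs1
  refine ⟨hs, ?_⟩
  have h1 := hs1.tsum_le_tsum hle hgeo.summable
  rw [hgeo.tsum_eq] at h1
  rw [hs.tsum_eq_zero_add]
  have h0 : taylorCoeff f 0 = f 0 := by simp [taylorCoeff]
  have hr3 : r * (1 - r)⁻¹ ≤ 1 / 2 := by
    rw [← div_eq_mul_inv, div_le_iff₀ (by linarith)]
    linarith
  have hk : 0 ≤ k - ‖f 0‖ := sub_nonneg.2 (hb 0 (by simp))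
  have := mul_le_mul_of_nonneg_left hr3 hk
  rw [h0, pow_zero, mul_one]
  linarith

/-- Coefficient form of `g' = ω h'`. The weights `n - i + 1` and `n + 1` produced by differentiation
satisfy `n - i + 1 ≤ n + 1`, so no integration of the series is needed. -/
lemma norm_coeff_le_of_deriv_eq_mul {g h ω : ℂ → ℂ}
    (hh : DifferentiableOn ℂ h (ball 0 1)) (hω : DifferentiableOn ℂ ω (ball 0 1))
    (heq : ∀ z : ℂ, ‖z‖ < 1 → deriv g z = ω z * deriv h z) (n : ℕ) :
    ‖taylorCoeff g (n + 1)‖ ≤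
      ∑ i ∈ Finset.range (n + 1), ‖taylorCoeff ω i‖ * ‖taylorCoeff h (n - i + 1)‖ := by
  have h0 : ball (0 : ℂ) 1 ∈ 𝓝 0 := ball_mem_nhds _ one_pos
  have hev : deriv g =ᶠ[𝓝 0] ω * deriv h := by
    filter_upwards [h0] with z hz
    exact heq z (by simpa using hz)
  have hL := hev.iteratedDeriv_eq n
  rw [iteratedDeriv_mul (hω.analyticAt h0).contDiffAt (hh.analyticAt h0).deriv.contDiffAt] at hL
  simp only [← iteratedDeriv_succ'] at hL
  have hit : ∀ (f : ℂ → ℂ) (m : ℕ), iteratedDeriv m f 0 = m.factorial * taylorCoeff f m := by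
    intro f m
    rw [taylorCoeff, mul_div_cancel₀]
    exact_mod_cast m.factorial_ne_zero
  simp only [hit] at hL
  have hfac : (0 : ℝ) < (n + 1).factorial := by exact_mod_cast (n + 1).factorial_pos
  refine le_of_mul_le_mul_left ?_ hfac
  have hn : ‖((n + 1).factorial : ℂ) * taylorCoeff g (n + 1)‖
      = (n + 1).factorial * ‖taylorCoeff g (n + 1)‖ := by simp
  rw [← hn, hL, Finset.mul_sum]
  refine (norm_sum_le _ _).trans (Finset.sum_le_sum fun i hi => ?_)
  have hin : i ≤ n := Nat.lt_succ_iff.1 (Finset.mem_range.1 hi)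
  simp only [norm_mul, norm_natCast]
  -- `C(n,i) i! (n-i+1)! = n! (n-i+1) ≤ (n+1)!`
  have hc : n.choose i * i.factorial * (n - i + 1).factorial ≤ (n + 1).factorial := by
    have h1 := Nat.choose_mul_factorial_mul_factorial hin
    rw [Nat.factorial_succ (n - i), Nat.factorial_succ n, ← h1]
    have : n - i + 1 ≤ n + 1 := by omega
    calc _ = (n - i + 1) * (n.choose i * i.factorial * (n - i).factorial) := by ring
      _ ≤ _ := Nat.mul_le_mul_right _ this
  have hc' : ((n.choose i : ℝ) * i.factorial * (n - i + 1).factorial) ≤ (n + 1).factorial := by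
    exact_mod_cast hc
  calc _ = ((n.choose i : ℝ) * i.factorial * (n - i + 1).factorial) *
        (‖taylorCoeff ω i‖ * ‖taylorCoeff h (n - i + 1)‖) := by ring
    _ ≤ _ := mul_le_mul_of_nonneg_right hc' (by positivity)

lemma tsum_coeff_le_of_deriv_bound {g h : ℂ → ℂ} {k r : ℝ} (hk : 0 ≤ k)
    (hg : DifferentiableOn ℂ g (ball 0 1)) (hh : DifferentiableOn ℂ h (ball 0 1))
    (hdil : ∀ z : ℂ, ‖z‖ < 1 → ‖deriv g z‖ ≤ k * ‖deriv h z‖)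
    (hr0 : 0 ≤ r) (hr : r ≤ 1 / 3)
    (hs : Summable (fun n => ‖taylorCoeff h (n + 1)‖ * r ^ (n + 1))) :
    Summable (fun n => ‖taylorCoeff g (n + 1)‖ * r ^ (n + 1)) ∧
      ∑' n, ‖taylorCoeff g (n + 1)‖ * r ^ (n + 1) ≤
        k * ∑' n, ‖taylorCoeff h (n + 1)‖ * r ^ (n + 1) := by
  obtain ⟨ω, hω, hωk, hωe⟩ := exists_bounded_quotient hk (hg.deriv isOpen_ball)
    (hh.deriv isOpen_ball) hdil
  obtain ⟨hωs, hωle⟩ := bohr_inequality hω hωk hr0 hr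
  have hle : ∀ n : ℕ, ‖taylorCoeff g (n + 1)‖ * r ^ (n + 1) ≤
      ∑ i ∈ Finset.range (n + 1), (‖taylorCoeff ω i‖ * r ^ i) *
        (‖taylorCoeff h (n - i + 1)‖ * r ^ (n - i + 1)) := by
    intro n
    refine (mul_le_mul_of_nonneg_right (norm_coeff_le_of_deriv_eq_mul hh hω hωe n)
      (pow_nonneg hr0 _)).trans_eq ?_
    rw [Finset.sum_mul]
    refine Finset.sum_congr rfl fun i hi => ?_
    have hin : i ≤ n := Nat.lt_succ_iff.1 (Finset.mem_range.1 hi)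
    rw [show n + 1 = i + (n - i + 1) by omega, pow_add]
    ring
  have hωn : Summable (fun n => ‖‖taylorCoeff ω n‖ * r ^ n‖) := hωs.norm
  have hsn : Summable (fun n => ‖‖taylorCoeff h (n + 1)‖ * r ^ (n + 1)‖) := hs.norm
  have hprod := tsum_mul_tsum_eq_tsum_sum_range_of_summable_norm hωn hsn
  have hcs := (summable_norm_sum_mul_range_of_summable_norm hωn hsn).of_norm
  have hgs := Summable.of_nonneg_of_le (fun n => by positivity) hle hcs
  refine ⟨hgs, (hgs.tsum_le_tsum hle hcs).trans ?_⟩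
  rw [← hprod]
  exact mul_le_mul_of_nonneg_right hωle (tsum_nonneg fun n => by positivity)

/-- Bohr-Rogosinski inequality for K-quasiconformal harmonic mappings. -/
theorem quasiconformal_bohr_rogosinski (h g : ℂ → ℂ) (a b : ℕ → ℂ) (k : ℝ)
    (hk0 : 0 ≤ k) (hk1 : k < 1)
    (hh : ∀ z : ℂ, ‖z‖ < 1 → HasSum (fun n => a n * z ^ n) (h z))
    (hg : ∀ z : ℂ, ‖z‖ < 1 → HasSum (fun n => b n * z ^ n) (g z))
    (hb0 : b 0 = 0)
    (hbd : ∀ z : ℂ, ‖z‖ < 1 → ‖h z‖ ≤ 1)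
    (hdil : ∀ z : ℂ, ‖z‖ < 1 → ‖deriv g z‖ ≤ k * ‖deriv h z‖)
    (r1 : ℝ) (hr1 : r1 ∈ Set.Ioo (0 : ℝ) 1)
    (hroot : 2 * (k + 1) * r1 * (1 + r1) - (1 - r1) ^ 2 = 0)
    (r : ℝ) (hr0 : 0 ≤ r) (hr : r ≤ r1) (z : ℂ) (hz : ‖z‖ = r) :
    ‖h z‖ + ∑' n : ℕ, (‖a (n + 1)‖ + ‖b (n + 1)‖) * r ^ (n + 1) ≤ 1 := by
  have hr1lt : r1 < 1 := hr1.2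
  have hr1pos : 0 < r1 := hr1.1
  -- for `k = 0` the defining equation reads `(3 r1 - 1) (r1 + 1) = 0`; larger `k` lower the root
  have hr3 : r1 ≤ 1 / 3 := by
    nlinarith [mul_nonneg (mul_nonneg hk0 hr1pos.le) (by linarith : 0 ≤ 1 + r1)]
  have hr1' : r < 1 := by linarith
  have hz1 : ‖z‖ < 1 := by rw [hz]; exact hr1'
  have hhd := differentiableOn_of_hasSum hh
  have hgd := differentiableOn_of_hasSum hg
  have hA : ‖h 0‖ ≤ 1 := hbd 0 (by simp)
  have hgeo : HasSum (fun n : ℕ => 2 * (1 - ‖h 0‖) * r * r ^ n)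
      (2 * (1 - ‖h 0‖) * r * (1 - r)⁻¹) :=
    (hasSum_geometric_of_lt_one hr0 hr1').mul_left _
  have hle : ∀ n : ℕ, ‖taylorCoeff h (n + 1)‖ * r ^ (n + 1) ≤ 2 * (1 - ‖h 0‖) * r * r ^ n := by
    intro n
    have := mul_le_mul_of_nonneg_right (norm_taylorCoeff_le hhd hbd n.succ_ne_zero)
      (pow_nonneg hr0 (n + 1))
    calc _ ≤ _ := this
      _ = _ := by ring
  have hs : Summable (fun n => ‖taylorCoeff h (n + 1)‖ * r ^ (n + 1)) :=
    Summable.of_nonneg_of_le (fun n => by positivity) hle hgeo.summable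
  obtain ⟨hgs, hgle⟩ := tsum_coeff_le_of_deriv_bound hk0 hgd hhd hdil hr0 (hr.trans hr3) hs
  have hS := hs.tsum_le_tsum hle hgeo.summable
  rw [hgeo.tsum_eq] at hS
  have hharn := norm_le_of_bounded hhd hbd hz1
  rw [hz] at hharn
  simp only [taylorCoeff_of_hasSum hh, taylorCoeff_of_hasSum hg] at hs hgs hgle hS
  simp only [add_mul]
  rw [hs.tsum_add hgs]
  -- the radius condition, rewritten as a comparison of the coefficient bound with Harnack's bound
  have hrad : (1 + k) * (2 * r * (1 - r)⁻¹) ≤ (1 - r) / (1 + r) := by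
    rw [← div_eq_mul_inv, mul_div_assoc', div_le_div_iff₀ (by linarith) (by linarith)]
    have h1 : r * (1 + r) ≤ r1 * (1 + r1) := by gcongr
    have h2 : (1 - r1) ^ 2 ≤ (1 - r) ^ 2 := by gcongr
    nlinarith [mul_le_mul_of_nonneg_left h1 (by linarith : 0 ≤ 2 * (k + 1))]
  have h3 := mul_le_mul_of_nonneg_right hrad (sub_nonneg.2 hA)
  have h4 := mul_le_mul_of_nonneg_left hS (by linarith : 0 ≤ 1 + k)
  linarith
end

section
/- Let h(z) = Σ_{n≥0} a_n z^n and g(z) = Σ_{n≥1} b_n z^n be analytic on the unit disk with |h(z)| ≤ 1 on D and |g'(z)| ≤ k|h'(z)| on D for some 0 ≤ k < 1. Then for |z| = r ≤ r_2(k): |h(z)|^2 + Σ_{n≥1}(|a_n| + |b_n|) r^n ≤ 1, where r_2(k) is the unique root in (0,1) of (k+1)r(1+r) − (1−r)^2 = 0. -/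
/-!
Write `x = ‖a 0‖` and `r = ‖z‖`. Three estimates carry the proof.

* `schwarz_pick_zero`: `‖h z‖ ≤ (x + r) / (1 + x r)`, by the Schwarz lemma applied to `h` followed
  by the disk automorphism that sends `h 0` to `0`.
* `norm_coeff_le`: `‖a n‖ ≤ 1 - x²` for `n ≥ 1`, so `∑ ‖a n‖ rⁿ ≤ (1 - x²) r / (1 - r)`.
* `tsum_sq_le`: `∑ ‖b (n + 1)‖² sⁿ ≤ k² ∑ ‖a (n + 1)‖² sⁿ` for `0 ≤ s < 1`. At `s = r`,
  Cauchy–Schwarz against `∑ rⁿ` gives `∑ ‖b n‖ rⁿ ≤ k (1 - x²) r / (1 - r)`.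

The last two rest on Parseval's identity: if `‖F‖ ≤ k ‖G‖` on the disk, the weighted sums of squared
coefficients satisfy the same inequality with `k²` (`sum_sq_le_of_norm_le`). For `tsum_sq_le` it is
applied to `F = g'`, `G = h'`, and the factors `n²` produced by the derivatives are removed by two
integrations (`tsum_nonpos_of_deriv_nonpos`); no division by `h'` is needed.

Since `1 - ((x + r) / (1 + x r))² = (1 - x²)(1 - r²) / (1 + x r)²` and `x ≤ 1`, the claim reduces to
`(1 + k) r (1 + r) ≤ (1 - r)²`, which holds for `r ≤ r2`.
-/

/-! ### Parseval's identity and domination of coefficients -/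

open MeasureTheory AddCircle in
/-- Parseval's identity for a power series on the circle of radius `ρ < 1`, parametrised by
`UnitAddCircle` with its Haar probability measure. -/
lemma parseval_circle {c : ℕ → ℂ} {F : ℂ → ℂ}
    (hF : ∀ z : ℂ, ‖z‖ < 1 → HasSum (fun n => c n * z ^ n) (F z)) {ρ : ℝ} (h0 : 0 ≤ ρ)
    (h1 : ρ < 1) :
    ∃ Φ : C(UnitAddCircle, ℂ), (∀ x, Φ x = F (ρ * fourier 1 x)) ∧
      HasSum (fun n => ‖c n‖ ^ 2 * (ρ ^ 2) ^ n)
        (‖ContinuousMap.toLp (E := ℂ) 2 (haarAddCircle (T := 1)) ℂ Φ‖ ^ 2) := by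
  have hfn : ∀ (n : ℕ) (x : UnitAddCircle), (fourier (n : ℤ) x : ℂ) = (fourier 1 x) ^ n := by
    intro n x
    induction n with
    | zero => simp
    | succ n ih => rw [Nat.cast_succ, fourier_add, ih, pow_succ]
  have hsum : Summable fun n : ℕ => (c n * (ρ : ℂ) ^ n) • (fourier (n : ℤ) : C(UnitAddCircle, ℂ)) := by
    have := (hF ρ (by simpa [abs_of_nonneg h0] using h1)).summable.norm
    refine Summable.of_norm ?_
    simpa only [norm_smul, fourier_norm, mul_one] using this
  refine ⟨∑' n : ℕ, (c n * (ρ : ℂ) ^ n) • fourier (n : ℤ), fun x => ?_, ?_⟩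
  · have hx : ‖(fourier 1 x : ℂ)‖ = 1 := Circle.norm_coe _
    have e1 := ContinuousMap.hasSum_apply hsum.hasSum x
    refine e1.unique ?_
    convert! hF (ρ * fourier 1 x) (by rwa [norm_mul, hx, mul_one, Complex.norm_real, Real.norm_of_nonneg h0])
      using 2 with n
    simp only [ContinuousMap.smul_apply, hfn, smul_eq_mul]
    ring
  · have e2 := hsum.hasSum.mapL (ContinuousMap.toLp (E := ℂ) 2 (haarAddCircle (T := 1)) ℂ)
    have e3 : Filter.Tendsto _ _ _ := (e2.norm.pow 2)
    refine e3.congr fun s => ?_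
    have horth : Orthonormal ℂ (fun n : ℕ => fourierLp (T := 1) 2 (n : ℤ)) :=
      orthonormal_fourier.comp _ Nat.cast_injective
    have := horth.inner_sum (fun n => c n * (ρ : ℂ) ^ n) (fun n => c n * (ρ : ℂ) ^ n) s
    rw [inner_self_eq_norm_sq_to_K] at this
    have h4 : ‖∑ n ∈ s, (c n * (ρ : ℂ) ^ n) • fourierLp (T := 1) 2 (n : ℤ)‖ ^ 2
        = ∑ n ∈ s, ‖c n‖ ^ 2 * (ρ ^ 2) ^ n := by
      have h5 : (((‖∑ n ∈ s, (c n * (ρ : ℂ) ^ n) • fourierLp (T := 1) 2 (n : ℤ)‖ ^ 2 : ℝ)) : ℂ)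
        = ((∑ n ∈ s, ‖c n‖ ^ 2 * (ρ ^ 2) ^ n : ℝ) : ℂ) := by
        push_cast
        refine Eq.trans this ?_
        refine Finset.sum_congr rfl fun n _ => ?_
        rw [RCLike.conj_mul]
        simp [abs_of_nonneg h0]
        ring
      exact_mod_cast h5
    rw [← h4]
    simp only [map_smul]

open MeasureTheory AddCircle in
/-- A pointwise bound `‖F‖ ≤ k ‖G‖` on the disk passes to the weighted `ℓ²` norms of the coefficients,
by comparing the `L²` norms on the circle of radius `√s`. -/
lemma sum_sq_le_of_norm_le_s13 {c d : ℕ → ℂ} {F G : ℂ → ℂ}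
    (hF : ∀ z : ℂ, ‖z‖ < 1 → HasSum (fun n => c n * z ^ n) (F z))
    (hG : ∀ z : ℂ, ‖z‖ < 1 → HasSum (fun n => d n * z ^ n) (G z))
    {k : ℝ} (hFG : ∀ z : ℂ, ‖z‖ < 1 → ‖F z‖ ≤ k * ‖G z‖)
    {s : ℝ} (h0 : 0 ≤ s) (h1 : s < 1) :
    Summable (fun n => ‖c n‖ ^ 2 * s ^ n) ∧ Summable (fun n => ‖d n‖ ^ 2 * s ^ n) ∧
      ∑' n, ‖c n‖ ^ 2 * s ^ n ≤ k ^ 2 * ∑' n, ‖d n‖ ^ 2 * s ^ n := by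
  have hs : √s ^ 2 = s := Real.sq_sqrt h0
  have hs1 : √s < 1 := by rw [Real.sqrt_lt' one_pos]; simpa
  obtain ⟨Φ, hΦ, hc⟩ := parseval_circle hF (Real.sqrt_nonneg s) hs1
  obtain ⟨Ψ, hΨ, hd⟩ := parseval_circle hG (Real.sqrt_nonneg s) hs1
  rw [hs] at hc hd
  refine ⟨hc.summable, hd.summable, ?_⟩
  rw [hc.tsum_eq, hd.tsum_eq, ← mul_pow]
  gcongr
  refine Lp.norm_le_mul_norm_of_ae_le_mul ?_
  filter_upwards [ContinuousMap.coeFn_toLp (p := 2) (𝕜 := ℂ) (haarAddCircle (T := 1)) Φ,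
    ContinuousMap.coeFn_toLp (p := 2) (𝕜 := ℂ) (haarAddCircle (T := 1)) Ψ] with x hx hy
  rw [hx, hy, hΦ, hΨ]
  have hx : ‖(fourier 1 x : ℂ)‖ = 1 := Circle.norm_coe _
  exact hFG _ (by
    rwa [norm_mul, hx, mul_one, Complex.norm_real, Real.norm_of_nonneg (Real.sqrt_nonneg s)])

/-! ### Differentiating and integrating power series -/

/-- Termwise differentiation of a power series converging on the unit disk of `ℝ` or `ℂ`. -/
lemma hasDerivAt_powerSeries {𝕜 : Type*} [RCLike 𝕜] {c : ℕ → 𝕜}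
    (hc : ∀ z : 𝕜, ‖z‖ < 1 → Summable fun n => c n * z ^ n) {z : 𝕜} (hz : ‖z‖ < 1) :
    Summable (fun n : ℕ => ((n + 1 : ℕ) : 𝕜) * c (n + 1) * z ^ n) ∧
    HasDerivAt (fun w => ∑' n, c n * w ^ n) (∑' n : ℕ, ((n + 1 : ℕ) : 𝕜) * c (n + 1) * z ^ n) z := by
  obtain ⟨ρ, hzρ, hρ1⟩ := exists_between hz
  obtain ⟨R, hρR, hR1⟩ := exists_between hρ1
  have hρ0 : 0 < ρ := (norm_nonneg z).trans_lt hzρ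
  have hR0 : 0 < R := hρ0.trans hρR
  have hRn : ‖(R : 𝕜)‖ = R := by simp [abs_of_pos hR0]
  -- Comparison with `n (ρ / R) ^ n`, the terms `c n * R ^ n` being bounded.
  obtain ⟨C, hC⟩ : ∃ C, ∀ n, ‖c n * (R : 𝕜) ^ n‖ ≤ C := by
    obtain ⟨C, hC⟩ := (hc R (by rwa [hRn])).tendsto_atTop_zero.norm.bddAbove_range
    exact ⟨C, fun n => hC ⟨n, rfl⟩⟩
  have hq : ‖ρ / R‖ < 1 := by
    rw [Real.norm_of_nonneg (by positivity), div_lt_one hR0]; exact hρR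
  have hu : Summable fun n : ℕ => C / ρ * ((n : ℝ) ^ 1 * (ρ / R) ^ n) :=
    (summable_pow_mul_geometric_of_norm_lt_one 1 hq).mul_left _
  have hbound : ∀ (n : ℕ) (y : 𝕜), y ∈ Metric.ball (0 : 𝕜) ρ →
      ‖c n * ((n : 𝕜) * y ^ (n - 1))‖ ≤ C / ρ * ((n : ℝ) ^ 1 * (ρ / R) ^ n) := by
    intro n y hy
    rcases n with _ | n
    · simp
    have hy' : ‖y‖ ≤ ρ := (mem_ball_zero_iff.1 hy).le
    have h1 := hC (n + 1)
    rw [norm_mul, norm_pow, hRn, ← le_div_iff₀ (by positivity)] at h1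
    have hn : ‖((n + 1 : ℕ) : 𝕜)‖ = (n + 1 : ℕ) := RCLike.norm_natCast _
    have hC0 : 0 ≤ C / R ^ (n + 1) := (norm_nonneg _).trans h1
    rw [norm_mul, norm_mul, norm_pow, hn, Nat.add_sub_cancel]
    calc ‖c (n + 1)‖ * (((n + 1 : ℕ) : ℝ) * ‖y‖ ^ n)
        ≤ C / R ^ (n + 1) * (((n + 1 : ℕ) : ℝ) * ρ ^ n) := by gcongr
      _ = _ := by rw [div_pow]; field_simp; ring
  have key := hasDerivAt_tsum_of_isPreconnected (y₀ := z) hu Metric.isOpen_ball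
    (convex_ball (0 : 𝕜) ρ).isPreconnected
    (fun n y _ => (hasDerivAt_pow n y).const_mul (c n)) hbound
    (mem_ball_zero_iff.2 hzρ) (hc z hz) (mem_ball_zero_iff.2 hzρ)
  have hs : Summable fun n : ℕ => c n * ((n : 𝕜) * z ^ (n - 1)) :=
    .of_norm_bounded hu fun n => hbound n z (mem_ball_zero_iff.2 hzρ)
  have e : ∀ n : ℕ, c (n + 1) * (((n + 1 : ℕ) : 𝕜) * z ^ (n + 1 - 1)) =
      ((n + 1 : ℕ) : 𝕜) * c (n + 1) * z ^ n := fun n => by rw [Nat.add_sub_cancel]; ring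
  have hs' := (summable_nat_add_iff 1).2 hs
  simp only [e] at hs'
  refine ⟨hs', ?_⟩
  have e' : ∑' n : ℕ, c n * ((n : 𝕜) * z ^ (n - 1)) =
      ∑' n : ℕ, ((n + 1 : ℕ) : 𝕜) * c (n + 1) * z ^ n := by
    rw [hs.tsum_eq_zero_add]
    simp only [e]
    simp
  rwa [e'] at key

/-- If `f s = ∑ c n sⁿ` vanishes at `0` and `f' ≤ 0` on `[0, 1)`, then `f s / s ≤ 0`, the quotient being
read as the shifted series. -/
lemma tsum_nonpos_of_deriv_nonpos {c : ℕ → ℝ} (hc0 : c 0 = 0)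
    (hc : ∀ s : ℝ, ‖s‖ < 1 → Summable fun n => c n * s ^ n)
    (hd : ∀ s : ℝ, 0 ≤ s → s < 1 → ∑' n : ℕ, ((n + 1 : ℕ) : ℝ) * c (n + 1) * s ^ n ≤ 0)
    {s : ℝ} (h0 : 0 ≤ s) (h1 : s < 1) : ∑' n, c (n + 1) * s ^ n ≤ 0 := by
  rcases h0.eq_or_lt with rfl | hs
  · have := hd 0 le_rfl one_pos
    rw [tsum_eq_single 0 (by intro n hn; simp [hn])] at this ⊢
    simpa using this
  have hnorm : ∀ x ∈ Set.Icc 0 s, ‖x‖ < 1 := fun x hx => by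
    rw [Real.norm_of_nonneg hx.1]; exact hx.2.trans_lt h1
  have hanti : AntitoneOn (fun w : ℝ => ∑' n, c n * w ^ n) (Set.Icc 0 s) := by
    refine antitoneOn_of_deriv_nonpos (convex_Icc 0 s)
      (fun x hx => (hasDerivAt_powerSeries hc (hnorm x hx)).2.continuousAt.continuousWithinAt)
      (fun x hx => (hasDerivAt_powerSeries hc
        (hnorm x (interior_subset hx))).2.differentiableAt.differentiableWithinAt) fun x hx => ?_
    have hx' := interior_subset hx
    rw [(hasDerivAt_powerSeries hc (hnorm x hx')).2.deriv]
    exact hd x hx'.1 (hx'.2.trans_lt h1)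
  have h := hanti ⟨le_rfl, h0⟩ ⟨h0, le_rfl⟩ h0
  simp only at h
  have hzero : ∑' n : ℕ, c n * (0 : ℝ) ^ n = 0 := by
    rw [tsum_eq_single 0 (by intro n hn; simp [hn]), hc0, zero_mul]
  rw [hzero, (hc s (hnorm s ⟨h0, le_rfl⟩)).tsum_eq_zero_add] at h
  simp only [hc0, pow_succ, zero_mul, zero_add, ← mul_assoc, tsum_mul_right] at h
  by_contra! hcon
  exact absurd h (not_le.2 (mul_pos hcon hs))

/-! ### Functions bounded by one on the disk -/

/-- Multiplication by `h` is a contraction of the Hardy space: apply it to `α + β zⁿ` and keep only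
the coefficients of order `0` and `n` of the product. -/
lemma coeff_bound_aux {h : ℂ → ℂ} {a : ℕ → ℂ}
    (hh : ∀ z : ℂ, ‖z‖ < 1 → HasSum (fun n => a n * z ^ n) (h z))
    (hbd : ∀ z : ℂ, ‖z‖ < 1 → ‖h z‖ ≤ 1) {n : ℕ} (hn : n ≠ 0) (α β : ℂ) :
    ‖α * a 0‖ ^ 2 + ‖α * a n + β * a 0‖ ^ 2 ≤ ‖α‖ ^ 2 + ‖β‖ ^ 2 := by
  set c : ℕ → ℂ := fun m => α * a m + if n ≤ m then β * a (m - n) else 0 with hc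
  set d : ℕ → ℂ := fun m => (if m = 0 then α else 0) + if m = n then β else 0 with hd
  have hF : ∀ z : ℂ, ‖z‖ < 1 → HasSum (fun m => c m * z ^ m) (h z * (α + β * z ^ n)) := by
    intro z hz
    have h1 := (hh z hz).mul_left α
    have h2 : HasSum (fun m => (if n ≤ m then β * a (m - n) else 0) * z ^ m)
        (β * z ^ n * h z) := by
      rw [← (add_left_injective n).hasSum_iff]
      · convert! (hh z hz).mul_left (β * z ^ n) using 2 with m
        simp [pow_add]
        ring
      · intro m hm
        have : ¬ n ≤ m := fun hle => hm ⟨m - n, by simp [hle]⟩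
        simp [this]
    convert! h1.add h2 using 1
    · ext m; simp only [hc]; ring
    · ring
  have hG : ∀ z : ℂ, ‖z‖ < 1 → HasSum (fun m => d m * z ^ m) (α + β * z ^ n) := by
    intro z _
    convert! (hasSum_ite_eq 0 α).add (hasSum_ite_eq n (β * z ^ n)) using 1
    ext m
    simp only [hd]
    split_ifs <;> simp_all
  have key : ∀ s : ℝ, s ∈ Set.Ioo (0 : ℝ) 1 →
      ‖α * a 0‖ ^ 2 + ‖α * a n + β * a 0‖ ^ 2 * s ^ n ≤ ‖α‖ ^ 2 + ‖β‖ ^ 2 * s ^ n := by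
    intro s hs
    obtain ⟨hs1, -, hle⟩ := sum_sq_le_of_norm_le_s13 hF hG (k := 1) (fun z hz => by
      rw [norm_mul]; gcongr; exact hbd z hz) hs.1.le hs.2
    have hl := hs1.sum_le_tsum {0, n} (fun m _ => by have := hs.1.le; positivity)
    have hr : ∑' m, ‖d m‖ ^ 2 * s ^ m = ∑ m ∈ {0, n}, ‖d m‖ ^ 2 * s ^ m := by
      refine tsum_eq_sum fun m hm => ?_
      simp only [Finset.mem_insert, Finset.mem_singleton, not_or] at hm
      simp [hd, hm.1, hm.2]
    rw [hr, Finset.sum_pair hn.symm] at hle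
    rw [Finset.sum_pair hn.symm] at hl
    simpa [hc, hd, hn, hn.symm] using hl.trans hle
  have t : ∀ A B : ℝ, Filter.Tendsto (fun s : ℝ => A + B * s ^ n) (nhdsWithin 1 (Set.Iio 1))
      (nhds (A + B)) := fun A B => by
    have : Continuous fun s : ℝ => A + B * s ^ n := by fun_prop
    simpa using (this.tendsto 1).mono_left nhdsWithin_le_nhds
  refine le_of_tendsto_of_tendsto (t _ _) (t _ _) ?_
  filter_upwards [Ioo_mem_nhdsLT (zero_lt_one (α := ℝ))] with s hs using key s hs

/-- The classical bound on the coefficients of a function bounded by `1`. It is the contraction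
property of the matrix `!![a 0, 0; a n, a 0]`, tested on the vector `(1 - ‖a 0‖², conj (a 0) * a n)`. -/
lemma norm_coeff_le {h : ℂ → ℂ} {a : ℕ → ℂ}
    (hh : ∀ z : ℂ, ‖z‖ < 1 → HasSum (fun n => a n * z ^ n) (h z))
    (hbd : ∀ z : ℂ, ‖z‖ < 1 → ‖h z‖ ≤ 1) {n : ℕ} (hn : n ≠ 0) :
    ‖a n‖ ≤ 1 - ‖a 0‖ ^ 2 := by
  have h1 := coeff_bound_aux hh hbd hn 1 0
  simp only [one_mul, zero_mul, add_zero, norm_one, norm_zero] at h1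
  have hx : 0 ≤ 1 - ‖a 0‖ ^ 2 := by nlinarith [sq_nonneg ‖a n‖]
  -- If `‖a 0‖ = 1`, the test vector `(1, 0)` already gives `a n = 0`.
  rcases hx.eq_or_lt with hx0 | hx0
  · rw [← hx0]
    nlinarith [norm_nonneg (a n)]
  have h2 := coeff_bound_aux hh hbd hn ((1 - ‖a 0‖ ^ 2 : ℝ) : ℂ) ((starRingEnd ℂ) (a 0) * a n)
  have e : ((1 - ‖a 0‖ ^ 2 : ℝ) : ℂ) * a n + (starRingEnd ℂ) (a 0) * a n * a 0 = a n := by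
    have := Complex.conj_mul' (a 0)
    push_cast
    linear_combination (a n) * this
  rw [e, norm_mul, norm_mul, RCLike.norm_conj, Complex.norm_real, Real.norm_of_nonneg hx] at h2
  refine le_of_sq_le_sq ?_ hx
  have : (1 - ‖a 0‖ ^ 2) * ‖a n‖ ^ 2 ≤ (1 - ‖a 0‖ ^ 2) * (1 - ‖a 0‖ ^ 2) ^ 2 := by linarith
  exact le_of_mul_le_mul_left this hx0

/-- The Schwarz–Pick growth estimate `‖h z‖ ≤ (‖h 0‖ + ‖z‖) / (1 + ‖h 0‖ ‖z‖)`, cleared of its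
denominator. -/
lemma schwarz_pick_zero {h : ℂ → ℂ} (hd : DifferentiableOn ℂ h (Metric.ball 0 1))
    (hbd : ∀ z : ℂ, ‖z‖ < 1 → ‖h z‖ ≤ 1) {z : ℂ} (hz : ‖z‖ < 1) :
    ‖h z‖ * (1 + ‖h 0‖ * ‖z‖) ≤ ‖h 0‖ + ‖z‖ := by
  have hx : ‖h 0‖ ≤ 1 := hbd 0 (by simp)
  have hu := hbd z hz
  -- If `‖h 0‖ = 1`, the denominator of `φ` below may vanish, but the bound reads `‖h z‖ ≤ 1`.
  rcases hx.eq_or_lt with hx1 | hx1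
  · rw [hx1]; nlinarith [norm_nonneg z]
  have hne : ∀ w : ℂ, ‖w‖ < 1 → 1 - (starRingEnd ℂ) (h 0) * h w ≠ 0 := by
    intro w hw h0
    have := congrArg norm (sub_eq_zero.1 h0)
    rw [norm_mul, norm_one, RCLike.norm_conj] at this
    nlinarith [hbd w hw, norm_nonneg (h w), norm_nonneg (h 0)]
  have hsq : ∀ w : ℂ, ‖1 - (starRingEnd ℂ) (h 0) * h w‖ ^ 2 - ‖h w - h 0‖ ^ 2 =
      (1 - ‖h 0‖ ^ 2) * (1 - ‖h w‖ ^ 2) := by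
    intro w
    simp only [Complex.sq_norm, Complex.normSq_apply, Complex.sub_re, Complex.sub_im,
      Complex.mul_re, Complex.mul_im, Complex.conj_re, Complex.conj_im, Complex.one_re,
      Complex.one_im]
    ring
  set φ : ℂ → ℂ := fun w => (h w - h 0) / (1 - (starRingEnd ℂ) (h 0) * h w) with hφ
  have hφd : DifferentiableOn ℂ φ (Metric.ball 0 1) :=
    (hd.sub_const _).div ((hd.const_mul _).const_sub 1) fun w hw =>
      hne w (mem_ball_zero_iff.1 hw)
  have hφm : Set.MapsTo φ (Metric.ball 0 1) (Metric.closedBall 0 1) := by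
    intro w hw
    have hw := mem_ball_zero_iff.1 hw
    rw [mem_closedBall_zero_iff, norm_div, div_le_one (norm_pos_iff.2 (hne w hw))]
    refine le_of_sq_le_sq ?_ (norm_nonneg _)
    have h1 : 0 ≤ 1 - ‖h 0‖ ^ 2 := by nlinarith [norm_nonneg (h 0)]
    have h2 : 0 ≤ 1 - ‖h w‖ ^ 2 := by nlinarith [norm_nonneg (h w), hbd w hw]
    nlinarith [hsq w, mul_nonneg h1 h2]
  have hS := Complex.norm_le_norm_of_mapsTo_ball hφd hφm (by simp [hφ]) hz
  rw [norm_div, div_le_iff₀ (norm_pos_iff.2 (hne z hz))] at hS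
  have hS2 : ‖h z - h 0‖ ^ 2 ≤ ‖z‖ ^ 2 * ‖1 - (starRingEnd ℂ) (h 0) * h z‖ ^ 2 := by
    rw [← mul_pow]; gcongr
  have htri : (‖h z‖ - ‖h 0‖) ^ 2 ≤ ‖h z - h 0‖ ^ 2 := by
    rw [← sq_abs]; gcongr; exact abs_norm_sub_norm_le _ _
  have h3 := hsq z
  have h4 : (‖h z‖ - ‖h 0‖) ^ 2 ≤ (‖z‖ * (1 - ‖h 0‖ * ‖h z‖)) ^ 2 := by
    have : 0 ≤ 1 - ‖z‖ ^ 2 := by nlinarith [norm_nonneg z]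
    nlinarith
  have h5 : 0 ≤ 1 - ‖h 0‖ * ‖h z‖ := by nlinarith [norm_nonneg (h z), norm_nonneg (h 0)]
  have := le_of_sq_le_sq h4 (mul_nonneg (norm_nonneg z) h5)
  linarith

/-! ### Coefficients of the co-analytic part -/

/-- The dilatation bound `‖g'‖ ≤ k ‖h'‖`, transferred from the derivatives to the coefficients of
`g` and `h` themselves. -/
lemma tsum_sq_le {h g : ℂ → ℂ} {a b : ℕ → ℂ} {k : ℝ}
    (hh : ∀ z : ℂ, ‖z‖ < 1 → HasSum (fun n => a n * z ^ n) (h z))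
    (hg : ∀ z : ℂ, ‖z‖ < 1 → HasSum (fun n => b n * z ^ n) (g z))
    (hdil : ∀ z : ℂ, ‖z‖ < 1 → ‖deriv g z‖ ≤ k * ‖deriv h z‖)
    {s : ℝ} (h0 : 0 ≤ s) (h1 : s < 1) :
    Summable (fun n => ‖a (n + 1)‖ ^ 2 * s ^ n) ∧ Summable (fun n => ‖b (n + 1)‖ ^ 2 * s ^ n) ∧
    ∑' n, ‖b (n + 1)‖ ^ 2 * s ^ n ≤ k ^ 2 * ∑' n, ‖a (n + 1)‖ ^ 2 * s ^ n := by
  have hder : ∀ {c : ℕ → ℂ} {f : ℂ → ℂ},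
      (∀ z : ℂ, ‖z‖ < 1 → HasSum (fun n => c n * z ^ n) (f z)) → ∀ z : ℂ, ‖z‖ < 1 →
      HasSum (fun n : ℕ => ((n + 1 : ℕ) : ℂ) * c (n + 1) * z ^ n) (deriv f z) := by
    intro c f hf z hz
    obtain ⟨hs, hd⟩ := hasDerivAt_powerSeries (fun z hz => (hf z hz).summable) hz
    have hd' : HasDerivAt f _ z := hd.congr_of_eventuallyEq <| by
      filter_upwards [Metric.isOpen_ball.mem_nhds (mem_ball_zero_iff.2 hz)] with w hw
      exact (hf w (mem_ball_zero_iff.1 hw)).tsum_eq.symm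
    rw [hd'.deriv]
    exact hs.hasSum
  have hsq : ∀ {c : ℕ → ℂ} {f : ℂ → ℂ},
      (∀ z : ℂ, ‖z‖ < 1 → HasSum (fun n => c n * z ^ n) (f z)) → ∀ t : ℝ, ‖t‖ < 1 →
      Summable (fun n => ‖c n‖ ^ 2 * t ^ n) := by
    intro c f hf t ht
    refine Summable.of_norm ?_
    simpa using (sum_sq_le_of_norm_le_s13 hf hf (k := 1) (fun z _ => by simp) (norm_nonneg t) ht).1
  -- The value at `0` is set to `0`, so that `∑ e n tⁿ` and `∑ n (e n) tⁿ` vanish at `t = 0`.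
  set e : ℕ → ℝ := fun n => if n = 0 then 0 else ‖b n‖ ^ 2 - k ^ 2 * ‖a n‖ ^ 2 with he
  have he1 : ∀ n, e (n + 1) = ‖b (n + 1)‖ ^ 2 - k ^ 2 * ‖a (n + 1)‖ ^ 2 := fun n => by simp [he]
  have hes : ∀ t : ℝ, ‖t‖ < 1 → Summable fun n => e n * t ^ n := by
    intro t ht
    refine (summable_nat_add_iff 1).1 ?_
    convert! ((summable_nat_add_iff 1).2 (hsq hg t ht)).sub
      (((summable_nat_add_iff 1).2 (hsq hh t ht)).mul_left (k ^ 2)) using 2 with n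
    rw [he1]; ring
  have hns : ∀ t : ℝ, ‖t‖ < 1 → Summable fun n : ℕ => ((n : ℝ) * e n) * t ^ n := by
    intro t ht
    refine (summable_nat_add_iff 1).1 ?_
    convert! (hasDerivAt_powerSeries hes ht).1.mul_left t using 2 with n
    ring
  have shift : ∀ c : ℕ → ℂ, ∀ m : ℕ, ‖((m + 1 : ℕ) : ℂ) * c (m + 1)‖ ^ 2 =
      ((m + 1 : ℕ) : ℝ) * (((m + 1 : ℕ) : ℝ) * ‖c (m + 1)‖ ^ 2) := by
    intro c m
    rw [norm_mul, Complex.norm_natCast]; ring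
  -- Parseval for `g'` and `h'`; each later step integrates once and removes a factor `n + 1`.
  have step1 : ∀ t : ℝ, 0 ≤ t → t < 1 →
      ∑' n : ℕ, ((n + 1 : ℕ) : ℝ) * (((n + 1 : ℕ) : ℝ) * e (n + 1)) * t ^ n ≤ 0 := by
    intro t ht0 ht1
    obtain ⟨s1, s2, hle⟩ := sum_sq_le_of_norm_le_s13 (hder hg) (hder hh) hdil ht0 ht1
    rw [← tsum_mul_left, ← sub_nonpos, ← s1.tsum_sub (s2.mul_left _)] at hle
    refine (tsum_congr fun n => ?_).trans_le hle
    rw [he1, shift, shift]; ring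
  have step2 : ∀ t : ℝ, 0 ≤ t → t < 1 → ∑' n : ℕ, ((n + 1 : ℕ) : ℝ) * e (n + 1) * t ^ n ≤ 0 :=
    fun t ht0 ht1 => tsum_nonpos_of_deriv_nonpos (c := fun n : ℕ => (n : ℝ) * e n) (by simp) hns
      step1 ht0 ht1
  have step3 := tsum_nonpos_of_deriv_nonpos (by simp [he]) hes step2 h0 h1
  have hs' : ∀ {c : ℕ → ℂ} {f : ℂ → ℂ},
      (∀ z : ℂ, ‖z‖ < 1 → HasSum (fun n => c n * z ^ n) (f z)) →
      Summable (fun n => ‖c (n + 1)‖ ^ 2 * s ^ n) := by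
    intro c f hf
    refine ((sum_sq_le_of_norm_le_s13 (hder hf) (hder hf) (k := 1) (fun z _ => by simp)
      h0 h1).1).of_nonneg_of_le (fun n => by positivity) fun n => ?_
    rw [shift, ← mul_assoc]
    have : (1 : ℝ) ≤ ((n + 1 : ℕ) : ℝ) * ((n + 1 : ℕ) : ℝ) := by
      push_cast; nlinarith [(Nat.cast_nonneg n : (0 : ℝ) ≤ n)]
    gcongr
    exact le_mul_of_one_le_left (by positivity) this
  refine ⟨hs' hh, hs' hg, ?_⟩
  rw [← tsum_mul_left, ← sub_nonpos, ← (hs' hg).tsum_sub ((hs' hh).mul_left _)]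
  refine (tsum_congr fun n => ?_).trans_le step3
  rw [he1]; ring

/-- Bohr-Rogosinski inequality with |h(z)|² for K-quasiconformal harmonic mappings. -/
theorem quasiconformal_bohr_rogosinski_sq (h g : ℂ → ℂ) (a b : ℕ → ℂ) (k : ℝ)
    (hk0 : 0 ≤ k) (hk1 : k < 1)
    (hh : ∀ z : ℂ, ‖z‖ < 1 → HasSum (fun n => a n * z ^ n) (h z))
    (hg : ∀ z : ℂ, ‖z‖ < 1 → HasSum (fun n => b n * z ^ n) (g z))
    (hb0 : b 0 = 0)
    (hbd : ∀ z : ℂ, ‖z‖ < 1 → ‖h z‖ ≤ 1)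
    (hdil : ∀ z : ℂ, ‖z‖ < 1 → ‖deriv g z‖ ≤ k * ‖deriv h z‖)
    (r2 : ℝ) (hr2 : r2 ∈ Set.Ioo (0 : ℝ) 1)
    (hroot : (k + 1) * r2 * (1 + r2) - (1 - r2) ^ 2 = 0)
    (r : ℝ) (hr0 : 0 ≤ r) (hr : r ≤ r2) (z : ℂ) (hz : ‖z‖ = r) :
    ‖h z‖ ^ 2 + ∑' n : ℕ, (‖a (n + 1)‖ + ‖b (n + 1)‖) * r ^ (n + 1) ≤ 1 := by
  have hr1 : r < 1 := hr.trans_lt hr2.2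
  have h1r : 0 < 1 - r := by linarith
  have hz1 : ‖z‖ < 1 := hz ▸ hr1
  have ha0 : h 0 = a 0 := by
    refine (hh 0 (by simp)).unique ?_
    convert! hasSum_ite_eq 0 (a 0) using 2 with n
    split_ifs with hn <;> simp [hn]
  have hdiff : DifferentiableOn ℂ h (Metric.ball 0 1) := by
    intro w hw
    have hd := (hasDerivAt_powerSeries (fun z hz => (hh z hz).summable)
      (mem_ball_zero_iff.1 hw)).2.differentiableAt.differentiableWithinAt (s := Metric.ball 0 1)
    exact hd.congr (fun v hv => (hh v (mem_ball_zero_iff.1 hv)).tsum_eq.symm)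
      (hh w (mem_ball_zero_iff.1 hw)).tsum_eq.symm
  have hSP := schwarz_pick_zero hdiff hbd hz1
  rw [ha0, hz] at hSP
  have hcoef : ∀ n, ‖a (n + 1)‖ ≤ 1 - ‖a 0‖ ^ 2 := fun n => norm_coeff_le hh hbd n.succ_ne_zero
  have hx1 : ‖a 0‖ ≤ 1 := ha0 ▸ hbd 0 (by simp)
  set x := ‖a 0‖
  have hx0 : 0 ≤ x := norm_nonneg _
  have hX : 0 ≤ 1 - x ^ 2 := (norm_nonneg _).trans (hcoef 0)
  have hgeo := hasSum_geometric_of_lt_one hr0 hr1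
  obtain ⟨sa2, sb2, hle⟩ := tsum_sq_le hh hg hdil hr0 hr1
  have sa : Summable fun n => ‖a (n + 1)‖ * r ^ n :=
    (hgeo.summable.mul_left (1 - x ^ 2)).of_nonneg_of_le (fun n => by positivity) fun n => by
      gcongr; exact hcoef n
  have hA : ∑' n, ‖a (n + 1)‖ * r ^ n ≤ (1 - x ^ 2) * (1 - r)⁻¹ := by
    refine hasSum_le (fun n => ?_) sa.hasSum (hgeo.mul_left (1 - x ^ 2))
    gcongr; exact hcoef n
  have hB2 : ∑' n, ‖b (n + 1)‖ ^ 2 * r ^ n ≤ (k * (1 - x ^ 2)) ^ 2 * (1 - r)⁻¹ := by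
    refine hle.trans ?_
    rw [mul_pow, mul_assoc]
    gcongr
    refine hasSum_le (fun n => ?_) sa2.hasSum (hgeo.mul_left ((1 - x ^ 2) ^ 2))
    gcongr; exact hcoef n
  have hM0 : 0 ≤ k * (1 - x ^ 2) := mul_nonneg hk0 hX
  -- AM-GM: `|b| ≤ (|b|² / M + M) / 2` for every `M > k (1 - |a₀|²)`.
  have amgm : ∀ M : ℝ, k * (1 - x ^ 2) < M → ∀ n : ℕ,
      ‖b (n + 1)‖ * r ^ n ≤ (2 * M)⁻¹ * (‖b (n + 1)‖ ^ 2 * r ^ n) + M / 2 * r ^ n := by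
    intro M hM n
    have hMpos : 0 < M := hM0.trans_lt hM
    have : ‖b (n + 1)‖ ≤ (2 * M)⁻¹ * ‖b (n + 1)‖ ^ 2 + M / 2 := by
      have e : (2 * M)⁻¹ * ‖b (n + 1)‖ ^ 2 + M / 2 - ‖b (n + 1)‖
          = (2 * M)⁻¹ * (‖b (n + 1)‖ - M) ^ 2 := by field_simp; ring
      have : 0 ≤ (2 * M)⁻¹ * (‖b (n + 1)‖ - M) ^ 2 := by positivity
      linarith
    calc _ ≤ ((2 * M)⁻¹ * ‖b (n + 1)‖ ^ 2 + M / 2) * r ^ n := by gcongr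
      _ = _ := by ring
  have amgm_sum : ∀ M : ℝ, Summable fun n : ℕ =>
      (2 * M)⁻¹ * (‖b (n + 1)‖ ^ 2 * r ^ n) + M / 2 * r ^ n := fun M =>
    (sb2.mul_left _).add (hgeo.summable.mul_left _)
  have sb : Summable fun n => ‖b (n + 1)‖ * r ^ n :=
    (amgm_sum (k * (1 - x ^ 2) + 1)).of_nonneg_of_le (fun n => by positivity)
      (amgm _ (by linarith))
  have hB : (∑' n, ‖b (n + 1)‖ * r ^ n) * (1 - r) ≤ k * (1 - x ^ 2) := by
    refine le_of_forall_gt_imp_ge_of_dense fun M hM => ?_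
    have hMpos : 0 < M := hM0.trans_lt hM
    have h1 := sb.tsum_le_tsum (amgm M hM) (amgm_sum M)
    rw [(sb2.mul_left _).tsum_add (hgeo.summable.mul_left _), tsum_mul_left, tsum_mul_left,
      hgeo.tsum_eq] at h1
    rw [← le_div_iff₀ h1r, div_eq_mul_inv]
    refine h1.trans ?_
    have h2 : ∑' n, ‖b (n + 1)‖ ^ 2 * r ^ n ≤ M ^ 2 * (1 - r)⁻¹ := by
      refine hB2.trans ?_
      gcongr
    calc _ ≤ (2 * M)⁻¹ * (M ^ 2 * (1 - r)⁻¹) + M / 2 * (1 - r)⁻¹ := by gcongr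
      _ = _ := by field_simp; ring
  rw [← div_eq_mul_inv, le_div_iff₀ h1r] at hA
  have hsplit : ∑' n : ℕ, (‖a (n + 1)‖ + ‖b (n + 1)‖) * r ^ (n + 1) =
      r * (∑' n, ‖a (n + 1)‖ * r ^ n + ∑' n, ‖b (n + 1)‖ * r ^ n) := by
    rw [← sa.tsum_add sb, ← tsum_mul_left]
    refine tsum_congr fun n => ?_
    ring
  rw [hsplit]
  set S := ∑' n, ‖a (n + 1)‖ * r ^ n + ∑' n, ‖b (n + 1)‖ * r ^ n
  have hS : S * (1 - r) ≤ (1 + k) * (1 - x ^ 2) := by simp only [S]; linarith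
  -- The defining polynomial of `r2` is increasing, hence nonpositive at `r ≤ r2`.
  have hpoly : (k + 1) * r * (1 + r) ≤ (1 - r) ^ 2 := by
    have h1 : (k + 1) * r * (1 + r) ≤ (k + 1) * r2 * (1 + r2) := by
      have := hr2.1; gcongr
    have h2 : (1 - r2) ^ 2 ≤ (1 - r) ^ 2 := by
      have := hr2.2; gcongr
    linarith
  have hrS : r * S * (1 + r) ≤ (1 - x ^ 2) * (1 - r) := by
    refine le_of_mul_le_mul_right ?_ h1r
    calc r * S * (1 + r) * (1 - r) = r * (1 + r) * (S * (1 - r)) := by ring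
      _ ≤ r * (1 + r) * ((1 + k) * (1 - x ^ 2)) := by gcongr
      _ = (1 - x ^ 2) * ((k + 1) * r * (1 + r)) := by ring
      _ ≤ (1 - x ^ 2) * (1 - r) ^ 2 := by gcongr
      _ = _ := by ring
  have hden : 0 < 1 + x * r := by positivity
  have hu2 : ‖h z‖ ^ 2 ≤ ((x + r) / (1 + x * r)) ^ 2 := by
    gcongr
    rwa [le_div_iff₀ hden]
  have hrS' : r * S ≤ (1 - x ^ 2) * (1 - r) / (1 + r) := by
    rwa [le_div_iff₀ (by linarith)]
  -- `1 - ((x + r) / (1 + x r))² = (1 - x²)(1 - r²) / (1 + x r)²`, and `1 + x r ≤ 1 + r`.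
  have hfin : (1 - x ^ 2) * (1 - r) / (1 + r) ≤ 1 - ((x + r) / (1 + x * r)) ^ 2 := by
    have e : 1 - ((x + r) / (1 + x * r)) ^ 2 =
        (1 - x ^ 2) * (1 - r) * (1 + r) / (1 + x * r) ^ 2 := by field_simp; ring
    rw [e, div_le_div_iff₀ (by linarith) (by positivity), mul_assoc _ (1 + r) (1 + r), ← sq]
    have : x * r ≤ r := mul_le_of_le_one_left hr0 hx1
    have : 0 ≤ (1 - x ^ 2) * (1 - r) := mul_nonneg hX h1r.le
    gcongr
  linarith
end
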